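/- arXiv:2208.14773 — 2 statements merged into one kernel-verified Lean document; each statement's English description precedes it below -/
import Mathlib

section
/- Let q be a prime power, k ≥ 1, and n = 2k+1. Let B = B_0 ∪ B_{n-1} be a blocking set with respect to k-spaces in PG(2k+1,q) consisting of points and hyperplanes with |B| = (q+1)·q^k. Then B_0 is contained in a (k+1)-space of PG(2k+1,q). -/
namespace BS
open Finset Module
open scoped Classical
set_option linter.unusedSectionVars false

section
variable {F : Type} [Field F] [Fintype F] {V : Type} [AddCommGroup V] [Module F V]
  [FiniteDimensional F V] {ι κ : Type}

lemma card_sub [Fintype V] (Y : Submodule F V) :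
    #(univ.filter (fun x : V => x ∈ Y)) = Fintype.card F ^ finrank F Y := by
  rw [← Module.card_eq_pow_finrank (K := F) (V := Y)]
  rw [Fintype.card_subtype]

lemma two_le_q : 2 ≤ Fintype.card F := Fintype.one_lt_card

lemma finrank_inf_ker (Y : Submodule F V) (f : Dual F V) (h : ∃ x ∈ Y, f x ≠ 0) :
    finrank F (Y ⊓ LinearMap.ker f : Submodule F V) + 1 = finrank F Y := by
  have h0 : f.domRestrict Y ≠ 0 := by
    obtain ⟨x, hx, hfx⟩ := h
    intro h
    apply hfx
    have := LinearMap.congr_fun h ⟨x, hx⟩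
    simpa using this
  have h1 := Module.Dual.finrank_ker_add_one_of_ne_zero (f := f.domRestrict Y) h0
  have : Y ⊓ LinearMap.ker f = Submodule.map Y.subtype (LinearMap.ker (f.domRestrict Y)) := by
    ext x
    simp only [Submodule.mem_inf, LinearMap.mem_ker, Submodule.mem_map, Submodule.subtype_apply,
      Subtype.exists, LinearMap.domRestrict_apply]
    constructor
    · rintro ⟨h1, h2⟩; exact ⟨x, h1, h2, rfl⟩
    · rintro ⟨a, h1, h2, rfl⟩; exact ⟨h1, h2⟩
  rw [this, ← h1, Submodule.finrank_map_subtype_eq]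

lemma cardK [Fintype V] (Y : Submodule F V) (f : Dual F V) (r : ℕ) (hr : finrank F Y = r + 1)
    (h : ∃ x ∈ Y, f x ≠ 0) :
    #(univ.filter (fun x : V => x ∈ Y ∧ f x = 0)) = Fintype.card F ^ r := by
  have h1 := finrank_inf_ker Y f h
  have h2 := card_sub (Y ⊓ LinearMap.ker f)
  have : finrank F (Y ⊓ LinearMap.ker f : Submodule F V) = r := by omega
  rw [this] at h2
  rw [← h2]; congr 1; ext x; simp

lemma cardN [Fintype V] (Y : Submodule F V) (f : Dual F V) (r : ℕ) (hr : finrank F Y = r + 1)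
    (h : ∃ x ∈ Y, f x ≠ 0) :
    #(univ.filter (fun x : V => x ∈ Y ∧ f x ≠ 0)) + Fintype.card F ^ r
      = Fintype.card F ^ (r + 1) := by
  rw [← cardK Y f r hr h, ← hr, ← card_sub Y, add_comm]
  have := card_filter_add_card_filter_not (s := univ.filter (fun x : V => x ∈ Y))
    (fun x => f x = 0)
  simp only [filter_filter] at this
  exact this

lemma card2 [Fintype V] (Y : Submodule F V) (f f0 : Dual F V) (r : ℕ) (hr : finrank F Y = r + 2)
    (h : ∃ x ∈ Y, f x ≠ 0) (h2 : ∃ x ∈ Y, f x = 0 ∧ f0 x ≠ 0) :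
    #(univ.filter (fun x : V => (x ∈ Y ∧ f0 x ≠ 0) ∧ f x = 0)) + Fintype.card F ^ r
      = Fintype.card F ^ (r + 1) := by
  have h1 := finrank_inf_ker Y f h
  have := cardN (Y ⊓ LinearMap.ker f) f0 r (by omega) (by
    obtain ⟨x, a, b, c⟩ := h2; exact ⟨x, ⟨a, b⟩, c⟩)
  rw [← this]
  congr 2
  ext x
  simp only [mem_filter, mem_univ, true_and, Submodule.mem_inf, LinearMap.mem_ker]
  tauto

lemma card2_le [Fintype V] (Y : Submodule F V) (f f0 : Dual F V) (r : ℕ)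
    (hr : finrank F Y = r + 2)
    (h : ∃ x ∈ Y, f x ≠ 0) :
    #(univ.filter (fun x : V => (x ∈ Y ∧ f0 x ≠ 0) ∧ f x = 0)) + Fintype.card F ^ r
      ≤ Fintype.card F ^ (r + 1) := by
  by_cases h2 : ∃ x ∈ Y, f x = 0 ∧ f0 x ≠ 0
  · exact (card2 Y f f0 r hr h h2).le
  · have : univ.filter (fun x : V => (x ∈ Y ∧ f0 x ≠ 0) ∧ f x = 0) = ∅ := by
      apply filter_false_of_mem
      rintro x - ⟨⟨a, b⟩, c⟩
      exact h2 ⟨x, a, c, b⟩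
    rw [this]
    simp only [card_empty, zero_add]
    exact Nat.pow_le_pow_right (by have := two_le_q (F := F); omega) (by omega)

/-- covering number of `x` -/
noncomputable def cov (s : Finset ι) (p : ι → V) (t : Finset κ) (f : κ → Dual F V) (x : V) : ℕ :=
  #(t.filter (fun j => f j x = 0)) + #(s.filter (fun i => ∃ c : F, x = c • p i))

lemma card_line [Fintype V] (Y : Submodule F V) (f0 : Dual F V) (v : V) :
    #(univ.filter (fun x : V => (x ∈ Y ∧ f0 x ≠ 0) ∧ ∃ c : F, x = c • v))
      = if (v ∈ Y ∧ f0 v ≠ 0) then Fintype.card F - 1 else 0 := by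
  split_ifs with h
  · have : univ.filter (fun x : V => (x ∈ Y ∧ f0 x ≠ 0) ∧ ∃ c : F, x = c • v)
        = (univ.erase (0 : F)).image (fun c => c • v) := by
      ext x
      simp only [mem_filter, mem_univ, true_and, mem_image, mem_erase, ne_eq, and_true]
      constructor
      · rintro ⟨⟨a, b⟩, c, rfl⟩
        refine ⟨c, ?_, rfl⟩
        rintro rfl; simp at b
      · rintro ⟨c, hc, rfl⟩
        refine ⟨⟨Y.smul_mem _ h.1, ?_⟩, c, rfl⟩
        simp [hc, h.2]
    rw [this, card_image_of_injective, card_erase_of_mem (mem_univ _), card_univ]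
    apply smul_left_injective
    rintro rfl; simp at h
  · rw [card_eq_zero]
    apply filter_false_of_mem
    rintro x - ⟨⟨a, b⟩, c, rfl⟩
    have hc : c ≠ 0 := by rintro rfl; simp at b
    apply h
    refine ⟨(Y.smul_mem_iff hc).1 a, ?_⟩
    intro h0; simp [h0] at b

lemma sumcov [Fintype V] (Y : Submodule F V) (s : Finset ι) (p : ι → V) (t : Finset κ)
    (f : κ → Dual F V) (f0 : Dual F V) :
    ∑ x ∈ univ.filter (fun x : V => x ∈ Y ∧ f0 x ≠ 0), cov s p t f x =
      ∑ j ∈ t, #(univ.filter (fun x : V => (x ∈ Y ∧ f0 x ≠ 0) ∧ f j x = 0)) +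
      (Fintype.card F - 1) * #(s.filter (fun i => p i ∈ Y ∧ f0 (p i) ≠ 0)) := by
  unfold cov
  rw [sum_add_distrib]
  congr 1
  · have := sum_card_bipartiteAbove_eq_sum_card_bipartiteBelow (fun (x : V) (j : κ) => f j x = 0)
      (s := univ.filter (fun x : V => x ∈ Y ∧ f0 x ≠ 0)) (t := t)
    simp only [bipartiteAbove, bipartiteBelow, filter_filter] at this
    exact this
  · have := sum_card_bipartiteAbove_eq_sum_card_bipartiteBelow
      (fun (x : V) (i : ι) => ∃ c : F, x = c • p i)
      (s := univ.filter (fun x : V => x ∈ Y ∧ f0 x ≠ 0)) (t := s)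
    simp only [bipartiteAbove, bipartiteBelow, filter_filter] at this
    rw [this]
    simp only [card_line]
    rw [← sum_filter, sum_const, smul_eq_mul, mul_comm]

/-- covering by hyperplanes and points -/
def Cover (s : Finset ι) (p : ι → V) (t : Finset κ) (f : κ → Dual F V) : Prop :=
  ∀ x : V, x ≠ 0 → (∃ j ∈ t, f j x = 0) ∨ (∃ i ∈ s, ∃ c : F, x = c • p i)

lemma cov_pos {s : Finset ι} {p : ι → V} {t : Finset κ} {f : κ → Dual F V}
    (h : Cover s p t f) (j0 : κ) (x : V) (hx : f j0 x ≠ 0) :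
    1 ≤ cov s p (t.erase j0) f x := by
  unfold cov
  rcases h x (by rintro rfl; simp at hx) with ⟨j, hj, h⟩ | ⟨i, hi, h⟩
  · have : 0 < #((t.erase j0).filter (fun j => f j x = 0)) :=
      card_pos.2 ⟨j, by simp only [mem_filter, mem_erase]; exact ⟨⟨by rintro rfl; exact hx h, hj⟩, h⟩⟩
    omega
  · have : 0 < #(s.filter (fun i => ∃ c : F, x = c • p i)) :=
      card_pos.2 ⟨i, by simp only [mem_filter]; exact ⟨hi, h⟩⟩
    omega

lemma exists_ne {f : Dual F V} (h : f ≠ 0) : ∃ x ∈ (⊤ : Submodule F V), f x ≠ 0 := by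
  by_contra hc
  push Not at hc
  exact h (LinearMap.ext fun x => by simpa using hc x trivial)

lemma ar1 {q Q m n D N : ℕ} (hq : 2 ≤ q) (h2 : N + Q * q = Q * q * q)
    (h3 : N ≤ D + (q - 1) * n) (h4 : D + m * Q ≤ m * (Q * q)) :
    (q + 1) * Q ≤ (m + 1) * Q + n := by
  obtain ⟨r, rfl⟩ : ∃ r, q = r + 2 := ⟨q - 2, by omega⟩
  have : r + 2 - 1 = r + 1 := by omega
  rw [this] at h3
  refine le_of_mul_le_mul_left (a := r + 1) ?_ (by omega)
  nlinarith

lemma ar2 {q Q m n D N S : ℕ} (hq : 2 ≤ q) (h2 : N + Q * q = Q * q * q)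
    (h3 : N ≤ D + (q - 1) * n) (h4 : D + m * Q ≤ m * (Q * q)) (hn : n ≤ S)
    (h5 : (m + 1) * Q + S ≤ (q + 1) * Q) :
    n = S ∧ D + m * Q = m * (Q * q) ∧ N = D + (q - 1) * n := by
  have h := ar1 hq h2 h3 h4
  have h6 : n = S := by omega
  subst h6
  obtain ⟨r, rfl⟩ : ∃ r, q = r + 2 := ⟨q - 2, by omega⟩
  have : r + 2 - 1 = r + 1 := by omega
  rw [this] at h3 ⊢
  refine ⟨rfl, ?_, ?_⟩
  · nlinarith
  · nlinarith

section cover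
variable {d : ℕ} (hd : finrank F V = d + 2) {s : Finset ι} {p : ι → V} {t : Finset κ}
    {f : κ → Dual F V} (hf : ∀ j ∈ t, f j ≠ 0)
    (h : Cover s p t f) (j0 : κ) (hj0 : j0 ∈ t)
include hd hf h hj0

lemma cover_core [Fintype V] :
  #(univ.filter (fun x : V => x ∈ (⊤ : Submodule F V) ∧ f j0 x ≠ 0)) +
     Fintype.card F ^ d * Fintype.card F = Fintype.card F ^ d * Fintype.card F * Fintype.card F ∧
  #(univ.filter (fun x : V => x ∈ (⊤ : Submodule F V) ∧ f j0 x ≠ 0)) ≤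
  ∑ j ∈ t.erase j0, #(univ.filter (fun x : V => (x ∈ (⊤ : Submodule F V) ∧ f j0 x ≠ 0)
      ∧ f j x = 0)) + (Fintype.card F - 1) * #(s.filter (fun i => f j0 (p i) ≠ 0)) ∧
  ∑ j ∈ t.erase j0, #(univ.filter (fun x : V => (x ∈ (⊤ : Submodule F V) ∧ f j0 x ≠ 0)
      ∧ f j x = 0)) + #(t.erase j0) * Fintype.card F ^ d ≤
        #(t.erase j0) * (Fintype.card F ^ d * Fintype.card F) := by
  have hT : finrank F (⊤ : Submodule F V) = d + 2 := by simpa using hd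
  have h1 := sumcov ⊤ s p (t.erase j0) f (f j0)
  have h2 := cardN ⊤ (f j0) (d + 1) hT (exists_ne (hf j0 hj0))
  have h3 : ∑ x ∈ univ.filter (fun x : V => x ∈ (⊤ : Submodule F V) ∧ f j0 x ≠ 0), 1 ≤
     ∑ x ∈ univ.filter (fun x : V => x ∈ (⊤ : Submodule F V) ∧ f j0 x ≠ 0),
      cov s p (t.erase j0) f x := by
    apply sum_le_sum
    intro x hx
    exact cov_pos h j0 x (mem_filter.1 hx).2.2
  have h4 : ∑ j ∈ t.erase j0, (#(univ.filter (fun x : V => (x ∈ (⊤ : Submodule F V) ∧ f j0 x ≠ 0)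
      ∧ f j x = 0)) + Fintype.card F ^ d) ≤ ∑ j ∈ t.erase j0, Fintype.card F ^ (d + 1) := by
    apply sum_le_sum
    intro j hj
    exact card2_le ⊤ (f j) (f j0) d hT (exists_ne (hf j (mem_of_mem_erase hj)))
  rw [sum_add_distrib, sum_const, sum_const, smul_eq_mul, smul_eq_mul, pow_succ] at h4
  rw [h1, sum_const, smul_eq_mul, mul_one] at h3
  rw [pow_succ, pow_succ] at h2
  refine ⟨h2, ?_, h4⟩
  simpa using h3

lemma coverA :
    (Fintype.card F + 1) * Fintype.card F ^ d ≤
      #t * Fintype.card F ^ d + #(s.filter (fun i => f j0 (p i) ≠ 0)) := by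
  have := Module.finite_of_finite F (M := V)
  have := Fintype.ofFinite V
  obtain ⟨h2, h3, h4⟩ := cover_core hd hf h j0 hj0
  have := ar1 (two_le_q (F := F)) h2 h3 h4
  rwa [card_erase_add_one hj0] at this

lemma coverEq (he : #t * Fintype.card F ^ d + #s ≤ (Fintype.card F + 1) * Fintype.card F ^ d) :
    (∀ i ∈ s, f j0 (p i) ≠ 0) ∧ (∀ j ∈ t, j ≠ j0 → ∃ x, f j x = 0 ∧ f j0 x ≠ 0) ∧
    (∀ x, f j0 x ≠ 0 → cov s p (t.erase j0) f x = 1) := by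
  have := Module.finite_of_finite F (M := V)
  have := Fintype.ofFinite V
  have hT : finrank F (⊤ : Submodule F V) = d + 2 := by simpa using hd
  obtain ⟨h2, h3, h4⟩ := cover_core hd hf h j0 hj0
  have hn : #(s.filter (fun i => f j0 (p i) ≠ 0)) ≤ #s := card_filter_le _ _
  rw [← card_erase_add_one hj0] at he
  obtain ⟨e1, e2, e3⟩ := ar2 (two_le_q (F := F)) h2 h3 h4 hn he
  refine ⟨?_, ?_, ?_⟩
  · exact filter_eq_self.1 (eq_of_subset_of_card_le (filter_subset _ _) e1.ge)
  · have key : ∑ j ∈ t.erase j0, (#(univ.filter (fun x : V => (x ∈ (⊤ : Submodule F V) ∧ f j0 x ≠ 0)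
      ∧ f j x = 0)) + Fintype.card F ^ d) = ∑ j ∈ t.erase j0, Fintype.card F ^ (d + 1) := by
      rw [sum_add_distrib, sum_const, sum_const, smul_eq_mul, smul_eq_mul, pow_succ]
      exact e2
    rw [sum_eq_sum_iff_of_le (fun j hj => card2_le ⊤ (f j) (f j0) d hT
      (exists_ne (hf j (mem_of_mem_erase hj))))] at key
    intro j hj hne
    have := key j (mem_erase.2 ⟨hne, hj⟩)
    have hlt : Fintype.card F ^ d < Fintype.card F ^ (d + 1) :=
      Nat.pow_lt_pow_right (two_le_q (F := F)) (by omega)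
    have hpos : 0 < #(univ.filter (fun x : V => (x ∈ (⊤ : Submodule F V) ∧ f j0 x ≠ 0)
      ∧ f j x = 0)) := by omega
    obtain ⟨x, hx⟩ := card_pos.1 hpos
    simp only [mem_filter] at hx
    exact ⟨x, hx.2.2, hx.2.1.2⟩
  · have key : ∑ x ∈ univ.filter (fun x : V => x ∈ (⊤ : Submodule F V) ∧ f j0 x ≠ 0), 1 =
     ∑ x ∈ univ.filter (fun x : V => x ∈ (⊤ : Submodule F V) ∧ f j0 x ≠ 0),
      cov s p (t.erase j0) f x := by
      rw [sumcov, sum_const, smul_eq_mul, mul_one]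
      simpa using e3
    rw [sum_eq_sum_iff_of_le (fun x hx => cov_pos h j0 x (mem_filter.1 hx).2.2)] at key
    intro x hx
    exact (key x (by simpa using hx)).symm

lemma coverEqCard (he : #t * Fintype.card F ^ d + #s ≤ (Fintype.card F + 1) * Fintype.card F ^ d) :
    #t * Fintype.card F ^ d + #s = (Fintype.card F + 1) * Fintype.card F ^ d := by
  have h1 := coverA hd hf h j0 hj0
  have hn : #(s.filter (fun i => f j0 (p i) ≠ 0)) ≤ #s := card_filter_le _ _
  omega

lemma coverEq_b (he : #t * Fintype.card F ^ d + #s ≤ (Fintype.card F + 1) * Fintype.card F ^ d)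
    (i i' : ι) (hi : i ∈ s) (hi' : i' ∈ s) (hne : i ≠ i') (c : F) : p i' ≠ c • p i := by
  intro hc
  obtain ⟨h1, -, h3⟩ := coverEq hd hf h j0 hj0 he
  have h4 := h3 (p i') (h1 i' hi')
  have : ({i, i'} : Finset ι) ⊆ s.filter (fun i => ∃ c : F, p i' = c • p i) := by
    intro a ha
    simp only [mem_insert, mem_singleton] at ha
    rw [mem_filter]
    rcases ha with rfl | rfl
    · exact ⟨hi, c, hc⟩
    · exact ⟨hi', 1, by simp⟩
  have := card_le_card this
  rw [card_pair hne] at this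
  unfold cov at h4
  omega

lemma coverEq_triple
    (he : #t * Fintype.card F ^ d + #s ≤ (Fintype.card F + 1) * Fintype.card F ^ d)
    (j1 j2 : κ) (hj1 : j1 ∈ t) (hj2 : j2 ∈ t) (hne : j1 ≠ j2) (x : V)
    (h1 : f j1 x = 0) (h2 : f j2 x = 0) : f j0 x = 0 := by
  by_contra hx
  obtain ⟨-, -, h3⟩ := coverEq hd hf h j0 hj0 he
  have h4 := h3 x hx
  have : ({j1, j2} : Finset κ) ⊆ (t.erase j0).filter (fun j => f j x = 0) := by
    intro a ha
    simp only [mem_insert, mem_singleton] at ha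
    rw [mem_filter, mem_erase]
    rcases ha with rfl | rfl
    · exact ⟨⟨by rintro rfl; exact hx h1, hj1⟩, h1⟩
    · exact ⟨⟨by rintro rfl; exact hx h2, hj2⟩, h2⟩
  have := card_le_card this
  rw [card_pair hne] at this
  unfold cov at h4
  omega

end cover

lemma coverA0' {d : ℕ} (hd : finrank F V = d + 2) {s : Finset ι} {p : ι → V} {t : Finset κ}
    {f : κ → Dual F V} (h : Cover s p t f) (ht : t = ∅) :
    (Fintype.card F + 1) * Fintype.card F ^ d + (if d = 0 then 0 else 1) ≤ #s := by
  have := Module.finite_of_finite F (M := V)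
  have := Fintype.ofFinite V
  have h1 : (univ : Finset V).erase 0 ⊆
      s.biUnion (fun i => (univ.erase (0 : F)).image (fun c => c • p i)) := by
    intro x hx
    rw [mem_erase] at hx
    rcases h x hx.1 with ⟨j, hj, -⟩ | ⟨i, hi, c, hc⟩
    · rw [ht] at hj; exact absurd hj (notMem_empty _)
    · rw [mem_biUnion]
      refine ⟨i, hi, mem_image.2 ⟨c, ?_, hc.symm⟩⟩
      rw [mem_erase]
      refine ⟨?_, mem_univ _⟩
      rintro rfl
      apply hx.1; simpa using hc
  have h2 := (card_le_card h1).trans (card_biUnion_le_card_mul _ _ (Fintype.card F - 1) (by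
    intro i _
    refine card_image_le.trans ?_
    rw [card_erase_of_mem (mem_univ _), card_univ]))
  rw [card_erase_of_mem (mem_univ _), card_univ, Module.card_eq_pow_finrank (K := F), hd] at h2
  have hq := two_le_q (F := F)
  generalize Fintype.card F = q at *
  obtain ⟨r, rfl⟩ : ∃ r, q = r + 2 := ⟨q - 2, by omega⟩
  have e : r + 2 - 1 = r + 1 := by omega
  rw [e, Nat.sub_le_iff_le_add] at h2
  rw [pow_succ, pow_succ] at h2
  have hpos : 1 ≤ (r + 2) ^ d := Nat.one_le_pow _ _ (by omega)
  split_ifs with h0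
  · subst h0
    simp only [pow_zero] at *
    refine le_of_mul_le_mul_left (a := r + 1) ?_ (by omega)
    nlinarith
  · have hp2 : 2 ≤ (r + 2) ^ d := by
      calc 2 ≤ (r + 2) ^ 1 := by simp
        _ ≤ _ := Nat.pow_le_pow_right (by omega) (by omega)
    by_contra hc
    push Not at hc
    have : #s ≤ (r + 2 + 1) * (r + 2) ^ d := by omega
    nlinarith

lemma coverA0 {d : ℕ} (hd : finrank F V = d + 2) {s : Finset ι} {p : ι → V} {t : Finset κ}
    {f : κ → Dual F V} (hf : ∀ j ∈ t, f j ≠ 0) (h : Cover s p t f) :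
    (Fintype.card F + 1) * Fintype.card F ^ d ≤ #t * Fintype.card F ^ d + #s := by
  rcases t.eq_empty_or_nonempty with rfl | ⟨j0, hj0⟩
  · have := coverA0' hd h rfl
    split_ifs at this <;> simp <;> omega
  · have h1 := coverA hd hf h j0 hj0
    have hn : #(s.filter (fun i => f j0 (p i) ≠ 0)) ≤ #s := card_filter_le _ _
    omega

end
end BS
namespace BS
open Finset Module
open scoped Classical
set_option linter.unusedSectionVars false

section
variable {F : Type} [Field F] [Fintype F] {V : Type} [AddCommGroup V] [Module F V]
  [FiniteDimensional F V] {ι κ : Type}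

lemma propY (Y : Submodule F V) (f g : Dual F V) (hf : ∃ w ∈ Y, f w ≠ 0)
    (h : ∀ z ∈ Y, f z = 0 → g z = 0) : ∃ c : F, ∀ z ∈ Y, g z = c * f z := by
  obtain ⟨w, hw, hfw⟩ := hf
  refine ⟨g w / f w, fun z hz => ?_⟩
  have h1 := h (z - (f z / f w) • w) (Y.sub_mem hz (Y.smul_mem _ hw)) (by
    simp [hfw])
  simp only [map_sub, map_smul, smul_eq_mul, sub_eq_zero] at h1
  rw [h1]; ring

section cover
variable {d : ℕ} (hd : finrank F V = d + 2) {s : Finset ι} {p : ι → V} {t : Finset κ}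
    {f : κ → Dual F V} (hf : ∀ j ∈ t, f j ≠ 0)
    (h : Cover s p t f)
    (he : #t * Fintype.card F ^ d + #s ≤ (Fintype.card F + 1) * Fintype.card F ^ d)
    (Y : Submodule F V) (y : ℕ) (hy : finrank F Y = y + 2) (hY : ∀ j ∈ t, ∃ x ∈ Y, f j x ≠ 0)
include hd hf h he hy hY

lemma count_core [Fintype V] (j0 : κ) (hj0 : j0 ∈ t) :
    #(univ.filter (fun x : V => x ∈ Y ∧ f j0 x ≠ 0)) =
      ∑ j ∈ t.erase j0, #(univ.filter (fun x : V => (x ∈ Y ∧ f j0 x ≠ 0) ∧ f j x = 0)) +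
      (Fintype.card F - 1) * #(s.filter (fun i => p i ∈ Y)) := by
  obtain ⟨h1, -, h3⟩ := coverEq hd hf h j0 hj0 he
  have h4 : s.filter (fun i => p i ∈ Y) = s.filter (fun i => p i ∈ Y ∧ f j0 (p i) ≠ 0) := by
    apply filter_congr
    intro i hi
    simp [h1 i hi]
  rw [h4, ← sumcov, card_eq_sum_ones]
  apply sum_congr rfl
  intro x hx
  exact (h3 x (mem_filter.1 hx).2.2).symm

lemma countProp (j0 : κ) (hj0 : j0 ∈ t)
    (hp : ∀ j1 ∈ t, ∀ j2 ∈ t, ∀ x ∈ Y, f j1 x = 0 → f j2 x = 0) :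
    #(s.filter (fun i => p i ∈ Y)) = Fintype.card F ^ (y + 1) := by
  have := Module.finite_of_finite F (M := V)
  have := Fintype.ofFinite V
  have h1 := count_core hd hf h he Y y hy hY j0 hj0
  have h2 := cardN Y (f j0) (y + 1) hy (hY j0 hj0)
  rw [sum_eq_zero] at h1
  · have hq := two_le_q (F := F)
    generalize Fintype.card F = q at *
    obtain ⟨r, rfl⟩ : ∃ r, q = r + 2 := ⟨q - 2, by omega⟩
    have e : r + 2 - 1 = r + 1 := by omega
    rw [e] at h1
    rw [h1, pow_succ _ (y + 1)] at h2
    refine Nat.eq_of_mul_eq_mul_left (show 0 < r + 1 by omega) ?_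
    nlinarith
  · intro j hj
    rw [card_eq_zero]
    apply filter_false_of_mem
    rintro x - ⟨⟨a, b⟩, c⟩
    exact b (hp j (mem_of_mem_erase hj) j0 hj0 x a c)

lemma countNP (j1 j2 : κ) (hj1 : j1 ∈ t) (hj2 : j2 ∈ t) (x : V) (hx : x ∈ Y)
    (hx1 : f j1 x = 0) (hx2 : f j2 x ≠ 0) :
    #t * Fintype.card F ^ y + #(s.filter (fun i => p i ∈ Y)) =
      (Fintype.card F + 1) * Fintype.card F ^ y := by
  have := Module.finite_of_finite F (M := V)
  have := Fintype.ofFinite V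
  have h1 := count_core hd hf h he Y y hy hY j2 hj2
  have h2 := cardN Y (f j2) (y + 1) hy (hY j2 hj2)
  have key : ∀ j ∈ t.erase j2, ∃ z ∈ Y, f j z = 0 ∧ f j2 z ≠ 0 := by
    intro j hj
    by_cases hjj : j = j1
    · subst hjj; exact ⟨x, hx, hx1, hx2⟩
    by_contra hc
    push Not at hc
    obtain ⟨hj2', hjt⟩ := mem_erase.1 hj
    obtain ⟨c, hc2⟩ := propY Y (f j) (f j2) (hY j hjt) hc
    have hc0 : c ≠ 0 := by
      rintro rfl
      apply hx2; rw [hc2 x hx]; simp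
    obtain ⟨c', hc'⟩ := propY Y (f j2) (f j1) (hY j2 hj2) (by
      intro z hz hz2
      have : f j z = 0 := by
        have := hc2 z hz
        rw [hz2] at this
        simpa [hc0] using this.symm
      exact coverEq_triple hd hf h j1 hj1 he j j2 hjt hj2 hj2' z this hz2)
    have hc0' : c' = 0 := by
      have := hc' x hx
      rw [hx1] at this
      simpa [hx2] using this.symm
    obtain ⟨w, hw, hw2⟩ := hY j1 hj1
    apply hw2
    rw [hc' w hw, hc0', zero_mul]
  have h5 : ∑ j ∈ t.erase j2, #(univ.filter (fun x : V => (x ∈ Y ∧ f j2 x ≠ 0) ∧ f j x = 0))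
     + #(t.erase j2) * Fintype.card F ^ y = #(t.erase j2) * (Fintype.card F ^ y * Fintype.card F) := by
    rw [← smul_eq_mul, ← smul_eq_mul (_ : ℕ) (_ * _), ← sum_const, ← sum_add_distrib, ← sum_const]
    apply sum_congr rfl
    intro j hj
    rw [card2 Y (f j) (f j2) y hy (hY j (mem_of_mem_erase hj)) (key j hj), pow_succ]
  rw [← card_erase_add_one hj2]
  generalize #(t.erase j2) = m at *
  rw [h1, pow_succ _ (y + 1), pow_succ] at h2
  generalize ∑ j ∈ t.erase j2, #(univ.filter (fun x : V => (x ∈ Y ∧ f j2 x ≠ 0) ∧ f j x = 0)) = D at *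
  generalize #(s.filter (fun i => p i ∈ Y)) = n at *
  have hq := two_le_q (F := F)
  generalize Fintype.card F = q at *
  obtain ⟨r, rfl⟩ : ∃ r, q = r + 2 := ⟨q - 2, by omega⟩
  have e : r + 2 - 1 = r + 1 := by omega
  rw [e] at h2
  generalize (r + 2) ^ y = Q at *
  refine Nat.eq_of_mul_eq_mul_left (show 0 < r + 1 by omega) ?_
  nlinarith

end cover

/-- blocking property w.r.t. subspaces of vector space dimension `k+1` -/
def Blk (k : ℕ) (s : Finset ι) (p : ι → V) (t : Finset κ) (f : κ → Dual F V) : Prop :=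
  ∀ W : Submodule F V, finrank F W = k + 1 → (∃ i ∈ s, p i ∈ W) ∨ (∃ j ∈ t, ∀ x ∈ W, f j x = 0)

lemma Blk.cover {s : Finset ι} {p : ι → V} {t : Finset κ} {f : κ → Dual F V}
    (hp : ∀ i ∈ s, p i ≠ 0) (h : Blk 0 s p t f) : Cover s p t f := by
  intro x hx
  rcases h (F ∙ x) (by rw [finrank_span_singleton hx]) with ⟨i, hi, h1⟩ | ⟨j, hj, h1⟩
  · right
    obtain ⟨c, hc⟩ := Submodule.mem_span_singleton.1 h1
    have hc0 : c ≠ 0 := by rintro rfl; exact hp i hi (by rw [← hc]; simp)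
    exact ⟨i, hi, c⁻¹, by rw [← hc, smul_smul, inv_mul_cancel₀ hc0, one_smul]⟩
  · exact Or.inl ⟨j, hj, h1 x (Submodule.mem_span_singleton_self x)⟩

/-- functionals on a quotient -/
noncomputable def qf (U : Submodule F V) (f : κ → Dual F V) (j : κ) : Dual F (V ⧸ U) :=
  if h : U ≤ LinearMap.ker (f j) then U.liftQ (f j) h else 0

/-- functionals surviving in a quotient -/
noncomputable def qt (U : Submodule F V) (t : Finset κ) (f : κ → Dual F V) : Finset κ :=
  t.filter (fun j => U ≤ LinearMap.ker (f j))

lemma qf_mk (U : Submodule F V) (t : Finset κ) (f : κ → Dual F V) (j : κ) (hj : j ∈ qt U t f)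
    (x : V) : qf U f j (U.mkQ x) = f j x := by
  have := (mem_filter.1 hj).2
  simp [qf, this]

lemma qf_ne (U : Submodule F V) (t : Finset κ) (f : κ → Dual F V) (hf : ∀ j ∈ t, f j ≠ 0) :
    ∀ j ∈ qt U t f, qf U f j ≠ 0 := by
  intro j hj h0
  apply hf j (mem_filter.1 hj).1
  ext x
  rw [← qf_mk U t f j hj, h0]; simp

lemma qp_ne (U : Submodule F V) (s : Finset ι) (p : ι → V) (hp : ∀ i ∈ s, p i ∉ U) :
    ∀ i ∈ s, U.mkQ (p i) ≠ 0 := by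
  intro i hi h0
  apply hp i hi
  simpa using h0

lemma finrank_comap_mkQ (U : Submodule F V) (W : Submodule F (V ⧸ U)) :
    finrank F (W.comap U.mkQ) = finrank F W + finrank F U := by
  have h1 : U ≤ W.comap U.mkQ := by
    intro x hx
    have : U.mkQ x = 0 := by simpa using hx
    simp [Submodule.mem_comap, this]
  have h2 := LinearMap.finrank_range_add_finrank_ker (U.mkQ.domRestrict (W.comap U.mkQ))
  have h3 : LinearMap.range (U.mkQ.domRestrict (W.comap U.mkQ)) = W := by
    rw [LinearMap.range_domRestrict, Submodule.map_comap_eq]; simp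
  have h4 : U = Submodule.map (W.comap U.mkQ).subtype
      (LinearMap.ker (U.mkQ.domRestrict (W.comap U.mkQ))) := by
    ext x
    simp only [Submodule.mem_map, LinearMap.mem_ker, Submodule.subtype_apply,
      Subtype.exists, LinearMap.domRestrict_apply]
    constructor
    · intro hx; exact ⟨x, h1 hx, by simpa using hx, rfl⟩
    · rintro ⟨a, ha, hb, rfl⟩; simpa using hb
  have h5 : finrank F U = finrank F (LinearMap.ker (U.mkQ.domRestrict (W.comap U.mkQ))) := by
    conv_lhs => rw [h4]
    rw [Submodule.finrank_map_subtype_eq]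
  rw [h3] at h2
  omega

lemma Blk.quot {k u : ℕ} {s : Finset ι} {p : ι → V} {t : Finset κ} {f : κ → Dual F V}
    (h : Blk (k + u) s p t f) (U : Submodule F V) (hU : finrank F U = u) :
    Blk k s (fun i => U.mkQ (p i)) (qt U t f) (qf U f) := by
  intro W hW
  have h1 := finrank_comap_mkQ U W
  rcases h (W.comap U.mkQ) (by omega) with ⟨i, hi, h2⟩ | ⟨j, hj, h2⟩
  · exact Or.inl ⟨i, hi, h2⟩
  · right
    have hjq : j ∈ qt U t f := by
      refine mem_filter.2 ⟨hj, fun x hx => ?_⟩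
      apply h2
      have : U.mkQ x = 0 := by simpa using hx
      simp [Submodule.mem_comap, this]
    refine ⟨j, hjq, fun x hx => ?_⟩
    obtain ⟨z, rfl⟩ := U.mkQ_surjective x
    rw [qf_mk U t f j hjq]
    exact h2 z hx

lemma ar3 {q a a' : ℕ} (hq : 2 ≤ q) (h : a + a' = q + 2) : (q - 1) * ((a + 1) * a') < q ^ 3 := by
  obtain ⟨r, rfl⟩ : ∃ r, q = r + 2 := ⟨q - 2, by omega⟩
  have e : r + 2 - 1 = r + 1 := by omega
  rw [e]
  have h1 : 4 * ((a + 1) * a') ≤ (r + 5) ^ 2 := by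
    have h2 : (a + 1) + a' = r + 5 := by omega
    rw [← h2]
    zify
    nlinarith [sq_nonneg ((a : ℤ) + 1 - a')]
  have h2 : (r + 1) * (r + 5) ^ 2 < 4 * (r + 2) ^ 3 := by
    ring_nf; nlinarith
  nlinarith

lemma lemU1 {k l a a' : ℕ} (hN : finrank F V = k + 1 + l + 2) {s : Finset ι} {p : ι → V}
    {t : Finset κ} {f : κ → Dual F V} (hp : ∀ i ∈ s, p i ≠ 0) (hf : ∀ j ∈ t, f j ≠ 0)
    (ha : a + a' = Fintype.card F + 2)
    (hs : #s < a' * Fintype.card F ^ l) (ht : #t ≤ a * Fintype.card F ^ (k + 1)) :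
    ∃ u : V, u ≠ 0 ∧ (∀ i ∈ s, p i ∉ F ∙ u) ∧
      #(t.filter (fun j => f j u = 0)) ≤ a * Fintype.card F ^ k := by
  have := Module.finite_of_finite F (M := V)
  have := Fintype.ofFinite V
  by_contra hc
  push Not at hc
  set q := Fintype.card F with hqd
  have hq : 2 ≤ q := two_le_q (F := F)
  set Bad : Finset V := insert 0 (s.biUnion (fun i => (univ.erase (0 : F)).image (fun c => c • p i)))
    with hBad
  have hBc : #Bad ≤ 1 + #s * (q - 1) := by
    rw [add_comm]
    refine (card_insert_le _ _).trans ?_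
    apply Nat.add_le_add_right
    apply card_biUnion_le_card_mul
    intro i _
    refine card_image_le.trans ?_
    rw [card_erase_of_mem (mem_univ _), card_univ]
  have h1 : ∑ _u : V, (a * q ^ k + 1) ≤ ∑ u : V, #(t.filter (fun j => f j u = 0)) +
      ∑ _u ∈ Bad, (a * q ^ k + 1) := by
    rw [← sum_filter_add_sum_filter_not univ (fun u => u ∈ Bad), add_comm]
    apply add_le_add
    · refine (sum_le_sum ?_).trans (sum_le_sum_of_subset (filter_subset (fun u => u ∉ Bad) univ))
      intro u hu
      have hu := (mem_filter.1 hu).2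
      rw [hBad, mem_insert, mem_biUnion] at hu
      push Not at hu
      apply hc u hu.1
      intro i hi hpi
      obtain ⟨c, hc⟩ := Submodule.mem_span_singleton.1 hpi
      have hc0 : c ≠ 0 := by rintro rfl; exact hp i hi (by rw [← hc]; simp)
      apply hu.2 i hi
      refine mem_image.2 ⟨c⁻¹, by simp [hc0], ?_⟩
      rw [← hc, smul_smul, inv_mul_cancel₀ hc0, one_smul]
    · rw [filter_mem_eq_inter, univ_inter]
  have h2 : ∑ u : V, #(t.filter (fun j => f j u = 0)) = #t * q ^ (k + 1 + l + 1) := by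
    have := sum_card_bipartiteAbove_eq_sum_card_bipartiteBelow (fun (x : V) (j : κ) => f j x = 0)
      (s := univ) (t := t)
    simp only [bipartiteAbove, bipartiteBelow] at this
    rw [this, ← smul_eq_mul, ← sum_const]
    apply sum_congr rfl
    intro j hj
    have := cardK ⊤ (f j) (k + 1 + l + 1) (by simpa using hN) (exists_ne (hf j hj))
    simpa using this
  rw [h2, sum_const, sum_const, smul_eq_mul, smul_eq_mul, card_univ,
    Module.card_eq_pow_finrank (K := F), hN, ← hqd] at h1
  have h3 := ar3 hq ha
  have hQ : 1 ≤ q ^ k := Nat.one_le_pow _ _ (by omega)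
  have hQl : 1 ≤ q ^ l := Nat.one_le_pow _ _ (by omega)
  have e1 : q ^ (k + 1 + l + 2) = q ^ k * q ^ l * q ^ 3 := by ring
  have e2 : q ^ (k + 1 + l + 1) = q ^ k * q ^ l * q ^ 2 := by ring
  have e3 : q ^ (k + 1) = q ^ k * q := by ring
  rw [e1, e2] at h1
  rw [e3] at ht
  -- the bad set
  have hB2 : #Bad ≤ (q - 1) * (a' * q ^ l) := by
    refine hBc.trans ?_
    obtain ⟨r, hr⟩ : ∃ r, q = r + 2 := ⟨q - 2, by omega⟩
    have e : q - 1 = r + 1 := by omega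
    rw [e]
    nlinarith
  have h4 : q ^ k * q ^ l * q ^ 3 ≤ (a * q ^ k + 1) * #Bad := by
    have : #t * (q ^ k * q ^ l * q ^ 2) ≤ a * (q ^ k * q) * (q ^ k * q ^ l * q ^ 2) :=
      Nat.mul_le_mul_right _ ht
    nlinarith
  have h5 : (a * q ^ k + 1) * #Bad ≤ ((a + 1) * q ^ k) * ((q - 1) * (a' * q ^ l)) := by
    apply Nat.mul_le_mul _ hB2
    nlinarith
  have h6 : ((a + 1) * q ^ k) * ((q - 1) * (a' * q ^ l)) =
    (q ^ k * q ^ l) * ((q - 1) * ((a + 1) * a')) := by ring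
  have h7 : 0 < q ^ k * q ^ l := by positivity
  have := Nat.mul_lt_mul_of_pos_left h3 h7
  omega

end

section
variable {F : Type} [Field F] [Fintype F] {ι κ : Type}

lemma lemUK {l a a' : ℕ} (ha : a + a' = Fintype.card F + 2) (s : Finset ι)
    (hs : #s < a' * Fintype.card F ^ l) (k : ℕ) :
    ∀ {V : Type} [AddCommGroup V] [Module F V] [FiniteDimensional F V]
    (_ : finrank F V = k + l + 2) (p : ι → V)
    (t : Finset κ) (f : κ → Dual F V) (_ : ∀ i ∈ s, p i ≠ 0) (_ : ∀ j ∈ t, f j ≠ 0)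
    (_ : #t ≤ a * Fintype.card F ^ k),
    ∃ U : Submodule F V, finrank F U = k ∧ (∀ i ∈ s, p i ∉ U) ∧ #(qt U t f) ≤ a := by
  induction k with
  | zero =>
    intro V _ _ _ hN p t f hp hf ht
    refine ⟨⊥, by simp, by simpa using hp, ?_⟩
    refine (card_filter_le _ _).trans (by simpa using ht)
  | succ k ih =>
    intro V _ _ _ hN p t f hp hf ht
    obtain ⟨u, hu0, hu1, hu2⟩ := lemU1 hN hp hf ha hs ht
    have hfr : finrank F (F ∙ u) = 1 := finrank_span_singleton hu0
    have hq : finrank F (V ⧸ (F ∙ u)) = k + l + 2 := by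
      have := Submodule.finrank_quotient_add_finrank (F ∙ u)
      omega
    have hqt : qt (F ∙ u) t f = t.filter (fun j => f j u = 0) := by
      apply filter_congr
      intro j _
      simp [Submodule.span_singleton_le_iff_mem]
    obtain ⟨U, h1, h2, h3⟩ := ih hq (fun i => (F ∙ u).mkQ (p i)) (qt (F ∙ u) t f) (qf (F ∙ u) f)
      (qp_ne _ s p hu1) (qf_ne _ t f hf) (by rw [hqt]; exact hu2)
    refine ⟨U.comap (F ∙ u).mkQ, by rw [finrank_comap_mkQ, h1, hfr], fun i hi hc => h2 i hi hc, ?_⟩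
    refine (card_le_card ?_).trans h3
    intro j hj
    obtain ⟨hj, hjU⟩ := mem_filter.1 hj
    have hj' : j ∈ qt (F ∙ u) t f := by
      refine mem_filter.2 ⟨hj, ?_⟩
      rw [Submodule.span_singleton_le_iff_mem]
      apply hjU
      have : (F ∙ u).mkQ u = 0 := by simp
      rw [Submodule.mem_comap, this]; exact zero_mem _
    refine mem_filter.2 ⟨hj', ?_⟩
    intro x hx
    obtain ⟨z, rfl⟩ := (F ∙ u).mkQ_surjective x
    rw [LinearMap.mem_ker, qf_mk _ t f j hj']
    exact hjU hx

end
section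
variable {F : Type} [Field F] [Fintype F] {V : Type} [AddCommGroup V] [Module F V]
  [FiniteDimensional F V] {ι κ : Type}

/-- evaluation functionals on the dual of a subspace -/
noncomputable def wf (W : Submodule F V) (p : ι → V) (i : ι) : Dual F (Dual F W) :=
  if h : p i ∈ W then Dual.eval F W ⟨p i, h⟩ else 0

lemma wf_apply (W : Submodule F V) (p : ι → V) (i : ι) (h : p i ∈ W) (θ : Dual F W) :
    wf W p i θ = θ ⟨p i, h⟩ := by
  simp [wf, h]

lemma wf_ne (W : Submodule F V) (p : ι → V) (i : ι) (h : p i ∈ W) (h0 : p i ≠ 0) :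
    wf W p i ≠ 0 := by
  intro hc
  simp only [wf, h, dif_pos] at hc
  have : Function.Injective (Dual.eval F W) := by
    rw [← LinearMap.ker_eq_bot]; exact Module.eval_ker F W
  have := this (hc.trans (map_zero _).symm)
  apply h0
  simpa using congrArg Subtype.val this

lemma Blk.coverW {k : ℕ} {s : Finset ι} {p : ι → V} {t : Finset κ} {f : κ → Dual F V}
    (h : Blk k s p t f) (W : Submodule F V) (hW : finrank F W = k + 2)
    (hWf : ∀ j ∈ t, ∃ x ∈ W, f j x ≠ 0) :
    Cover t (fun j => (f j).domRestrict W) (s.filter (fun i => p i ∈ W)) (wf W p) := by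
  intro θ hθ
  have h1 := Module.Dual.finrank_ker_add_one_of_ne_zero (f := θ) hθ
  rcases h ((LinearMap.ker θ).map W.subtype) (by rw [Submodule.finrank_map_subtype_eq]; omega) with
    ⟨i, hi, h2⟩ | ⟨j, hj, h2⟩
  · left
    obtain ⟨x, hx, hxi⟩ := Submodule.mem_map.1 h2
    have hpi : p i ∈ W := by rw [← hxi]; exact x.2
    refine ⟨i, mem_filter.2 ⟨hi, hpi⟩, ?_⟩
    rw [wf_apply W p i hpi]
    have : (⟨p i, hpi⟩ : W) = x := Subtype.ext hxi.symm
    rw [this]; exact hx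
  · right
    obtain ⟨c, hc⟩ := propY (⊤ : Submodule F W) θ ((f j).domRestrict W) (exists_ne hθ) (by
      intro z _ hz
      exact h2 _ (Submodule.mem_map.2 ⟨z, hz, rfl⟩))
    have hc0 : c ≠ 0 := by
      rintro rfl
      obtain ⟨x, hx, hx2⟩ := hWf j hj
      apply hx2
      simpa using hc ⟨x, hx⟩ trivial
    refine ⟨j, hj, c⁻¹, ?_⟩
    ext z
    have := hc z trivial
    simp only [LinearMap.smul_apply, smul_eq_mul, this]
    field_simp

lemma finrank_dualW {k : ℕ} (W : Submodule F V) (hW : finrank F W = k + 2) :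
    finrank F (Dual F W) = k + 2 := by
  rw [Subspace.dual_finrank_eq, hW]

lemma Blk.boundW {k : ℕ} {s : Finset ι} {p : ι → V} {t : Finset κ} {f : κ → Dual F V}
    (hp : ∀ i ∈ s, p i ≠ 0) (h : Blk k s p t f) (W : Submodule F V) (hW : finrank F W = k + 2)
    (hWf : ∀ j ∈ t, ∃ x ∈ W, f j x ≠ 0) :
    (Fintype.card F + 1) * Fintype.card F ^ k ≤
      #(s.filter (fun i => p i ∈ W)) * Fintype.card F ^ k + #t := by
  apply coverA0 (finrank_dualW W hW) _ (h.coverW W hW hWf)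
  intro i hi
  obtain ⟨h1, h2⟩ := mem_filter.1 hi
  exact wf_ne W p i h2 (hp i h1)

end
end BS
namespace BS
open Finset Module
open scoped Classical
set_option linter.unusedSectionVars false

section
variable {F : Type} [Field F] [Fintype F] {V : Type} [AddCommGroup V] [Module F V]
  [FiniteDimensional F V] {ι κ : Type}

lemma finrank_pair {x y : V} (hy : y ≠ 0) (h : ∀ c : F, c • y ≠ x) :
    finrank F (Submodule.span F {y, x}) = 2 := by
  have h1 := (LinearIndependent.pair_iff' hy).2 h
  have h2 := finrank_span_eq_card h1
  have h3 : Set.range ![y, x] = {y, x} := by simp [Matrix.range_cons]; exact Set.pair_comm _ _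
  rw [h3] at h2
  simpa using h2

/-- first case of the half lemma -/
lemma half_case1 {k a' : ℕ} (hE : finrank F V = k + 2) {s : Finset ι} {P : ι → V}
    (hP : ∀ i ∈ s, P i ≠ 0) (g : Dual F V) (hg : g ≠ 0)
    (y : V) (_ : y ≠ 0) (_ : g y = 0) (hyP : ∀ i ∈ s, ∀ c : F, y ≠ c • P i)
    (hW : ∀ x, g x ≠ 0 → a' ≤ #(s.filter (fun i => P i ∈ Submodule.span F {y, x}))) :
    a' * Fintype.card F ^ k ≤ #s := by
  have := Module.finite_of_finite F (M := V)
  have := Fintype.ofFinite V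
  have h2 := cardN ⊤ g (k + 1) (by simpa using hE) (exists_ne hg)
  simp only [Submodule.mem_top, true_and] at h2
  have h1 := sum_card_bipartiteAbove_eq_sum_card_bipartiteBelow
      (fun (x : V) (i : ι) => P i ∈ Submodule.span F {y, x})
      (s := univ.filter (fun x : V => g x ≠ 0)) (t := s)
  simp only [bipartiteAbove, bipartiteBelow, filter_filter] at h1
  have h3 : #(univ.filter (fun x : V => g x ≠ 0)) * a' ≤
      ∑ x ∈ univ.filter (fun x : V => g x ≠ 0),
       #(s.filter (fun i => P i ∈ Submodule.span F {y, x})) := by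
    rw [← smul_eq_mul, ← sum_const]
    apply sum_le_sum
    intro x hx
    exact hW x (mem_filter.1 hx).2
  have h4 : ∑ i ∈ s, #(univ.filter (fun x : V => g x ≠ 0 ∧ P i ∈ Submodule.span F {y, x})) ≤
     #s * (Fintype.card F * (Fintype.card F - 1)) := by
    rw [← smul_eq_mul, ← sum_const]
    apply sum_le_sum
    intro i hi
    have hsub : univ.filter (fun x : V => g x ≠ 0 ∧ P i ∈ Submodule.span F {y, x}) ⊆
      ((univ : Finset F) ×ˢ (univ : Finset F).erase 0).image (fun c => c.1 • y + c.2 • P i) := by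
      intro x hx
      obtain ⟨-, hx1, hx2⟩ := mem_filter.1 hx
      obtain ⟨b, c, hbc⟩ := Submodule.mem_span_pair.1 hx2
      have hc : c ≠ 0 := by
        rintro rfl
        simp only [zero_smul, add_zero] at hbc
        have hb : b ≠ 0 := by rintro rfl; exact hP i hi (by rw [← hbc]; simp)
        apply hyP i hi b⁻¹
        rw [← hbc, smul_smul, inv_mul_cancel₀ hb, one_smul]
      refine mem_image.2 ⟨(-(c⁻¹ * b), c⁻¹), by simp [hc], ?_⟩
      simp only
      rw [← hbc, smul_add, smul_smul, smul_smul, inv_mul_cancel₀ hc, neg_smul, one_smul,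
        neg_add_cancel_left]
    refine (card_le_card hsub).trans (card_image_le.trans ?_)
    rw [card_product, card_erase_of_mem (mem_univ _), card_univ]
  rw [h1] at h3
  have h5 := h3.trans h4
  have hq := two_le_q (F := F)
  generalize Fintype.card F = q at *
  obtain ⟨r, rfl⟩ : ∃ r, q = r + 2 := ⟨q - 2, by omega⟩
  have e : r + 2 - 1 = r + 1 := by omega
  rw [e] at h5
  rw [pow_succ _ (k + 1), pow_succ] at h2
  have h6 : #(univ.filter (fun x : V => g x ≠ 0)) = (r + 2) ^ k * (r + 2) * (r + 1) := by
    nlinarith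
  rw [h6] at h5
  refine le_of_mul_le_mul_left (a := (r + 2) * (r + 1)) ?_ (by positivity)
  nlinarith

/-- second case of the half lemma -/
lemma half_case2 {k : ℕ} (hE : finrank F V = k + 3) {s : Finset ι} {P : ι → V}
    {t : Finset κ} {g : κ → Dual F V} (j0 : κ) (hj0 : j0 ∈ t) (hg : g j0 ≠ 0)
    (hnp : ∀ j ∈ t, j ≠ j0 → ∃ x, g j0 x = 0 ∧ g j x ≠ 0)
    (hc : ∀ y, y ≠ 0 → g j0 y = 0 → (∃ j ∈ t, j ≠ j0 ∧ g j y = 0) ∨ ∃ i ∈ s, ∃ c : F, y = c • P i) :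
    (Fintype.card F + 2) * Fintype.card F ^ k ≤ #t * Fintype.card F ^ k +
      #(s.filter (fun i => g j0 (P i) = 0)) := by
  set K := LinearMap.ker (g j0) with hK
  have h1 := Module.Dual.finrank_ker_add_one_of_ne_zero (f := g j0) hg
  have hfK : finrank F K = k + 2 := by rw [hK]; omega
  have hcov : Cover (s.filter (fun i => g j0 (P i) = 0))
      (fun i => if h : P i ∈ K then (⟨P i, h⟩ : K) else 0) (t.erase j0)
      (fun j => (g j).domRestrict K) := by
    intro y hy
    rcases hc y (by simpa using hy) y.2 with ⟨j, hj, hne, h⟩ | ⟨i, hi, c, h⟩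
    · exact Or.inl ⟨j, mem_erase.2 ⟨hne, hj⟩, h⟩
    · right
      have hc0 : c ≠ 0 := by
        rintro rfl
        apply hy; ext; rw [h]; simp
      have hPi : P i ∈ K := by
        have := y.2
        rw [h] at this
        exact (K.smul_mem_iff hc0).1 this
      refine ⟨i, mem_filter.2 ⟨hi, hPi⟩, c, ?_⟩
      ext
      simp [hPi, h]
  have h2 := coverA0 hfK (by
    intro j hj h0
    obtain ⟨hne, hj⟩ := mem_erase.1 hj
    obtain ⟨x, hx, hx2⟩ := hnp j hj hne
    exact hx2 (LinearMap.congr_fun h0 ⟨x, hx⟩)) hcov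
  rw [← card_erase_add_one hj0]
  nlinarith

lemma half {k a a' : ℕ} (hN : finrank F V = (k + 1) + (k + 1) + 2) {s : Finset ι} {p : ι → V}
    {t : Finset κ} {f : κ → Dual F V} (hp : ∀ i ∈ s, p i ≠ 0) (hf : ∀ j ∈ t, f j ≠ 0)
    (hB : Blk (k + 1) s p t f)
    (hnp : ∀ j ∈ t, ∀ j' ∈ t, j ≠ j' → ∃ x, f j x = 0 ∧ f j' x ≠ 0)
    (ha : a + a' = Fintype.card F + 2) (ha1 : 1 ≤ a)
    (hs : #s < a' * Fintype.card F ^ (k + 1)) (ht : #t < a * Fintype.card F ^ (k + 1)) :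
    a' * Fintype.card F ^ (k + 1) + a' * Fintype.card F ^ k ≤ #s + Fintype.card F ^ (k + 1) := by
  obtain ⟨U, hU1, hU2, hU3⟩ := lemUK ha s hs (k + 1) hN p t f hp hf ht.le
  have hE : finrank F (V ⧸ U) = (k + 1) + 2 := by
    have := Submodule.finrank_quotient_add_finrank U
    omega
  have hQ := hB
  rw [show k + 1 = 0 + (k + 1) by omega] at hQ
  have hPne := qp_ne U s p hU2
  have hgne := qf_ne U t f hf
  have hC := (hQ.quot U hU1).cover hPne
  have h0 := coverA0 hE hgne hC
  have hpos : 0 < Fintype.card F ^ (k + 1) := by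
    have := two_le_q (F := F); positivity
  have hm : #(qt U t f) = a := by
    by_contra hne
    have h1 : #(qt U t f) + 1 ≤ a := by omega
    have h2 := Nat.mul_le_mul_right (Fintype.card F ^ (k + 1)) h1
    nlinarith
  obtain ⟨j0, hj0⟩ := card_pos.1 (by omega : 0 < #(qt U t f))
  by_cases hcase : ∃ y, y ≠ 0 ∧ qf U f j0 y = 0 ∧ (∀ j ∈ qt U t f, j ≠ j0 → qf U f j y ≠ 0) ∧
      ∀ i ∈ s, ∀ c : F, y ≠ c • U.mkQ (p i)
  · exfalso
    obtain ⟨y, hy0, hy1, hy2, hy3⟩ := hcase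
    have := half_case1 (a' := a') hE hPne (qf U f j0) (hgne j0 hj0) y hy0 hy1 hy3 (by
      intro x hx
      set W := (Submodule.span F {y, x}).comap U.mkQ with hW
      have hWr : finrank F W = (k + 1) + 2 := by
        rw [hW, finrank_comap_mkQ, hU1, finrank_pair hy0]
        · omega
        · rintro c rfl
          apply hx
          simp [hy1]
      have hb := hB.boundW hp W hWr (by
        by_contra hcon
        push Not at hcon
        obtain ⟨j, hj, hjW⟩ := hcon
        have hjq : j ∈ qt U t f := by
          refine mem_filter.2 ⟨hj, fun z hz => hjW z ?_⟩
          have : U.mkQ z = 0 := by simpa using hz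
          rw [hW, Submodule.mem_comap, this]; exact zero_mem _
        have hall : ∀ z ∈ Submodule.span F {y, x}, qf U f j z = 0 := by
          intro z hz
          obtain ⟨z, rfl⟩ := U.mkQ_surjective z
          rw [qf_mk U t f j hjq]
          exact hjW z hz
        by_cases hjj : j = j0
        · subst hjj
          exact hx (hall x (Submodule.subset_span (by simp)))
        · exact hy2 j hjq hjj (hall y (Submodule.subset_span (by simp))))
      have hfe : s.filter (fun i => p i ∈ W) =
        s.filter (fun i => U.mkQ (p i) ∈ Submodule.span F {y, x}) := rfl
      rw [hfe] at hb
      by_contra hlt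
      push Not at hlt
      have h1 := Nat.mul_le_mul_right (Fintype.card F ^ (k + 1)) (Nat.succ_le_of_lt hlt)
      rw [Nat.succ_eq_add_one] at h1
      have h2 : (a + a') * Fintype.card F ^ (k + 1) =
        (Fintype.card F + 2) * Fintype.card F ^ (k + 1) := by rw [ha]
      nlinarith)
    omega
  · push Not at hcase
    have h2 := half_case2 (k := k) (s := s) (P := fun i => U.mkQ (p i)) (by omega) j0 hj0 (hgne j0 hj0) (by
      intro j hj hne
      obtain ⟨x, hx1, hx2⟩ := hnp j0 (mem_filter.1 hj0).1 j (mem_filter.1 hj).1 hne.symm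
      exact ⟨U.mkQ x, by rw [qf_mk U t f j0 hj0, hx1], by rw [qf_mk U t f j hj]; exact hx2⟩) (by
      intro y hy0 hy1
      by_cases hh : ∃ j ∈ qt U t f, j ≠ j0 ∧ qf U f j y = 0
      · exact Or.inl hh
      · push Not at hh
        exact Or.inr (hcase y hy0 hy1 hh))
    have h1 := coverA hE hgne hC j0 hj0
    have h3 := card_filter_add_card_filter_not (s := s) (fun i => qf U f j0 (U.mkQ (p i)) = 0)
    rw [hm] at h1 h2
    simp only [ne_eq] at h1
    have e1 : (a + a') * Fintype.card F ^ (k + 1) =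
        (Fintype.card F + 2) * Fintype.card F ^ (k + 1) := by rw [ha]
    have e2 : (a + a') * Fintype.card F ^ k =
        (Fintype.card F + 2) * Fintype.card F ^ k := by rw [ha]
    nlinarith

lemma Blk.dual {k : ℕ} (hN : finrank F V = k + k + 2) {s : Finset ι} {p : ι → V}
    {t : Finset κ} {f : κ → Dual F V} (hB : Blk k s p t f) :
    Blk k t f s (fun i => Dual.eval F V (p i)) := by
  intro W hW
  have h1 := Subspace.finrank_add_finrank_dualCoannihilator_eq W
  rcases hB W.dualCoannihilator (by omega) with ⟨i, hi, h⟩ | ⟨j, hj, h⟩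
  · right
    refine ⟨i, hi, fun x hx => ?_⟩
    rw [Submodule.mem_dualCoannihilator] at h
    exact h x hx
  · left
    refine ⟨j, hj, ?_⟩
    rw [← Subspace.dualCoannihilator_dualAnnihilator_eq (W := W), Submodule.mem_dualAnnihilator]
    exact h

lemma integrality {k : ℕ} (hN : finrank F V = (k + 1) + (k + 1) + 2) {s : Finset ι} {p : ι → V}
    {t : Finset κ} {f : κ → Dual F V} (hp : ∀ i ∈ s, p i ≠ 0) (hf : ∀ j ∈ t, f j ≠ 0)
    (hB : Blk (k + 1) s p t f)
    (hnp : ∀ j ∈ t, ∀ j' ∈ t, j ≠ j' → ∃ x, f j x = 0 ∧ f j' x ≠ 0)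
    (hnp' : ∀ i ∈ s, ∀ i' ∈ s, i ≠ i' → ∀ c : F, p i' ≠ c • p i)
    (hst : #s + #t = (Fintype.card F + 1) * Fintype.card F ^ (k + 1)) :
    ∃ α β, α + β = Fintype.card F + 1 ∧ #t = α * Fintype.card F ^ (k + 1) ∧
      #s = β * Fintype.card F ^ (k + 1) := by
  have hpos : 0 < Fintype.card F ^ (k + 1) := by
    have := two_le_q (F := F); positivity
  obtain ⟨α, r, hr, hα⟩ : ∃ α r, r < Fintype.card F ^ (k + 1) ∧
      #t = α * Fintype.card F ^ (k + 1) + r :=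
    ⟨#t / _, #t % _, Nat.mod_lt _ hpos, (Nat.div_add_mod' _ _).symm⟩
  rcases Nat.eq_zero_or_pos r with rfl | hr0
  · have h1 : α * Fintype.card F ^ (k + 1) ≤ (Fintype.card F + 1) * Fintype.card F ^ (k + 1) := by
      omega
    have h2 := Nat.le_of_mul_le_mul_right h1 hpos
    refine ⟨α, Fintype.card F + 1 - α, by omega, by omega, ?_⟩
    rw [Nat.sub_mul]; omega
  · exfalso
    have h1 : α * Fintype.card F ^ (k + 1) < (Fintype.card F + 1) * Fintype.card F ^ (k + 1) := by
      omega
    have h2 := Nat.lt_of_mul_lt_mul_right h1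
    obtain ⟨a', ha'⟩ : ∃ a', α + a' = Fintype.card F + 1 := ⟨Fintype.card F + 1 - α, by omega⟩
    have hs : #s < a' * Fintype.card F ^ (k + 1) := by
      have : (α + a') * Fintype.card F ^ (k + 1) = (Fintype.card F + 1) * Fintype.card F ^ (k + 1) := by
        rw [ha']
      nlinarith
    have ht : #t < (α + 1) * Fintype.card F ^ (k + 1) := by nlinarith
    have A := half hN hp hf hB hnp (a := α + 1) (a' := a') (by omega) (by omega) hs ht
    have hinj : Function.Injective (Dual.eval F V) := by
      rw [← LinearMap.ker_eq_bot]; exact Module.eval_ker F V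
    have B := half (V := Dual F V) (by rw [Subspace.dual_finrank_eq, hN]) hf (by
        intro i hi h0
        exact hp i hi (hinj (h0.trans (map_zero _).symm))) (hB.dual hN) (by
        intro i hi i' hi' hne
        have : p i' ∉ F ∙ (p i) := by
          intro hm
          obtain ⟨c, hc⟩ := Submodule.mem_span_singleton.1 hm
          exact hnp' i hi i' hi' hne c hc.symm
        obtain ⟨θ, h1, h2⟩ := Submodule.exists_le_ker_of_notMem this
        refine ⟨θ, ?_, h1⟩
        exact h2 (Submodule.mem_span_singleton_self _))
      (a := a') (a' := α + 1) (by omega) (by omega) ht hs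
    have e1 : (α + a') * Fintype.card F ^ (k + 1) =
        (Fintype.card F + 1) * Fintype.card F ^ (k + 1) := by rw [ha']
    have e2 : (α + a') * Fintype.card F ^ k =
        (Fintype.card F + 1) * Fintype.card F ^ k := by rw [ha']
    have e3 : Fintype.card F ^ (k + 1) = Fintype.card F ^ k * Fintype.card F := pow_succ _ _
    have hpos' : 0 < Fintype.card F ^ k := by
      have := two_le_q (F := F); positivity
    nlinarith

end
end BS
namespace BS
open Finset Module
open scoped Classical
set_option linter.unusedSectionVars false

section
variable {F : Type} [Field F] [Fintype F] {V : Type} [AddCommGroup V] [Module F V]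
  [FiniteDimensional F V] {ι κ : Type}

/-- tight vectors -/
def Tight (α : ℕ) (s : Finset ι) (p : ι → V) (t : Finset κ) (f : κ → Dual F V) (u : V) : Prop :=
  u ≠ 0 ∧ (∀ i ∈ s, p i ∉ F ∙ u) ∧ #(qt (F ∙ u) t f) ≤ α

lemma qt_span (t : Finset κ) (f : κ → Dual F V) (u : V) :
    qt (F ∙ u) t f = t.filter (fun j => f j u = 0) := by
  apply filter_congr
  intro j _
  simp [Submodule.span_singleton_le_iff_mem]

section base
variable {l α β : ℕ} (hN : finrank F V = l + 4) {s : Finset ι} {p : ι → V}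
    {t : Finset κ} {f : κ → Dual F V} (hp : ∀ i ∈ s, p i ≠ 0) (hf : ∀ j ∈ t, f j ≠ 0)
    (hB : Blk 1 s p t f) (hαβ : α + β = Fintype.card F + 1) (hα : 1 ≤ α) (hβ : 1 ≤ β)
    (hs : #s ≤ β * Fintype.card F ^ (l + 1)) (ht : #t ≤ α * Fintype.card F)
include hN hp hf hB hαβ hα hβ hs ht

lemma tight_exists : ∃ u, Tight α s p t f u := by
  obtain ⟨u, h1, h2, h3⟩ := lemU1 (k := 0) (l := l + 1) (a := α) (a' := β + 1) (by omega) hp hf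
    (by omega) (by
      have : 0 < Fintype.card F ^ (l + 1) := by
        have := two_le_q (F := F); positivity
      nlinarith) (by simpa using ht)
  refine ⟨u, h1, h2, ?_⟩
  rw [qt_span]
  simpa using h3

lemma tight_pack {u : V} (hu : Tight α s p t f u) :
    finrank F (V ⧸ (F ∙ u)) = (l + 1) + 2 ∧
    Cover s (fun i => (F ∙ u).mkQ (p i)) (qt (F ∙ u) t f) (qf (F ∙ u) f) ∧
    #(qt (F ∙ u) t f) = α ∧ #s = β * Fintype.card F ^ (l + 1) ∧
    #(qt (F ∙ u) t f) * Fintype.card F ^ (l + 1) + #s ≤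
      (Fintype.card F + 1) * Fintype.card F ^ (l + 1) := by
  obtain ⟨hu0, hu1, hu2⟩ := hu
  have hfr : finrank F (F ∙ u) = 1 := finrank_span_singleton hu0
  have hE : finrank F (V ⧸ (F ∙ u)) = (l + 1) + 2 := by
    have := Submodule.finrank_quotient_add_finrank (F ∙ u)
    omega
  have hQ : Blk (0 + 1) s p t f := hB
  have hC := (hQ.quot (F ∙ u) hfr).cover (qp_ne _ s p hu1)
  have h0 := coverA0 hE (qf_ne (F ∙ u) t f hf) hC
  have hpos : 0 < Fintype.card F ^ (l + 1) := by
    have := two_le_q (F := F); positivity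
  rw [← hαβ] at *
  have hm : #(qt (F ∙ u) t f) = α := by
    by_contra hne
    have h1 : #(qt (F ∙ u) t f) + 1 ≤ α := by omega
    have h2 := Nat.mul_le_mul_right (Fintype.card F ^ (l + 1)) h1
    nlinarith
  refine ⟨hE, hC, hm, ?_, ?_⟩
  · rw [hm] at h0
    nlinarith
  · rw [hm]; nlinarith

lemma tight_ker {u : V} (hu : Tight α s p t f u) (ψ : Dual F V) (hψ0 : ψ ≠ 0) (hψu : ψ u = 0)
    (hψ : ∀ j ∈ t, ∃ x, ψ x = 0 ∧ f j x ≠ 0) :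
    #(s.filter (fun i => ψ (p i) = 0)) = β * Fintype.card F ^ l ∨
    #(s.filter (fun i => ψ (p i) = 0)) = Fintype.card F ^ (l + 1) := by
  obtain ⟨hE, hC, hm, -, he⟩ := tight_pack hN hp hf hB hαβ hα hβ hs ht hu
  have hle : F ∙ u ≤ LinearMap.ker ψ := by
    rw [Submodule.span_singleton_le_iff_mem]; exact hψu
  set ψ' : Dual F (V ⧸ (F ∙ u)) := (F ∙ u).liftQ ψ hle with hψ'
  have hψ'a : ∀ x, ψ' ((F ∙ u).mkQ x) = ψ x := by intro x; simp [hψ']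
  have hψ'0 : ψ' ≠ 0 := by
    intro h0
    apply hψ0
    ext x
    rw [← hψ'a, h0]; simp
  have h1 := Module.Dual.finrank_ker_add_one_of_ne_zero (f := ψ') hψ'0
  have hY : ∀ j ∈ qt (F ∙ u) t f, ∃ x ∈ LinearMap.ker ψ', qf (F ∙ u) f j x ≠ 0 := by
    intro j hj
    obtain ⟨x, hx, hx2⟩ := hψ j (mem_filter.1 hj).1
    exact ⟨(F ∙ u).mkQ x, by rw [LinearMap.mem_ker, hψ'a, hx], by rw [qf_mk _ t f j hj]; exact hx2⟩
  have hfe : s.filter (fun i => ψ (p i) = 0) =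
      s.filter (fun i => (F ∙ u).mkQ (p i) ∈ LinearMap.ker ψ') := by
    apply filter_congr
    intro i _
    rw [LinearMap.mem_ker, hψ'a]
  rw [hfe]
  by_cases hprop : ∀ j1 ∈ qt (F ∙ u) t f, ∀ j2 ∈ qt (F ∙ u) t f, ∀ x ∈ LinearMap.ker ψ',
      qf (F ∙ u) f j1 x = 0 → qf (F ∙ u) f j2 x = 0
  · right
    obtain ⟨j0, hj0⟩ := card_pos.1 (by omega : 0 < #(qt (F ∙ u) t f))
    exact countProp hE (qf_ne _ t f hf) hC he (LinearMap.ker ψ') l (by omega) hY j0 hj0 hprop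
  · left
    push Not at hprop
    obtain ⟨j1, hj1, j2, hj2, x, hx, hx1, hx2⟩ := hprop
    have := countNP hE (qf_ne _ t f hf) hC he (LinearMap.ker ψ') l (by omega) hY j1 j2 hj1 hj2 x hx
      hx1 hx2
    rw [hm, ← hαβ] at this
    nlinarith

lemma tight_a {u : V} (hu : Tight α s p t f u) (j : κ) (hj : j ∈ qt (F ∙ u) t f) (i : ι)
    (hi : i ∈ s) : f j (p i) ≠ 0 := by
  obtain ⟨hE, hC, hm, -, he⟩ := tight_pack hN hp hf hB hαβ hα hβ hs ht hu
  have := (coverEq hE (qf_ne _ t f hf) hC j hj he).1 i hi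
  rwa [qf_mk _ t f j hj] at this

lemma tight_b {u : V} (hu : Tight α s p t f u) (i i' : ι)
    (hi : i ∈ s) (hi' : i' ∈ s) (hne : i ≠ i') (c : F) :
    (F ∙ u).mkQ (p i') ≠ c • (F ∙ u).mkQ (p i) := by
  obtain ⟨hE, hC, hm, -, he⟩ := tight_pack hN hp hf hB hαβ hα hβ hs ht hu
  obtain ⟨j0, hj0⟩ := card_pos.1 (by omega : 0 < #(qt (F ∙ u) t f))
  exact coverEq_b hE (qf_ne _ t f hf) hC j0 hj0 he i i' hi hi' hne c

lemma plane {u : V} (hu : Tight α s p t f u) (i i' : ι)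
    (hi : i ∈ s) (hi' : i' ∈ s) (hne : i ≠ i')
    (hT : α = 1 ∨ ∃ j1 ∈ qt (F ∙ u) t f, ∃ j2 ∈ qt (F ∙ u) t f,
      f j1 (p i) * f j2 (p i') ≠ f j2 (p i) * f j1 (p i')) :
    2 ≤ β ∧ (∀ j ∈ t, f j (p i) ≠ 0) ∧
    ∀ (ψ : Dual F V) (i1 i2 : ι), i1 ∈ s → i2 ∈ s → i1 ≠ i2 →
      (F ∙ u).mkQ (p i1) ∈ Submodule.span F {(F ∙ u).mkQ (p i), (F ∙ u).mkQ (p i')} →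
      (F ∙ u).mkQ (p i2) ∈ Submodule.span F {(F ∙ u).mkQ (p i), (F ∙ u).mkQ (p i')} →
      ψ (p i1) = 0 → ψ (p i2) = 0 → ψ (p i') = 0 := by
  obtain ⟨hE, hC, hm, hsc, he⟩ := tight_pack hN hp hf hB hαβ hα hβ hs ht hu
  have hb := tight_b hN hp hf hB hαβ hα hβ hs ht hu i i' hi hi' hne
  have haa := tight_a hN hp hf hB hαβ hα hβ hs ht hu
  set Y := Submodule.span F {(F ∙ u).mkQ (p i), (F ∙ u).mkQ (p i')} with hYd
  have hiY : (F ∙ u).mkQ (p i) ∈ Y := Submodule.subset_span (by simp)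
  have hiY' : (F ∙ u).mkQ (p i') ∈ Y := Submodule.subset_span (by simp)
  have hYr : finrank F Y = 0 + 2 := by
    rw [hYd, finrank_pair (qp_ne _ s p hu.2.1 i hi)]
    intro c hc
    exact hb c hc.symm
  have hYf : ∀ j ∈ qt (F ∙ u) t f, ∃ x ∈ Y, qf (F ∙ u) f j x ≠ 0 := by
    intro j hj
    exact ⟨_, hiY, by rw [qf_mk _ t f j hj]; exact haa j hj i hi⟩
  set W := Y.comap (F ∙ u).mkQ with hW
  have hWr : finrank F W = 1 + 2 := by
    rw [hW, finrank_comap_mkQ, hYr, finrank_span_singleton hu.1]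
  have hnW : #(s.filter (fun i => p i ∈ W)) = β := by
    change #(s.filter (fun i => (F ∙ u).mkQ (p i) ∈ Y)) = β
    rcases hT with h1 | ⟨j1, hj1, j2, hj2, h12⟩
    · obtain ⟨j0, hj0⟩ := card_pos.1 (by omega : 0 < #(qt (F ∙ u) t f))
      rw [countProp hE (qf_ne _ t f hf) hC he Y 0 hYr hYf j0 hj0]
      · simp; omega
      · intro j1 hj1 j2 hj2 x _ hx
        have : j1 = j2 := by
          apply card_le_one.1 (by omega : #(qt (F ∙ u) t f) ≤ 1) _ hj1 _ hj2
        rw [← this]; exact hx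
    · have := countNP hE (qf_ne _ t f hf) hC he Y 0 hYr hYf j1 j2 hj1 hj2
        (f j1 (p i') • (F ∙ u).mkQ (p i) - f j1 (p i) • (F ∙ u).mkQ (p i'))
        (Y.sub_mem (Y.smul_mem _ hiY) (Y.smul_mem _ hiY'))
        (by
          rw [map_sub, map_smul, map_smul, qf_mk _ t f j1 hj1, qf_mk _ t f j1 hj1]
          simp only [smul_eq_mul]; ring)
        (by
          rw [map_sub, map_smul, map_smul, qf_mk _ t f j2 hj2, qf_mk _ t f j2 hj2]
          simp only [smul_eq_mul]
          intro h0
          apply h12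
          linear_combination -h0)
      rw [hm] at this
      simp only [pow_zero, mul_one] at this
      omega
  have hWf : ∀ j ∈ t, ∃ x ∈ W, f j x ≠ 0 := by
    by_contra hcon
    push Not at hcon
    obtain ⟨j, hj, hjW⟩ := hcon
    have hjq : j ∈ qt (F ∙ u) t f := by
      refine mem_filter.2 ⟨hj, fun z hz => hjW z ?_⟩
      have : (F ∙ u).mkQ z = 0 := by simpa using hz
      rw [hW, Submodule.mem_comap, this]; exact zero_mem _
    exact haa j hjq i hi (hjW _ hiY)
  have hCW := hB.coverW W hWr hWf
  have hnz : ∀ a ∈ s.filter (fun i => p i ∈ W), wf W p a ≠ 0 := by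
    intro a ha
    obtain ⟨h1, h2⟩ := mem_filter.1 ha
    exact wf_ne W p a h2 (hp a h1)
  have heW : #(s.filter (fun i => p i ∈ W)) * Fintype.card F ^ 1 + #t ≤
      (Fintype.card F + 1) * Fintype.card F ^ 1 := by
    rw [hnW, pow_one, ← hαβ]; nlinarith
  have hiW : i ∈ s.filter (fun i => p i ∈ W) := mem_filter.2 ⟨hi, hiY⟩
  have hiW' : i' ∈ s.filter (fun i => p i ∈ W) := mem_filter.2 ⟨hi', hiY'⟩
  refine ⟨?_, ?_, ?_⟩
  · rw [← hnW]
    exact one_lt_card.2 ⟨i, hiW, i', hiW', hne⟩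
  · intro j hj
    have := (coverEq (finrank_dualW W hWr) hnz hCW i hiW heW).1 j hj
    rw [wf_apply W p i hiY] at this
    exact this
  · intro ψ i1 i2 hi1 hi2 hne12 h1 h2 hψ1 hψ2
    have := coverEq_triple (finrank_dualW W hWr) hnz hCW i' hiW' heW i1 i2
      (mem_filter.2 ⟨hi1, h1⟩) (mem_filter.2 ⟨hi2, h2⟩) hne12 (ψ.domRestrict W)
      (by rw [wf_apply W p i1 h1]; exact hψ1) (by rw [wf_apply W p i2 h2]; exact hψ2)
    rw [wf_apply W p i' hiY'] at this
    exact this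

end base

lemma card_dual1 [Fintype (Dual F V)] {n : ℕ} (hN : finrank F V = n + 1) (v : V) (hv : v ≠ 0) :
    #(univ.filter (fun ψ : Dual F V => ψ v = 0)) = Fintype.card F ^ n := by
  have hinj : Function.Injective (Dual.eval F V) := by
    rw [← LinearMap.ker_eq_bot]; exact Module.eval_ker F V
  have := cardK (⊤ : Submodule F (Dual F V)) (Dual.eval F V v) n
    (by rw [finrank_top, Subspace.dual_finrank_eq, hN])
    (exists_ne (fun h => hv (hinj (h.trans (map_zero _).symm))))
  simpa using this

lemma card_dual2 [Fintype (Dual F V)] {n : ℕ} (hN : finrank F V = n + 2) (v w : V) (hv : v ≠ 0)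
    (hw : ∀ c : F, w ≠ c • v) :
    #(univ.filter (fun ψ : Dual F V => ψ v = 0 ∧ ψ w = 0)) = Fintype.card F ^ n := by
  have hinj : Function.Injective (Dual.eval F V) := by
    rw [← LinearMap.ker_eq_bot]; exact Module.eval_ker F V
  have h0 := Module.Dual.finrank_ker_add_one_of_ne_zero (f := Dual.eval F V v)
    (fun h => hv (hinj (h.trans (map_zero _).symm)))
  rw [Subspace.dual_finrank_eq] at h0
  have := cardK (LinearMap.ker (Dual.eval F V v)) (Dual.eval F V w) n (by omega) (by
    have : w ∉ F ∙ v := by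
      intro hm
      obtain ⟨c, hc⟩ := Submodule.mem_span_singleton.1 hm
      exact hw c hc.symm
    obtain ⟨θ, h1, h2⟩ := Submodule.exists_le_ker_of_notMem this
    exact ⟨θ, h2 (Submodule.mem_span_singleton_self _), h1⟩)
  simpa using this

lemma moment1 [Fintype (Dual F V)] {n : ℕ} (hN : finrank F V = n + 1) {s : Finset ι} {p : ι → V}
    (hp : ∀ i ∈ s, p i ≠ 0) :
    ∑ ψ : Dual F V, #(s.filter (fun i => ψ (p i) = 0)) = #s * Fintype.card F ^ n := by
  have := sum_card_bipartiteAbove_eq_sum_card_bipartiteBelow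
    (fun (ψ : Dual F V) (i : ι) => ψ (p i) = 0) (s := univ) (t := s)
  simp only [bipartiteAbove, bipartiteBelow] at this
  rw [this, ← smul_eq_mul, ← sum_const]
  apply sum_congr rfl
  intro i hi
  exact card_dual1 hN _ (hp i hi)

lemma moment2 [Fintype (Dual F V)] {n : ℕ} (hN : finrank F V = n + 2) {s : Finset ι} {p : ι → V}
    (hp : ∀ i ∈ s, p i ≠ 0) (hnp : ∀ i ∈ s, ∀ i' ∈ s, i ≠ i' → ∀ c : F, p i' ≠ c • p i) :
    ∑ ψ : Dual F V, #(s.filter (fun i => ψ (p i) = 0)) ^ 2 + #s * Fintype.card F ^ n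
      = #s * Fintype.card F ^ (n + 1) + #s * #s * Fintype.card F ^ n := by
  have h1 : ∀ ψ : Dual F V, #(s.filter (fun i => ψ (p i) = 0)) ^ 2 =
      #((s ×ˢ s).filter (fun a => ψ (p a.1) = 0 ∧ ψ (p a.2) = 0)) := by
    intro ψ
    rw [filter_product (s := s) (t := s) (fun i => ψ (p i) = 0) (fun i => ψ (p i) = 0), card_product, sq]
  simp only [h1]
  have := sum_card_bipartiteAbove_eq_sum_card_bipartiteBelow
    (fun (ψ : Dual F V) (a : ι × ι) => ψ (p a.1) = 0 ∧ ψ (p a.2) = 0) (s := univ) (t := s ×ˢ s)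
  simp only [bipartiteAbove, bipartiteBelow] at this
  rw [this, sum_product]
  have h2 : ∀ i ∈ s, ∑ i' ∈ s, #(univ.filter (fun ψ : Dual F V => ψ (p i) = 0 ∧ ψ (p i') = 0)) +
      Fintype.card F ^ n = Fintype.card F ^ (n + 1) + #s * Fintype.card F ^ n := by
    intro i hi
    rw [← add_sum_erase _ _ hi]
    have h3 : ∑ i' ∈ s.erase i, #(univ.filter (fun ψ : Dual F V => ψ (p i) = 0 ∧ ψ (p i') = 0)) =
       #(s.erase i) * Fintype.card F ^ n := by
      rw [← smul_eq_mul, ← sum_const]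
      apply sum_congr rfl
      intro i' hi'
      obtain ⟨hne, hi'⟩ := mem_erase.1 hi'
      exact card_dual2 hN _ _ (hp i hi) (hnp i hi i' hi' hne.symm)
    rw [h3, ← card_erase_add_one hi]
    simp only [and_self]
    rw [card_dual1 (n := n + 1) (by omega) _ (hp i hi)]
    ring
  have h4 := sum_congr (s₁ := s) rfl h2
  rw [sum_add_distrib, sum_const, sum_const, smul_eq_mul, smul_eq_mul] at h4
  rw [h4]; ring

end
end BS
namespace BS
open Finset Module
open scoped Classical
set_option linter.unusedSectionVars false

section
variable {F : Type} [Field F] [Fintype F] {V : Type} [AddCommGroup V] [Module F V]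
  [FiniteDimensional F V] {ι κ : Type}

lemma ar5 {β α q Q S M1 M2 A P : ℤ} (hq : 2 ≤ q) (hβ : 2 ≤ β) (hQ : 1 ≤ Q) (hαβ : α + β = q + 1)
    (hS : S = β * (Q * q))
    (h1 : M1 = S * (Q * q ^ 3)) (h2 : M2 + S * (Q * q ^ 2) = S * (Q * q ^ 3) + S * S * (Q * q ^ 2))
    (hA : A = (S - β * Q) * (S - Q * q))
    (hP : P ≤ (q - 1) * (α * q))
    (h : M2 - (β * Q + Q * q) * M1 + (β * Q) * (Q * q) * (Q * q ^ 4) ≤ A + P * ((β * Q) * (Q * q))) :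
    False := by
  have e1 : M2 - (β * Q + Q * q) * M1 + (β * Q) * (Q * q) * (Q * q ^ 4) =
      β * Q ^ 2 * q * ((q - 1) * q ^ 2) := by
    have : M2 = S * (Q * q ^ 3) + S * S * (Q * q ^ 2) - S * (Q * q ^ 2) := by linarith
    rw [this, h1, hS]; ring
  have e2 : A = β * Q ^ 2 * q * ((q - 1) * (β - 1)) := by rw [hA, hS]; ring
  have hX : 0 < β * Q ^ 2 * q := by positivity
  have e3 : P * ((β * Q) * (Q * q)) ≤ β * Q ^ 2 * q * ((q - 1) * (α * q)) := by
    have := mul_le_mul_of_nonneg_left hP hX.le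
    linarith
  rw [e1, e2] at h
  have h4 : β * Q ^ 2 * q * ((q - 1) * q ^ 2) ≤
      β * Q ^ 2 * q * ((q - 1) * (β - 1) + (q - 1) * (α * q)) := by
    rw [mul_add]; linarith
  have h5 := le_of_mul_le_mul_left h4 hX
  have h6 : (q - 1) * q ^ 2 ≤ (q - 1) * ((β - 1) + α * q) := by linarith
  have h7 := le_of_mul_le_mul_left h6 (by linarith)
  have : α = q + 1 - β := by linarith
  subst this
  nlinarith

section base
variable {l α β : ℕ} (hN : finrank F V = l + 4) {s : Finset ι} {p : ι → V}
    {t : Finset κ} {f : κ → Dual F V} (hp : ∀ i ∈ s, p i ≠ 0) (hf : ∀ j ∈ t, f j ≠ 0)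
    (hB : Blk 1 s p t f) (hαβ : α + β = Fintype.card F + 1) (hα : 1 ≤ α) (hβ : 1 ≤ β)
    (hs : #s ≤ β * Fintype.card F ^ (l + 1)) (ht : #t ≤ α * Fintype.card F)
include hN hp hf hB hαβ hα hβ hs ht

lemma second_moment {u0 : V} (hu0 : Tight α s p t f u0) (hβ2 : 2 ≤ β)
    (hI : ∀ i ∈ s, ∀ j ∈ t, f j (p i) ≠ 0) :
    ∃ ψ : Dual F V, ψ ≠ 0 ∧ (∀ j ∈ t, ∃ x, ψ x = 0 ∧ f j x ≠ 0) ∧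
      ∀ u, Tight α s p t f u → ψ u ≠ 0 := by
  have := Module.finite_of_finite F (M := Dual F V)
  have := Fintype.ofFinite (Dual F V)
  obtain ⟨-, -, -, hsc, -⟩ := tight_pack hN hp hf hB hαβ hα hβ hs ht hu0
  have hnp : ∀ i ∈ s, ∀ i' ∈ s, i ≠ i' → ∀ c : F, p i' ≠ c • p i := by
    intro i hi i' hi' hne c hc
    apply tight_b hN hp hf hB hαβ hα hβ hs ht hu0 i i' hi hi' hne c
    rw [hc, map_smul]
  by_contra hno
  push Not at hno
  have m1 := moment1 (n := l + 3) (by omega) hp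
  have m2 := moment2 (n := l + 2) (by omega) hp hnp
  set q := Fintype.card F with hqd
  have hq : 2 ≤ q := two_le_q (F := F)
  set Q : ℕ := q ^ l with hQd
  have hQz : (q : ℤ) ^ l = (Q : ℤ) := by rw [hQd]; push_cast; rfl
  have hQ : 1 ≤ Q := Nat.one_le_pow _ _ (by omega)
  set Ps : Finset (Dual F V) := t.biUnion (fun j => (univ.erase (0 : F)).image (fun c => c • f j))
    with hPs
  have hPc : #Ps ≤ #t * (q - 1) := by
    apply card_biUnion_le_card_mul
    intro i _
    refine card_image_le.trans ?_
    rw [card_erase_of_mem (mem_univ _), card_univ]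
  set n : Dual F V → ℕ := fun ψ => #(s.filter (fun i => ψ (p i) = 0)) with hn
  set A : ℤ := ((#s : ℤ) - β * Q) * ((#s : ℤ) - Q * q) with hA
  have hA0 : 0 ≤ A := by
    have e : (#s : ℤ) = β * (Q * q) := by
      rw [hsc, pow_succ]; push_cast; rw [hQz]
    rw [hA, e]
    apply mul_nonneg
    · have : (0 : ℤ) ≤ β * Q * (q - 1) := by
        apply mul_nonneg (by positivity); zify at hq; linarith
      linarith
    · have : (0 : ℤ) ≤ Q * q * (β - 1) := by
        apply mul_nonneg (by positivity); zify at hβ2; linarith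
      linarith
  have hterm : ∀ ψ : Dual F V, ((n ψ : ℤ) - β * Q) * ((n ψ : ℤ) - Q * q) ≤
      (if ψ = 0 then A else 0) + (if ψ ∈ Ps then (β * Q : ℤ) * (Q * q) else 0) := by
    intro ψ
    have hpos : (0 : ℤ) ≤ (β * Q : ℤ) * (Q * q) := by positivity
    by_cases h0 : ψ = 0
    · subst h0
      have : n 0 = #s := by simp [hn]
      rw [this, if_pos rfl]
      split_ifs <;> linarith
    rw [if_neg h0, zero_add]
    by_cases h1 : ψ ∈ Ps
    · rw [if_pos h1]
      obtain ⟨j, hj, h2⟩ := mem_biUnion.1 h1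
      obtain ⟨c, hc, rfl⟩ := mem_image.1 h2
      have hc0 : c ≠ 0 := (mem_erase.1 hc).1
      have : n (c • f j) = 0 := by
        rw [hn]; simp only
        rw [card_eq_zero]
        apply filter_false_of_mem
        intro i hi
        simp [hc0, hI i hi j hj]
      rw [this]
      push_cast
      linarith
    · rw [if_neg h1]
      have h2 : ∀ j ∈ t, ∃ x, ψ x = 0 ∧ f j x ≠ 0 := by
        by_contra hcon
        push Not at hcon
        obtain ⟨j, hj, h3⟩ := hcon
        obtain ⟨c, hc⟩ := propY ⊤ ψ (f j) (exists_ne h0) (fun z _ hz => h3 z hz)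
        have hc0 : c ≠ 0 := by
          rintro rfl
          apply hf j hj
          ext x; simpa using hc x trivial
        apply h1
        refine mem_biUnion.2 ⟨j, hj, mem_image.2 ⟨c⁻¹, by simp [hc0], ?_⟩⟩
        ext x
        rw [LinearMap.smul_apply, hc x trivial, smul_eq_mul]
        field_simp
      obtain ⟨u, hu, hu2⟩ := hno ψ h0 h2
      rcases tight_ker hN hp hf hB hαβ hα hβ hs ht hu ψ h0 hu2 h2 with h4 | h4
      · have : (n ψ : ℤ) = β * Q := by
          have : n ψ = β * Q := h4
          rw [this]; push_cast; ring
        rw [this]; simp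
      · have : (n ψ : ℤ) = Q * q := by
          have : n ψ = Q * q := by rw [← pow_succ]; exact h4
          rw [this]; push_cast; ring
        rw [this]; simp
  have hsum := sum_le_sum (s := univ) (fun ψ _ => hterm ψ)
  rw [sum_add_distrib, sum_ite_eq' univ (0 : Dual F V) (fun _ => A), if_pos (mem_univ _),
    ← sum_filter, sum_const, filter_mem_eq_inter, univ_inter, nsmul_eq_mul] at hsum
  have hexp : ∑ ψ : Dual F V, ((n ψ : ℤ) - β * Q) * ((n ψ : ℤ) - Q * q) =
      ((∑ ψ : Dual F V, n ψ ^ 2 : ℕ) : ℤ) - (β * Q + Q * q) * ((∑ ψ : Dual F V, n ψ : ℕ) : ℤ) +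
        (β * Q) * (Q * q) * (Q * q ^ 4) := by
    have hc : ((Fintype.card (Dual F V) : ℕ) : ℤ) = Q * q ^ 4 := by
      rw [Module.card_eq_pow_finrank (K := F), Subspace.dual_finrank_eq, hN, pow_add]
      push_cast; rfl
    rw [← hc]
    push_cast
    have hconst : ∀ X : ℤ, X * ((Fintype.card (Dual F V) : ℕ) : ℤ) = ∑ _ψ : Dual F V, X := by
      intro X; simp [mul_comm]
    rw [mul_sum, ← sum_sub_distrib, hconst, ← sum_add_distrib]
    apply sum_congr rfl
    intro ψ _
    ring
  rw [hexp] at hsum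
  refine ar5 (q := q) (β := β) (α := α) (Q := Q) (S := #s) (A := A) (P := #Ps)
    (by exact_mod_cast hq) (by exact_mod_cast hβ2) (by exact_mod_cast hQ)
    (by exact_mod_cast hαβ) ?_ ?_ ?_ hA ?_ hsum
  · rw [hsc, pow_succ]; push_cast; rw [hQz]
  · rw [m1, pow_add]; push_cast; rw [hQz]
  · have := m2
    zify at this
    rw [pow_add, show l + 2 + 1 = l + 3 by omega, pow_add] at this
    push_cast at this ⊢
    exact this
  · have h1 : #Ps ≤ α * q * (q - 1) := hPc.trans (Nat.mul_le_mul_right _ ht)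
    zify [show 1 ≤ q by omega] at h1
    linarith

lemma H_point (ψ : Dual F V) (hψ0 : ψ ≠ 0) (hψ : ∀ j ∈ t, ∃ x, ψ x = 0 ∧ f j x ≠ 0)
    (hψt : ∀ u, Tight α s p t f u → ψ u ≠ 0) : ∃ i ∈ s, ψ (p i) = 0 := by
  have := Module.finite_of_finite F (M := V)
  have := Fintype.ofFinite V
  by_contra hno
  push Not at hno
  set H := LinearMap.ker ψ with hH
  have hHr : finrank F H = (l + 2) + 1 := by
    have := Module.Dual.finrank_ker_add_one_of_ne_zero (f := ψ) hψ0
    rw [hH]; omega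
  have h1 := sum_card_bipartiteAbove_eq_sum_card_bipartiteBelow (fun (x : V) (j : κ) => f j x = 0)
      (s := univ.filter (fun x : V => x ∈ H)) (t := t)
  simp only [bipartiteAbove, bipartiteBelow, filter_filter] at h1
  have h2 : ∑ j ∈ t, #(univ.filter (fun x : V => x ∈ H ∧ f j x = 0)) =
      #t * Fintype.card F ^ (l + 2) := by
    rw [← smul_eq_mul, ← sum_const]
    apply sum_congr rfl
    intro j hj
    exact cardK H (f j) (l + 2) hHr (hψ j hj)
  have h3 : ∑ v ∈ (univ.filter (fun x : V => x ∈ H)).erase 0, (α + 1) ≤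
      ∑ v ∈ univ.filter (fun x : V => x ∈ H), #(t.filter (fun j => f j v = 0)) := by
    refine (sum_le_sum ?_).trans (sum_le_sum_of_subset (erase_subset _ _))
    intro v hv
    obtain ⟨hv0, hv⟩ := mem_erase.1 hv
    have hv := (mem_filter.1 hv).2
    by_contra hc
    apply hψt v _ hv
    refine ⟨hv0, ?_, ?_⟩
    · intro i hi hm
      obtain ⟨c, hc⟩ := Submodule.mem_span_singleton.1 hm
      apply hno i hi
      rw [← hc, map_smul, LinearMap.mem_ker.1 hv, smul_zero]
    · rw [qt_span]; omega
  rw [h1, h2, sum_const, smul_eq_mul, card_erase_of_mem (by simp), card_sub, hHr] at h3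
  have hq := two_le_q (F := F)
  generalize Fintype.card F = q at *
  have hα2 : α ≤ q := by omega
  have h4 : #t * q ^ (l + 2) ≤ α * q ^ (l + 2 + 1) := by
    rw [pow_succ _ (l + 2)]
    calc #t * q ^ (l + 2) ≤ α * q * q ^ (l + 2) := Nat.mul_le_mul_right _ ht
      _ = _ := by ring
  have h5 : q ^ 3 ≤ q ^ (l + 2 + 1) := Nat.pow_le_pow_right (by omega) (by omega)
  have h6 : q + 1 < q ^ 3 := by
    have e1 : q ^ 3 = q * q * q := by ring
    have e2 : 2 * q ≤ q * q := Nat.mul_le_mul_right _ hq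
    have e3 : q * q * 2 ≤ q * q * q := Nat.mul_le_mul_left _ hq
    omega
  obtain ⟨m, hm⟩ : ∃ m, q ^ (l + 2 + 1) = m + 1 := ⟨q ^ (l + 2 + 1) - 1, by omega⟩
  rw [hm] at h3 h4 h5
  rw [Nat.add_sub_cancel] at h3
  nlinarith

lemma H_line (ψ : Dual F V) 
    (hψt : ∀ u, Tight α s p t f u → ψ u ≠ 0) (hI : ∀ i ∈ s, ∀ j ∈ t, f j (p i) ≠ 0)
    (i : ι) (hi : i ∈ s) (hψi : ψ (p i) = 0) (z : V) (hz : ψ z = 0) (hzi : ∀ c : F, z ≠ c • p i) :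
    ∃ i' ∈ s, i' ≠ i ∧ p i' ∈ Submodule.span F {p i, z} := by
  by_contra hno
  push Not at hno
  have h1 := sum_card_bipartiteAbove_eq_sum_card_bipartiteBelow
      (fun (a : F) (j : κ) => f j (z + a • p i) = 0) (s := univ) (t := t)
  simp only [bipartiteAbove, bipartiteBelow] at h1
  have h2 : ∑ j ∈ t, #(univ.filter (fun a : F => f j (z + a • p i) = 0)) ≤ #t * 1 := by
    rw [← smul_eq_mul, ← sum_const]
    apply sum_le_sum
    intro j hj
    rw [card_le_one]
    intro a ha b hb
    have ha := (mem_filter.1 ha).2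
    have hb := (mem_filter.1 hb).2
    simp only [map_add, map_smul, smul_eq_mul] at ha hb
    have : (a - b) * f j (p i) = 0 := by linear_combination ha - hb
    rcases mul_eq_zero.1 this with h | h
    · exact sub_eq_zero.1 h
    · exact absurd h (hI i hi j hj)
  have h3 : ∑ a : F, (α + 1) ≤ ∑ a : F, #(t.filter (fun j => f j (z + a • p i) = 0)) := by
    apply sum_le_sum
    intro a _
    by_contra hc
    apply hψt (z + a • p i) _ (by simp [hz, hψi])
    have hw : ∀ c : F, z + a • p i ≠ c • p i := by
      intro c hc
      apply hzi (c - a)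
      rw [sub_smul, ← hc, add_sub_cancel_right]
    refine ⟨fun h0 => hw 0 (by rw [h0, zero_smul]), ?_, ?_⟩
    · intro i' hi' hm
      obtain ⟨c, hc⟩ := Submodule.mem_span_singleton.1 hm
      have hc0 : c ≠ 0 := by rintro rfl; exact hp i' hi' (by rw [← hc]; simp)
      by_cases hii : i' = i
      · subst hii
        apply hw c⁻¹
        conv_rhs => rw [← hc]
        rw [smul_smul, inv_mul_cancel₀ hc0, one_smul]
      · apply hno i' hi' hii
        rw [← hc]
        apply Submodule.smul_mem
        apply Submodule.add_mem
        · exact Submodule.subset_span (by simp)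
        · exact Submodule.smul_mem _ _ (Submodule.subset_span (by simp))
    · rw [qt_span]; omega
  rw [h1, sum_const, smul_eq_mul, card_univ] at h3
  have hq := two_le_q (F := F)
  nlinarith

theorem base_case : ∃ ψ : Dual F V, ψ ≠ 0 ∧ ∀ i ∈ s, ψ (p i) = 0 := by
  obtain ⟨u, hu⟩ := tight_exists hN hp hf hB hαβ hα hβ hs ht
  obtain ⟨hE, hC, hm, hsc, he⟩ := tight_pack hN hp hf hB hαβ hα hβ hs ht hu
  have haa := tight_a hN hp hf hB hαβ hα hβ hs ht hu
  have hpl := plane hN hp hf hB hαβ hα hβ hs ht hu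
  have hb := tight_b hN hp hf hB hαβ hα hβ hs ht hu
  set T : ι → ι → Prop := fun i i' => α = 1 ∨ ∃ j1 ∈ qt (F ∙ u) t f, ∃ j2 ∈ qt (F ∙ u) t f,
      f j1 (p i) * f j2 (p i') ≠ f j2 (p i) * f j1 (p i') with hT
  have hs2 : 1 < #s := by
    have hq := two_le_q (F := F)
    rw [hsc]
    calc 1 < Fintype.card F ^ 1 := by rw [pow_one]; omega
      _ ≤ Fintype.card F ^ (l + 1) := Nat.pow_le_pow_right (by omega) (by omega)
      _ ≤ _ := Nat.le_mul_of_pos_left _ hβ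
  by_cases hcase : ∃ i ∈ s, ∀ i' ∈ s, i' ≠ i → ¬ T i i'
  · obtain ⟨i, hi, hnT⟩ := hcase
    obtain ⟨i0, hi0, hne0⟩ := exists_mem_ne hs2 i
    have hα1 : α ≠ 1 := fun h => hnT i0 hi0 hne0 (Or.inl h)
    obtain ⟨j1, hj1, j2, hj2, hj12⟩ := one_lt_card.1 (by omega : 1 < #(qt (F ∙ u) t f))
    refine ⟨f j2 (p i) • f j1 - f j1 (p i) • f j2, ?_, ?_⟩
    · intro h0
      obtain ⟨x, hx1, hx2⟩ := (coverEq hE (qf_ne _ t f hf) hC j2 hj2 he).2.1 j1 hj1 hj12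
      obtain ⟨x, rfl⟩ := (F ∙ u).mkQ_surjective x
      rw [qf_mk _ t f j1 hj1] at hx1
      rw [qf_mk _ t f j2 hj2] at hx2
      have := LinearMap.congr_fun h0 x
      simp [hx1, hx2] at this
      exact haa j1 hj1 i hi this
    · intro i' hi'
      by_cases hii : i' = i
      · subst hii
        simp only [LinearMap.sub_apply, LinearMap.smul_apply, smul_eq_mul]; ring
      · have := hnT i' hi' hii
        simp only [hT, not_or] at this
        have h2 := this.2
        push Not at h2
        have h3 := h2 j1 hj1 j2 hj2
        simp only [LinearMap.sub_apply, LinearMap.smul_apply, smul_eq_mul]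
        rw [h3]; ring
  · push Not at hcase
    have hI : ∀ i ∈ s, ∀ j ∈ t, f j (p i) ≠ 0 := by
      intro i hi
      obtain ⟨i', hi', hne, h⟩ := hcase i hi
      exact (hpl i i' hi hi' hne.symm h).2.1
    obtain ⟨i0, hi0⟩ := card_pos.1 (by omega : 0 < #s)
    have hβ2 : 2 ≤ β := by
      obtain ⟨i', hi', hne, h⟩ := hcase i0 hi0
      exact (hpl i0 i' hi0 hi' hne.symm h).1
    obtain ⟨ψ, hψ0, hψ1, hψt⟩ := second_moment hN hp hf hB hαβ hα hβ hs ht hu hβ2 hI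
    obtain ⟨i, hi, hψi⟩ := H_point hN hp hf hB hαβ hα hβ hs ht ψ hψ0 hψ1 hψt
    have hψu := hψt u hu
    have hmku : (F ∙ u).mkQ u = 0 := by simp
    have step : ∀ i ∈ s, ψ (p i) = 0 → ∀ i' ∈ s, i' ≠ i → T i i' → ψ (p i') = 0 := by
      intro i hi hψi i' hi' hne hTT
      set z := p i' - (ψ (p i') / ψ u) • u with hz
      have hmz : (F ∙ u).mkQ z = (F ∙ u).mkQ (p i') := by
        rw [hz, map_sub, map_smul, hmku, smul_zero, sub_zero]
      obtain ⟨i2, hi2, hne2, hm2⟩ := H_line hN hp hf hB hαβ hα hβ hs ht ψ hψt hI i hi hψi z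
        (by rw [hz]; simp [hψu]) (by
          intro c hc
          apply hb i i' hi hi' hne.symm c
          rw [← hmz, hc, map_smul])
      obtain ⟨a, b, hab⟩ := Submodule.mem_span_pair.1 hm2
      refine (hpl i i' hi hi' hne.symm hTT).2.2 ψ i i2 hi hi2 hne2.symm
        (Submodule.subset_span (by simp)) ?_ hψi ?_
      · rw [← hab, map_add, map_smul, map_smul, hmz]
        exact Submodule.mem_span_pair.2 ⟨a, b, rfl⟩
      · rw [← hab, map_add, map_smul, map_smul, hψi, hz]
        simp [hψu]
    refine ⟨ψ, hψ0, fun i' hi' => ?_⟩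
    by_cases hii : i' = i
    · rw [hii]; exact hψi
    by_cases hTT : T i i'
    · exact step i hi hψi i' hi' hii hTT
    obtain ⟨z, hz, hzi, hTz⟩ := hcase i hi
    have hψz := step i hi hψi z hz hzi hTz
    by_cases hzz : i' = z
    · rw [hzz]; exact hψz
    by_cases hTT2 : T z i'
    · exact step z hz hψz i' hi' hzz hTT2
    exfalso
    simp only [hT, not_or] at hTT hTT2
    obtain ⟨hα1, hA⟩ := hTT
    obtain ⟨-, hB2⟩ := hTT2
    push Not at hA hB2
    rcases hTz with h | ⟨j1, hj1, j2, hj2, h12⟩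
    · exact hα1 h
    · apply h12
      have e1 := hA j1 hj1 j2 hj2
      have e2 := hB2 j1 hj1 j2 hj2
      have e3 := haa j1 hj1 i' hi'
      apply mul_right_cancel₀ e3
      linear_combination (-f j1 (p i)) * e2 + f j1 (p z) * e1

end base
end
end BS
namespace BS
open Finset Module
open scoped Classical
set_option linter.unusedSectionVars false

section
variable {F : Type} [Field F] [Fintype F] {V : Type} [AddCommGroup V] [Module F V]
  [FiniteDimensional F V] {ι κ : Type}

lemma enlarge (W : Submodule F V) (m : ℕ) (h1 : finrank F W ≤ m) (h2 : m ≤ finrank F V) :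
    ∃ W' : Submodule F V, W ≤ W' ∧ finrank F W' = m := by
  induction m, h1 using Nat.le_induction with
  | base => exact ⟨W, le_rfl, rfl⟩
  | succ m hm ih =>
    obtain ⟨W', hW, hW'⟩ := ih (by omega)
    have hlt : W' < ⊤ := by
      rw [lt_top_iff_ne_top]
      rintro rfl
      rw [finrank_top] at hW'
      omega
    obtain ⟨x, -, hx⟩ := SetLike.exists_of_lt hlt
    refine ⟨W' ⊔ F ∙ x, hW.trans le_sup_left, ?_⟩
    have hx0 : x ≠ 0 := by rintro rfl; exact hx (zero_mem _)
    have h3 := Submodule.finrank_sup_add_finrank_inf_eq W' (F ∙ x)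
    have h4 : W' ⊓ (F ∙ x) = ⊥ := by
      rw [eq_bot_iff]
      rintro y ⟨hy1, hy2⟩
      obtain ⟨c, rfl⟩ := Submodule.mem_span_singleton.1 hy2
      by_cases hc : c = 0
      · simp [hc]
      · exact absurd ((Submodule.smul_mem_iff _ hc).1 hy1) hx
    rw [h4, finrank_bot, finrank_span_singleton hx0, hW'] at h3
    omega

lemma avoid {k l α : ℕ} (hN : finrank F V = k + l + 5) {t : Finset κ} {f : κ → Dual F V}
    (hf : ∀ j ∈ t, f j ≠ 0) (ht : #t ≤ α * Fintype.card F ^ (k + 2)) (S : Submodule F V)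
    (hS : finrank F S = l + 4) :
    ∃ v, v ∉ S ∧ #(t.filter (fun j => f j v = 0)) ≤ α * Fintype.card F ^ (k + 1) := by
  have := Module.finite_of_finite F (M := V)
  have := Fintype.ofFinite V
  by_contra hno
  push Not at hno
  have hq := two_le_q (F := F)
  have h1 := sum_card_bipartiteAbove_eq_sum_card_bipartiteBelow (fun (x : V) (j : κ) => f j x = 0)
      (s := univ.filter (fun x : V => x ∉ S)) (t := t)
  simp only [bipartiteAbove, bipartiteBelow, filter_filter] at h1
  obtain ⟨D, hD⟩ : ∃ D, Fintype.card F ^ (k + l + 4) = Fintype.card F ^ (l + 3) + (D + 1) := by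
    have : Fintype.card F ^ (l + 3) < Fintype.card F ^ (k + l + 4) :=
      Nat.pow_lt_pow_right (by omega) (by omega)
    exact ⟨Fintype.card F ^ (k + l + 4) - Fintype.card F ^ (l + 3) - 1, by omega⟩
  have h2 : ∑ j ∈ t, #(univ.filter (fun x : V => x ∉ S ∧ f j x = 0)) ≤ #t * (D + 1) := by
    rw [← smul_eq_mul, ← sum_const]
    apply sum_le_sum
    intro j hj
    have e1 := cardK ⊤ (f j) (k + l + 4) (by rw [finrank_top, hN]) (exists_ne (hf j hj))
    have e2 : Fintype.card F ^ (l + 3) ≤ #(univ.filter (fun x : V => x ∈ S ∧ f j x = 0)) := by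
      by_cases hx : ∃ x ∈ S, f j x ≠ 0
      · rw [cardK S (f j) (l + 3) hS hx]
      · push Not at hx
        have : univ.filter (fun x : V => x ∈ S ∧ f j x = 0) = univ.filter (fun x : V => x ∈ S) := by
          ext x; simp only [mem_filter, mem_univ, true_and]
          exact ⟨fun h => h.1, fun h => ⟨h, hx x h⟩⟩
        rw [this, card_sub, hS]
        exact Nat.pow_le_pow_right (by omega) (by omega)
    have e3 := card_filter_add_card_filter_not (s := univ.filter (fun x : V => f j x = 0))
      (fun x => x ∈ S)
    simp only [filter_filter] at e3
    simp only [Submodule.mem_top, true_and] at e1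
    simp only [and_comm (b := f j _ = 0)] at e2 ⊢
    omega
  have h3 : ∑ v ∈ univ.filter (fun x : V => x ∉ S), (α * Fintype.card F ^ (k + 1) + 1) ≤
      ∑ v ∈ univ.filter (fun x : V => x ∉ S), #(t.filter (fun j => f j v = 0)) := by
    apply sum_le_sum
    intro v hv
    exact hno v (mem_filter.1 hv).2
  have h4 : #(univ.filter (fun x : V => x ∉ S)) = Fintype.card F * (D + 1) := by
    have e3 := card_filter_add_card_filter_not (s := (univ : Finset V)) (fun x => x ∈ S)
    rw [card_sub, hS, card_univ, Module.card_eq_pow_finrank (K := F) (V := V), hN] at e3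
    have e4 : Fintype.card F ^ (k + l + 5) = Fintype.card F * Fintype.card F ^ (k + l + 4) := by ring
    have e5 : Fintype.card F ^ (l + 4) = Fintype.card F * Fintype.card F ^ (l + 3) := by ring
    rw [e4, e5, hD, mul_add] at e3
    omega
  rw [h1, sum_const, smul_eq_mul, h4] at h3
  have h5 : #t * (D + 1) ≤ α * Fintype.card F ^ (k + 2) * (D + 1) := Nat.mul_le_mul_right _ ht
  have h6 : Fintype.card F * (D + 1) * (α * Fintype.card F ^ (k + 1) + 1) =
    α * Fintype.card F ^ (k + 2) * (D + 1) + Fintype.card F * (D + 1) := by ring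
  have h7 : 0 < Fintype.card F * (D + 1) := by positivity
  omega

theorem main_ind {l α β : ℕ} (hαβ : α + β = Fintype.card F + 1) (hα : 1 ≤ α) (hβ : 1 ≤ β)
    (s : Finset ι) (hs : #s ≤ β * Fintype.card F ^ (l + 1)) (k : ℕ) :
    ∀ {V : Type} [AddCommGroup V] [Module F V] [FiniteDimensional F V]
    (_ : finrank F V = k + l + 4) (p : ι → V)
    (t : Finset κ) (f : κ → Dual F V) (_ : ∀ i ∈ s, p i ≠ 0) (_ : ∀ j ∈ t, f j ≠ 0)
    (_ : Blk (k + 1) s p t f)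
    (_ : #t ≤ α * Fintype.card F ^ (k + 1)),
    ∃ S : Submodule F V, finrank F S = l + 3 ∧ ∀ i ∈ s, p i ∈ S := by
  induction k with
  | zero =>
    intro V _ _ _ hN p t f hp hf hB ht
    obtain ⟨ψ, h0, h1⟩ := base_case (l := l) (by omega) hp hf hB hαβ hα hβ hs (by simpa using ht)
    refine ⟨LinearMap.ker ψ, ?_, h1⟩
    have := Module.Dual.finrank_ker_add_one_of_ne_zero (f := ψ) h0
    omega
  | succ k ih =>
    intro V _ _ _ hN p t f hp hf hB ht
    have hq := two_le_q (F := F)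
    have key : ∀ u : V, u ≠ 0 → (∀ i ∈ s, p i ∉ F ∙ u) →
        #(t.filter (fun j => f j u = 0)) ≤ α * Fintype.card F ^ (k + 1) →
        ∃ S : Submodule F V, finrank F S = l + 4 ∧ u ∈ S ∧ ∀ i ∈ s, p i ∈ S := by
      intro u hu0 hu hut
      have hU : finrank F (F ∙ u) = 1 := finrank_span_singleton hu0
      obtain ⟨S', h1, h2⟩ := ih (V := V ⧸ (F ∙ u))
        (by have := Submodule.finrank_quotient_add_finrank (F ∙ u); omega)
        (fun i => (F ∙ u).mkQ (p i)) (qt (F ∙ u) t f) (qf (F ∙ u) f)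
        (qp_ne _ s p hu) (qf_ne _ t f hf) (Blk.quot hB _ hU) (by rw [qt_span]; exact hut)
      refine ⟨S'.comap (F ∙ u).mkQ, ?_, ?_, h2⟩
      · rw [finrank_comap_mkQ, h1, hU]
      · rw [Submodule.mem_comap]
        have : (F ∙ u).mkQ u = 0 := by simp [Submodule.mem_span_singleton_self]
        rw [this]; exact zero_mem _
    obtain ⟨u, hu0, hu1, hu2⟩ := lemU1 (k := k + 1) (l := l + 1) (a := α) (a' := β + 1) (by omega)
      hp hf (by omega) (lt_of_le_of_lt hs (Nat.mul_lt_mul_of_pos_right (by omega) (by positivity))) ht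
    obtain ⟨S1, hS1, -, hS1p⟩ := key u hu0 hu1 hu2
    obtain ⟨v, hv1, hv2⟩ := avoid (k := k) (l := l) (by omega) hf ht S1 hS1
    have hv0 : v ≠ 0 := by rintro rfl; exact hv1 (zero_mem _)
    obtain ⟨S2, hS2, hv3, hS2p⟩ := key v hv0 (by
      intro i hi hm
      obtain ⟨c, hc⟩ := Submodule.mem_span_singleton.1 hm
      have hc0 : c ≠ 0 := by rintro rfl; exact hp i hi (by rw [← hc]; simp)
      apply hv1
      rw [← Submodule.smul_mem_iff _ hc0, hc]
      exact hS1p i hi) hv2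
    have hlt : S1 ⊓ S2 < S2 := by
      refine lt_of_le_of_ne inf_le_right ?_
      intro h
      rw [← h] at hv3
      exact hv1 hv3.1
    have := Submodule.finrank_lt_finrank_of_lt hlt
    obtain ⟨S, hS, hSr⟩ := enlarge (S1 ⊓ S2) (l + 3) (by omega) (by omega)
    exact ⟨S, hSr, fun i hi => hS ⟨hS1p i hi, hS2p i hi⟩⟩

theorem main_blk {k : ℕ} (hN : finrank F V = (k + 1) + (k + 1) + 2) {s : Finset ι} {p : ι → V}
    {t : Finset κ} {f : κ → Dual F V} (hp : ∀ i ∈ s, p i ≠ 0) (hf : ∀ j ∈ t, f j ≠ 0)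
    (hB : Blk (k + 1) s p t f)
    (hnp : ∀ j ∈ t, ∀ j' ∈ t, j ≠ j' → ∃ x, f j x = 0 ∧ f j' x ≠ 0)
    (hnp' : ∀ i ∈ s, ∀ i' ∈ s, i ≠ i' → ∀ c : F, p i' ≠ c • p i)
    (hst : #s + #t = (Fintype.card F + 1) * Fintype.card F ^ (k + 1)) :
    ∃ S : Submodule F V, finrank F S = k + 3 ∧ ∀ i ∈ s, p i ∈ S := by
  obtain ⟨α, β, hαβ, ht, hs⟩ := integrality hN hp hf hB hnp hnp' hst
  have hq := two_le_q (F := F)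
  rcases Nat.eq_zero_or_pos β with hβ | hβ
  · have hs0 : s = ∅ := by rw [← card_eq_zero, hs, hβ, zero_mul]
    obtain ⟨S, -, hS⟩ := enlarge (⊥ : Submodule F V) (k + 3) (by simp) (by omega)
    exact ⟨S, hS, by simp [hs0]⟩
  rcases Nat.eq_zero_or_pos α with hα | hα
  · exfalso
    have ht0 : t = ∅ := by rw [← card_eq_zero, ht, hα, zero_mul]
    have hβq : β = Fintype.card F + 1 := by omega
    obtain ⟨U, hU, hUp, -⟩ := lemUK (F := F) (a := 0) (a' := Fintype.card F + 2) (by omega) s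
      (l := k + 1) (by
        rw [hs, hβq]; exact Nat.mul_lt_mul_of_pos_right (by omega) (by positivity)) (k + 1) hN p t f
      hp hf (by simp [ht0])
    have hB' : Blk 0 s (fun i => U.mkQ (p i)) (qt U t f) (qf U f) :=
      Blk.quot (k := 0) (u := k + 1) (by simpa using hB) U hU
    have hfr : finrank F (V ⧸ U) = (k + 1) + 2 := by
      have := Submodule.finrank_quotient_add_finrank U; omega
    have := coverA0' hfr (hB'.cover (qp_ne U s p hUp)) (by simp [qt, ht0])
    rw [if_neg (by omega), hs, hβq] at this
    omega
  · exact main_ind hαβ hα hβ s hs.le k (by omega) p t f hp hf hB ht.le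
end
end BS
/-- Let `B = B0 ∪ Bn` be a blocking set of points and hyperplanes
with respect to `k`-spaces in `PG(2k+1,q)` with `|B| = (q+1)·q^k`.  Then `B0` is
contained in a `(k+1)`-space. -/
theorem stmt_18 {F : Type} [Field F] [Fintype F] (k : ℕ) (hk : 1 ≤ k)
    (B0 Bn : Set (Submodule F (Fin (2 * k + 2) → F)))
    (hB0 : ∀ p ∈ B0, Module.finrank F p = 1)
    (hBn : ∀ H ∈ Bn, Module.finrank F H = 2 * k + 1)
    (hblock : ∀ W : Submodule F (Fin (2 * k + 2) → F), Module.finrank F W = k + 1 →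
      (∃ p ∈ B0, p ≤ W) ∨ (∃ H ∈ Bn, W ≤ H))
    (hsize : B0.ncard + Bn.ncard = (Fintype.card F + 1) * (Fintype.card F) ^ k) :
    ∃ SIG : Submodule F (Fin (2 * k + 2) → F), Module.finrank F SIG = k + 2 ∧ ∀ p ∈ B0, p ≤ SIG := by
  have hfV : Module.finrank F (Fin (2 * k + 2) → F) = 2 * k + 2 := by simp
  have : Finite (Submodule F (Fin (2 * k + 2) → F)) :=
    Finite.of_injective (fun W => (W : Set (Fin (2 * k + 2) → F))) SetLike.coe_injective
  have hP : ∀ P : Submodule F (Fin (2 * k + 2) → F), ∃ v : Fin (2 * k + 2) → F,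
      P ∈ B0 → v ≠ 0 ∧ P = Submodule.span F {v} := by
    intro P
    by_cases h : P ∈ B0
    · have h1 := hB0 P h
      have hne : P ≠ ⊥ := by rintro rfl; simp at h1
      obtain ⟨v, hv, hv0⟩ := P.exists_mem_ne_zero_of_ne_bot hne
      refine ⟨v, fun _ => ⟨hv0, ?_⟩⟩
      symm
      apply Submodule.eq_of_le_of_finrank_eq
      · rwa [Submodule.span_singleton_le_iff_mem]
      · rw [finrank_span_singleton hv0, h1]
    · exact ⟨0, fun h' => absurd h' h⟩
  have hH : ∀ H : Submodule F (Fin (2 * k + 2) → F), ∃ f : Module.Dual F (Fin (2 * k + 2) → F),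
      H ∈ Bn → f ≠ 0 ∧ H = LinearMap.ker f := by
    intro H
    by_cases h : H ∈ Bn
    · have h1 := hBn H h
      have hlt : H < ⊤ := by
        rw [lt_top_iff_ne_top]; rintro rfl
        rw [finrank_top] at h1; omega
      obtain ⟨f, hf0, hf⟩ := Submodule.exists_le_ker_of_lt_top H hlt
      refine ⟨f, fun _ => ⟨hf0, ?_⟩⟩
      apply Submodule.eq_of_le_of_finrank_eq hf
      have := Module.Dual.finrank_ker_add_one_of_ne_zero (f := f) hf0
      omega
    · exact ⟨0, fun h' => absurd h' h⟩
  choose p hp using hP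
  choose f hf using hH
  obtain ⟨k, rfl⟩ : ∃ k', k = k' + 1 := ⟨k - 1, by omega⟩
  have hs : ∀ i, i ∈ B0.toFinite.toFinset ↔ i ∈ B0 := fun i => Set.Finite.mem_toFinset _
  have ht : ∀ j, j ∈ Bn.toFinite.toFinset ↔ j ∈ Bn := fun i => Set.Finite.mem_toFinset _
  obtain ⟨S, hS, hSp⟩ := BS.main_blk (F := F) (k := k) (s := B0.toFinite.toFinset) (p := p)
    (t := Bn.toFinite.toFinset) (f := f) (by omega)
    (fun i hi => (hp i ((hs i).1 hi)).1) (fun j hj => (hf j ((ht j).1 hj)).1)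
    (by
      intro W hW
      rcases hblock W hW with ⟨P, hP, hPW⟩ | ⟨H, hH, hHW⟩
      · left
        refine ⟨P, (hs P).2 hP, ?_⟩
        rw [(hp P hP).2, Submodule.span_singleton_le_iff_mem] at hPW
        exact hPW
      · right
        refine ⟨H, (ht H).2 hH, fun x hx => ?_⟩
        have := hHW hx
        rw [(hf H hH).2] at this
        exact this)
    (by
      intro j hj j' hj' hne
      by_contra hcon
      push Not at hcon
      rw [ht] at hj hj'
      apply hne
      apply Submodule.eq_of_le_of_finrank_eq
      · rw [(hf j hj).2, (hf j' hj').2]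
        exact hcon
      · rw [hBn j hj, hBn j' hj'])
    (by
      intro i hi i' hi' hne c hc
      rw [hs] at hi hi'
      apply hne
      symm
      apply Submodule.eq_of_le_of_finrank_eq
      · rw [(hp i hi).2, (hp i' hi').2, Submodule.span_singleton_le_iff_mem, hc]
        exact Submodule.smul_mem _ _ (Submodule.mem_span_singleton_self _)
      · rw [hB0 i hi, hB0 i' hi'])
    (by
      rw [← Set.ncard_eq_toFinset_card, ← Set.ncard_eq_toFinset_card]
      exact hsize)
  refine ⟨S, by omega, fun P hP => ?_⟩
  rw [(hp P hP).2, Submodule.span_singleton_le_iff_mem]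
  exact hSp P ((hs P).2 hP)
end

section
/- Let q be a prime power, k ≥ 1, and n = 2k+1. Let B = B_0 ∪ B_{n-1} be a blocking set with respect to k-spaces in PG(2k+1,q) consisting of points and hyperplanes with |B| = (q+1)·q^k. Then there exists a (k-1)-space σ of PG(2k+1,q) that is contained in every hyperplane of B_{n-1}. -/
set_option linter.unusedSectionVars false
set_option linter.unusedFintypeInType false
set_option linter.unusedDecidableInType false

namespace PBS
open Finset Module

/-- `th q m = 1 + q + ... + q^(m-1)`. -/
def th (q m : ℕ) : ℕ := ∑ i ∈ range m, q ^ i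

lemma th_zero (q : ℕ) : th q 0 = 0 := by simp [th]
lemma th_one (q : ℕ) : th q 1 = 1 := by simp [th]
lemma th_succ (q m : ℕ) : th q (m + 1) = th q m + q ^ m := by
  simp [th, sum_range_succ]
lemma th_succ' (q m : ℕ) : th q (m + 1) = q * th q m + 1 := by
  induction m with
  | zero => simp [th]
  | succ m ih =>
    have h := th_succ q m
    rw [ih] at h
    have h2 : q * (q * th q m + 1) = q * (th q m + q ^ m) := by rw [h]
    rw [th_succ, ih, h2]
    ring
lemma th_mul (q m : ℕ) (hq : 1 ≤ q) : th q m * (q - 1) + 1 = q ^ m := by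
  have := th_succ q m
  rw [th_succ'] at this
  obtain ⟨p, rfl⟩ : ∃ p, q = p + 1 := ⟨q - 1, by omega⟩
  simp only [Nat.add_sub_cancel]
  nlinarith

section
variable {F V : Type} [Field F] [Fintype F] [AddCommGroup V] [Module F V] [Fintype V]
  [Fintype (Submodule F V)]

open Classical in
/-- Subspaces of rank `d` between `X` and `Y`. -/
noncomputable def btw (X Y : Submodule F V) (d : ℕ) : Finset (Submodule F V) :=
  univ.filter (fun Z => X ≤ Z ∧ Z ≤ Y ∧ finrank F Z = d)

lemma mem_btw {X Y Z : Submodule F V} {d : ℕ} :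
    Z ∈ btw X Y d ↔ X ≤ Z ∧ Z ≤ Y ∧ finrank F Z = d := by simp [btw]

lemma rk_sup_span {X : Submodule F V} {v : V} (hv : v ∉ X) :
    finrank F (X ⊔ F ∙ v : Submodule F V) = finrank F X + 1 := by
  have h0 : v ≠ 0 := fun h => hv (h ▸ X.zero_mem)
  have h1 := Submodule.finrank_sup_add_finrank_inf_eq X (F ∙ v)
  have h2 : X ⊓ (F ∙ v) = ⊥ := by
    rw [← disjoint_iff]
    exact (Submodule.disjoint_span_singleton' h0).2 hv
  rw [h2, finrank_bot, finrank_span_singleton h0] at h1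
  simpa using h1

lemma eq_of_le_rk {X Y : Submodule F V} (h : X ≤ Y) (hr : finrank F X = finrank F Y) : X = Y :=
  Submodule.eq_of_le_of_finrank_eq h hr

open Classical in
lemma card_diff {X Z : Submodule F V} (h : X ≤ Z) :
    (univ.filter (fun v : V => v ∈ Z ∧ v ∉ X)).card + Fintype.card F ^ finrank F X
      = Fintype.card F ^ finrank F Z := by
  have hc : ∀ Y : Submodule F V, (univ.filter (fun v : V => v ∈ Y)).card
      = Fintype.card F ^ finrank F Y := by
    intro Y
    rw [← Module.card_eq_pow_finrank (K := F) (V := Y), Fintype.card_subtype]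
  rw [← hc X, ← hc Z, ← card_union_of_disjoint]
  · congr 1
    ext v
    simp only [mem_union, mem_filter, mem_univ, true_and]
    constructor
    · rintro (h1 | h1)
      · exact h1.1
      · exact h h1
    · intro h1
      by_cases h2 : v ∈ X
      · exact Or.inr h2
      · exact Or.inl ⟨h1, h2⟩
  · rw [disjoint_left]
    intro v
    simp only [mem_filter, mem_univ, true_and]
    tauto

lemma cnt_up {X Y : Submodule F V} (h : X ≤ Y) {m d : ℕ} (hm : finrank F Y = finrank F X + m)
    (hd : d = finrank F X + 1) :
    (btw X Y d).card = th (Fintype.card F) m := by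
  classical
  subst hd
  set q := Fintype.card F with hq
  have hq2 : 2 ≤ q := Fintype.one_lt_card
  have key : (univ.filter (fun v : V => v ∈ Y ∧ v ∉ X)).card
      = ∑ Z ∈ btw X Y (finrank F X + 1), (univ.filter (fun v : V => v ∈ Z ∧ v ∉ X)).card := by
    rw [card_eq_sum_card_fiberwise (f := fun v => X ⊔ F ∙ v) (t := btw X Y (finrank F X + 1))]
    · refine sum_congr rfl fun Z hZ => ?_
      rw [mem_btw] at hZ
      congr 1
      ext v
      simp only [mem_filter, mem_univ, true_and]
      constructor
      · rintro ⟨⟨h1, h2⟩, rfl⟩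
        exact ⟨(le_sup_right : F ∙ v ≤ X ⊔ F ∙ v) (Submodule.mem_span_singleton_self v), h2⟩
      · rintro ⟨h1, h2⟩
        refine ⟨⟨hZ.2.1 h1, h2⟩, ?_⟩
        apply eq_of_le_rk
        · exact sup_le hZ.1 ((Submodule.span_singleton_le_iff_mem _ _).2 h1)
        · rw [rk_sup_span h2, hZ.2.2]
    · intro v hv
      simp only [coe_filter, mem_univ, true_and, Set.mem_ofPred_eq] at hv
      simp only [mem_coe, mem_btw]
      exact ⟨le_sup_left, sup_le h ((Submodule.span_singleton_le_iff_mem _ _).2 hv.1),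
        rk_sup_span hv.2⟩
  have h2 := card_diff (F := F) h
  have h3 : ∀ Z ∈ btw X Y (finrank F X + 1), (univ.filter (fun v : V => v ∈ Z ∧ v ∉ X)).card
      = q ^ finrank F X * (q - 1) := by
    intro Z hZ
    rw [mem_btw] at hZ
    have := card_diff (F := F) hZ.1
    rw [hZ.2.2, pow_succ, ← hq] at this
    rw [Nat.mul_sub, mul_one]
    omega
  rw [sum_congr rfl h3, sum_const, smul_eq_mul] at key
  rw [key, hm, pow_add, ← hq, ← th_mul q m (by omega)] at h2
  have hp : 0 < q ^ finrank F X * (q - 1) := by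
    apply Nat.mul_pos
    · positivity
    · omega
  apply Nat.eq_of_mul_eq_mul_right hp
  nlinarith

/-- A duality of the subspace lattice. -/
structure IsDl (D : Submodule F V → Submodule F V) : Prop where
  inv : ∀ X, D (D X) = X
  le : ∀ X Y, D X ≤ D Y ↔ Y ≤ X
  rk : ∀ X, finrank F (D X) + finrank F X = finrank F V

lemma IsDl.le' {D : Submodule F V → Submodule F V} (hD : IsDl D) (X Y) : D X ≤ Y ↔ D Y ≤ X := by
  rw [← hD.le X (D Y), hD.inv]
lemma IsDl.le'' {D : Submodule F V → Submodule F V} (hD : IsDl D) (X Y) : X ≤ D Y ↔ Y ≤ D X := by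
  rw [← hD.le (D Y) X, hD.inv]
lemma IsDl.inj {D : Submodule F V → Submodule F V} (hD : IsDl D) : Function.Injective D := by
  intro X Y h
  rw [← hD.inv X, h, hD.inv]

lemma btw_dual {D : Submodule F V → Submodule F V} (hD : IsDl D) (X Y : Submodule F V) (d d' : ℕ)
    (h : d + d' = finrank F V) [DecidableEq (Submodule F V)] :
    (btw X Y d).image D = btw (D Y) (D X) d' := by
  ext Z
  simp only [mem_image, mem_btw]
  constructor
  · rintro ⟨Z, ⟨h1, h2, h3⟩, rfl⟩
    refine ⟨(hD.le _ _).2 h2, (hD.le _ _).2 h1, ?_⟩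
    have := hD.rk Z
    omega
  · rintro ⟨h1, h2, h3⟩
    refine ⟨D Z, ⟨?_, ?_, ?_⟩, hD.inv Z⟩
    · rwa [hD.le'']
    · rwa [hD.le']
    · have := hD.rk Z
      omega

lemma cnt_dn {D : Submodule F V → Submodule F V} (hD : IsDl D) {X Y : Submodule F V} (h : X ≤ Y)
    {m d : ℕ} (hm : finrank F Y = finrank F X + m) (hd : d + 1 = finrank F Y) :
    (btw X Y d).card = th (Fintype.card F) m := by
  classical
  have hY := hD.rk Y
  have hX := hD.rk X
  rw [← card_image_of_injective _ hD.inj, btw_dual hD X Y d (finrank F (D Y) + 1) (by omega)]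
  exact cnt_up ((hD.le _ _).2 h) (by omega) rfl

open Classical in
/-- number of points of `B` in `X` -/
noncomputable def tt (B : Finset (Submodule F V)) (X : Submodule F V) : ℕ :=
  (B.filter (fun A => A ≤ X)).card
open Classical in
/-- number of hyperplanes of `E` through `X` -/
noncomputable def ss (E : Finset (Submodule F V)) (X : Submodule F V) : ℕ :=
  (E.filter (fun A => X ≤ A)).card

open Classical in
lemma sum_tt (B S : Finset (Submodule F V)) :
    ∑ Z ∈ S, tt B Z = ∑ A ∈ B, (S.filter (fun Z => A ≤ Z)).card := by
  simp only [tt, card_filter]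
  exact sum_comm
open Classical in
lemma sum_ss (E S : Finset (Submodule F V)) :
    ∑ Z ∈ S, ss E Z = ∑ A ∈ E, (S.filter (fun Z => Z ≤ A)).card := by
  simp only [ss, card_filter]
  exact sum_comm

end
end PBS

set_option linter.unusedSectionVars false
set_option linter.unusedFintypeInType false
set_option linter.unusedDecidableInType false

namespace PBS
open Finset Module
section
variable {F V : Type} [Field F] [Fintype F] [AddCommGroup V] [Module F V] [Fintype V]
  [Fintype (Submodule F V)]

lemma rk_sup_pt {X A : Submodule F V} (hA : finrank F A = 1) (h : ¬ A ≤ X) :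
    finrank F (X ⊔ A : Submodule F V) = finrank F X + 1 := by
  have h1 := Submodule.finrank_sup_add_finrank_inf_eq X A
  have h2 : X ⊓ A < A := lt_of_le_of_ne inf_le_right (fun h' => h (inf_eq_right.1 h'))
  have h3 := Submodule.finrank_lt_finrank_of_lt h2
  omega

lemma rk_inf_hyp {X H : Submodule F V} (hH : finrank F H + 1 = finrank F V) (h : ¬ X ≤ H) :
    finrank F (X ⊓ H : Submodule F V) + 1 = finrank F X := by
  have h1 := Submodule.finrank_sup_add_finrank_inf_eq X H
  have h2 : H < X ⊔ H := lt_of_le_of_ne le_sup_right (fun h' => h (sup_eq_right.1 h'.symm))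
  have h3 := Submodule.finrank_lt_finrank_of_lt h2
  have h4 := Submodule.finrank_le (X ⊔ H)
  omega

lemma pt_eq {A A' : Submodule F V} (hA : finrank F A = 1) (hA' : finrank F A' = 1)
    (h : A ≤ A') : A = A' := eq_of_le_rk h (by omega)

open Classical in
lemma btw_filter_ge (X Y A : Submodule F V) (d : ℕ) :
    (btw X Y d).filter (fun Z => A ≤ Z) = btw (X ⊔ A) Y d := by
  ext Z
  simp only [mem_filter, mem_btw, sup_le_iff]
  tauto
open Classical in
lemma btw_filter_le (X Y A : Submodule F V) (d : ℕ) :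
    (btw X Y d).filter (fun Z => Z ≤ A) = btw X (Y ⊓ A) d := by
  ext Z
  simp only [mem_filter, mem_btw, le_inf_iff]
  tauto

lemma card_btw_bot {X Y : Submodule F V} {d : ℕ} (h : X ≤ Y) (hd : finrank F X = d) :
    (btw X Y d).card = 1 := by
  rw [card_eq_one]
  refine ⟨X, ?_⟩
  ext Z
  simp only [mem_btw, mem_singleton]
  constructor
  · rintro ⟨h1, h2, h3⟩
    exact (eq_of_le_rk h1 (by omega)).symm
  · rintro rfl
    exact ⟨le_rfl, h, hd⟩
lemma card_btw_top {X Y : Submodule F V} {d : ℕ} (h : X ≤ Y) (hd : finrank F Y = d) :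
    (btw X Y d).card = 1 := by
  rw [card_eq_one]
  refine ⟨Y, ?_⟩
  ext Z
  simp only [mem_btw, mem_singleton]
  constructor
  · rintro ⟨h1, h2, h3⟩
    exact (eq_of_le_rk h2 (by omega))
  · rintro rfl
    exact ⟨h, le_rfl, hd⟩
lemma card_btw_not {X Y : Submodule F V} {d : ℕ} (h : ¬ X ≤ Y) :
    (btw X Y d).card = 0 := by
  rw [card_eq_zero]
  ext Z
  simp only [mem_btw, notMem_empty, iff_false]
  rintro ⟨h1, h2, h3⟩
  exact h (h1.trans h2)

open Classical in
lemma sum_ite_tt (B : Finset (Submodule F V)) (X : Submodule F V) (a b : ℕ) :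
    ∑ A ∈ B, (if A ≤ X then a else b) + b * tt B X = b * B.card + a * tt B X := by
  rw [sum_ite, sum_const, sum_const, tt, smul_eq_mul, smul_eq_mul]
  have := card_filter_add_card_filter_not (s := B) (fun A => A ≤ X)
  rw [← this]
  ring
open Classical in
lemma sum_ite_ss (B : Finset (Submodule F V)) (X : Submodule F V) (a b : ℕ) :
    ∑ A ∈ B, (if X ≤ A then a else b) + b * ss B X = b * B.card + a * ss B X := by
  rw [sum_ite, sum_const, sum_const, ss, smul_eq_mul, smul_eq_mul]
  have := card_filter_add_card_filter_not (s := B) (fun A => X ≤ A)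
  rw [← this]
  ring

lemma up_tt {B : Finset (Submodule F V)} (hB : ∀ A ∈ B, finrank F A = 1) {X : Submodule F V}
    {m d : ℕ} (hd : d = finrank F X + 1) (hm : finrank F V = finrank F X + m) :
    ∑ W ∈ btw X ⊤ d, tt B W + tt B X = B.card + th (Fintype.card F) m * tt B X := by
  classical
  rw [sum_tt]
  have : ∀ A ∈ B, ((btw X ⊤ d).filter (fun Z => A ≤ Z)).card
      = if A ≤ X then th (Fintype.card F) m else 1 := by
    intro A hA
    rw [btw_filter_ge]
    split_ifs with h
    · rw [sup_eq_left.2 h]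
      exact cnt_up le_top (by rw [finrank_top]; exact hm) hd
    · exact card_btw_bot le_top (by rw [rk_sup_pt (hB A hA) h, hd])
  rw [sum_congr rfl this]
  have := sum_ite_tt B X (th (Fintype.card F) m) 1
  simpa using this

lemma up_ss {E : Finset (Submodule F V)} (hE : ∀ A ∈ E, finrank F A + 1 = finrank F V)
    {X : Submodule F V} {m d : ℕ} (hd : d = finrank F X + 1)
    (hm : finrank F V = finrank F X + m + 1) :
    ∑ W ∈ btw X ⊤ d, ss E W = th (Fintype.card F) m * ss E X := by
  classical
  rw [sum_ss]
  have : ∀ A ∈ E, ((btw X ⊤ d).filter (fun Z => Z ≤ A)).card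
      = if X ≤ A then th (Fintype.card F) m else 0 := by
    intro A hA
    rw [btw_filter_le, top_inf_eq]
    split_ifs with h
    · exact cnt_up h (by have := hE A hA; omega) hd
    · exact card_btw_not h
  rw [sum_congr rfl this]
  have := sum_ite_ss E X (th (Fintype.card F) m) 0
  simpa using this

lemma dn_ss {D : Submodule F V → Submodule F V} (hD : IsDl D)
    {E : Finset (Submodule F V)} (hE : ∀ A ∈ E, finrank F A + 1 = finrank F V)
    {X : Submodule F V} {m d : ℕ} (hd : d + 1 = finrank F X)
    (hm : finrank F X = m) :
    ∑ W ∈ btw ⊥ X d, ss E W + ss E X = E.card + th (Fintype.card F) m * ss E X := by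
  classical
  rw [sum_ss]
  have : ∀ A ∈ E, ((btw ⊥ X d).filter (fun Z => Z ≤ A)).card
      = if X ≤ A then th (Fintype.card F) m else 1 := by
    intro A hA
    rw [btw_filter_le]
    split_ifs with h
    · rw [inf_eq_left.2 h]
      exact cnt_dn hD bot_le (by rw [finrank_bot, zero_add]; exact hm) hd
    · exact card_btw_top bot_le (by have := rk_inf_hyp (hE A hA) h; omega)
  rw [sum_congr rfl this]
  have := sum_ite_ss E X (th (Fintype.card F) m) 1
  simpa using this

lemma dn_tt {D : Submodule F V → Submodule F V} (hD : IsDl D)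
    {B : Finset (Submodule F V)} (hB : ∀ A ∈ B, finrank F A = 1)
    {X : Submodule F V} {m d : ℕ} (hd : d + 1 = finrank F X)
    (hm : finrank F X = m + 1) :
    ∑ W ∈ btw ⊥ X d, tt B W = th (Fintype.card F) m * tt B X := by
  classical
  rw [sum_tt]
  have : ∀ A ∈ B, ((btw ⊥ X d).filter (fun Z => A ≤ Z)).card
      = if A ≤ X then th (Fintype.card F) m else 0 := by
    intro A hA
    rw [btw_filter_ge, bot_sup_eq]
    split_ifs with h
    · exact cnt_dn hD h (by have := hB A hA; omega) hd
    · exact card_btw_not h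
  rw [sum_congr rfl this]
  have := sum_ite_tt B X (th (Fintype.card F) m) 0
  simpa using this

/-- Blocking sets of points and hyperplanes. -/
structure Bl (k : ℕ) (B E : Finset (Submodule F V)) : Prop where
  hV : finrank F V = 2 * k + 2
  h0 : ∀ A ∈ B, finrank F A = 1
  hE : ∀ H ∈ E, finrank F H = 2 * k + 1
  bl : ∀ W : Submodule F V, finrank F W = k + 1 → (∃ A ∈ B, A ≤ W) ∨ (∃ H ∈ E, W ≤ H)

lemma Bl.hE' {k : ℕ} {B E : Finset (Submodule F V)} (h : Bl k B E) :
    ∀ A ∈ E, finrank F A + 1 = finrank F V := by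
  intro A hA
  rw [h.hE A hA, h.hV]

lemma tt_pos {B : Finset (Submodule F V)} {X : Submodule F V} : 1 ≤ tt B X ↔ ∃ A ∈ B, A ≤ X := by
  classical
  rw [tt, Nat.one_le_iff_ne_zero, ← Nat.pos_iff_ne_zero, card_pos]
  simp [Finset.Nonempty]
lemma ss_pos {B : Finset (Submodule F V)} {X : Submodule F V} : 1 ≤ ss B X ↔ ∃ A ∈ B, X ≤ A := by
  classical
  rw [ss, Nat.one_le_iff_ne_zero, ← Nat.pos_iff_ne_zero, card_pos]
  simp [Finset.Nonempty]

lemma Bl.one_le {k : ℕ} {B E : Finset (Submodule F V)} (h : Bl k B E) {W : Submodule F V}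
    (hW : finrank F W = k + 1) : 1 ≤ tt B W + ss E W := by
  rcases h.bl W hW with h1 | h1
  · have := tt_pos.2 h1; omega
  · have := ss_pos.2 h1; omega

lemma tt_dual {D : Submodule F V → Submodule F V} (hD : IsDl D) [DecidableEq (Submodule F V)]
    (E : Finset (Submodule F V)) (X : Submodule F V) : tt (E.image D) X = ss E (D X) := by
  classical
  rw [tt, ss, filter_image, card_image_of_injective _ hD.inj]
  congr 1
  ext Z
  simp only [mem_filter, hD.le' Z X]
lemma ss_dual {D : Submodule F V → Submodule F V} (hD : IsDl D) [DecidableEq (Submodule F V)]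
    (E : Finset (Submodule F V)) (X : Submodule F V) : ss (E.image D) X = tt E (D X) := by
  classical
  rw [tt, ss, filter_image, card_image_of_injective _ hD.inj]
  congr 1
  ext Z
  simp only [mem_filter, hD.le'' X Z]

lemma Bl.dual {D : Submodule F V → Submodule F V} (hD : IsDl D) [DecidableEq (Submodule F V)]
    {k : ℕ} {B E : Finset (Submodule F V)} (h : Bl k B E) : Bl k (E.image D) (B.image D) := by
  refine ⟨h.hV, ?_, ?_, ?_⟩
  · intro A hA
    obtain ⟨H, hH, rfl⟩ := mem_image.1 hA
    have := hD.rk H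
    have := h.hE' H hH
    omega
  · intro A hA
    obtain ⟨H, hH, rfl⟩ := mem_image.1 hA
    have := hD.rk H
    have := h.h0 H hH
    have := h.hV
    omega
  · intro W hW
    have h1 := h.one_le (W := D W) (by have := hD.rk W; have := h.hV; omega)
    rw [← tt_dual hD, ← ss_dual hD] at h1
    rw [← tt_pos, ← ss_pos]
    omega

/-- lower bound for `s + q t` -/
lemma Bl.g_nonneg {k : ℕ} {B E : Finset (Submodule F V)} (h : Bl k B E) {X : Submodule F V}
    (hX : finrank F X = k) : th (Fintype.card F) (k + 2) ≤
      B.card + th (Fintype.card F) (k + 1) * (ss E X + Fintype.card F * tt B X) := by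
  have h1 := up_tt h.h0 (X := X) (m := k + 2) (d := k + 1) (by omega) (by rw [h.hV]; omega)
  have h2 := up_ss h.hE' (X := X) (m := k + 1) (d := k + 1) (by omega) (by rw [h.hV]; omega)
  have h3 : (btw X ⊤ (k + 1)).card = th (Fintype.card F) (k + 2) :=
    cnt_up le_top (by rw [finrank_top, h.hV]; omega) (by omega)
  have h4 : ∑ W ∈ btw X ⊤ (k + 1), 1 ≤ ∑ W ∈ btw X ⊤ (k + 1), (tt B W + ss E W) := by
    apply sum_le_sum
    intro W hW
    exact h.one_le (mem_btw.1 hW).2.2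
  rw [sum_add_distrib, sum_const, h3, smul_eq_mul, mul_one] at h4
  have h5 := th_succ' (Fintype.card F) (k + 1)
  rw [h5] at h1 ⊢
  rw [h5] at h4
  nlinarith

lemma Bl.sum_a {D : Submodule F V → Submodule F V} (hD : IsDl D)
    {k : ℕ} {B E : Finset (Submodule F V)} (h : Bl k B E) {W : Submodule F V}
    (hW : finrank F W = k + 1) :
    ∑ X ∈ btw ⊥ W k, (ss E X + Fintype.card F * tt B X)
      = E.card + Fintype.card F * th (Fintype.card F) k * (ss E W + tt B W) := by
  have h1 := dn_ss hD h.hE' (X := W) (m := k + 1) (d := k) (by omega) (by omega)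
  have h2 := dn_tt hD h.h0 (X := W) (m := k) (d := k) (by omega) (by omega)
  rw [sum_add_distrib, ← mul_sum, h2]
  rw [th_succ'] at h1
  nlinarith

end
end PBS

set_option linter.unusedSectionVars false
set_option linter.unusedFintypeInType false
set_option linter.unusedDecidableInType false

namespace PBS
open Finset Module
section
variable {F V : Type} [Field F] [Fintype F] [AddCommGroup V] [Module F V] [Fintype V]
  [Fintype (Submodule F V)]

lemma exists_btw {X Y : Submodule F V} (h : X ≤ Y) {d : ℕ} (h1 : finrank F X ≤ d)
    (h2 : d ≤ finrank F Y) : (btw X Y d).Nonempty := by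
  induction d, h1 using Nat.le_induction with
  | base => exact ⟨X, mem_btw.2 ⟨le_rfl, h, rfl⟩⟩
  | succ d hd ih =>
    obtain ⟨Z, hZ⟩ := ih (by omega)
    obtain ⟨z1, z2, z3⟩ := mem_btw.1 hZ
    have : ¬ Y ≤ Z := fun hYZ => by
      have := Submodule.finrank_mono hYZ
      omega
    obtain ⟨v, hv, hv'⟩ := Set.not_subset.1 this
    exact ⟨Z ⊔ F ∙ v, mem_btw.2 ⟨z1.trans le_sup_left,
      sup_le z2 ((Submodule.span_singleton_le_iff_mem _ _).2 hv), by rw [rk_sup_span hv', z3]⟩⟩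

/-- Blocking sets all of whose elements are essential. -/
structure Ess (k : ℕ) (B E : Finset (Submodule F V)) : Prop extends Bl k B E where
  ess0 : ∀ A ∈ B, ∃ W : Submodule F V, finrank F W = k + 1 ∧ A ≤ W ∧ tt B W = 1 ∧ ss E W = 0
  essE : ∀ H ∈ E, ∃ W : Submodule F V, finrank F W = k + 1 ∧ W ≤ H ∧ tt B W = 0 ∧ ss E W = 1

lemma exists_ess {k : ℕ} : ∀ (N : ℕ) (B E : Finset (Submodule F V)), B.card + E.card = N →
    Bl k B E → ∃ B' ⊆ B, ∃ E' ⊆ E, Ess k B' E' := by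
  classical
  intro N
  induction N with
  | zero =>
    intro B E hN h
    rw [Nat.add_eq_zero_iff, card_eq_zero, card_eq_zero] at hN
    obtain ⟨rfl, rfl⟩ := hN
    exact ⟨∅, le_rfl, ∅, le_rfl, h, by simp, by simp⟩
  | succ N ih =>
    intro B E hN h
    by_cases h0 : ∀ A ∈ B, ∃ W : Submodule F V,
        finrank F W = k + 1 ∧ A ≤ W ∧ tt B W = 1 ∧ ss E W = 0
    · by_cases hE : ∀ H ∈ E, ∃ W : Submodule F V,
        finrank F W = k + 1 ∧ W ≤ H ∧ tt B W = 0 ∧ ss E W = 1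
      · exact ⟨B, le_rfl, E, le_rfl, h, h0, hE⟩
      · push Not at hE
        obtain ⟨H, hH, hE⟩ := hE
        obtain ⟨B', hB', E', hE', h'⟩ := ih B (E.erase H) (by
            rw [card_erase_of_mem hH]
            have := card_pos.2 ⟨H, hH⟩
            omega) ⟨h.hV, h.h0, fun A hA => h.hE A (mem_of_mem_erase hA), by
          intro W hW
          by_contra hcon
          push Not at hcon
          obtain ⟨hc1, hc2⟩ := hcon
          have hW0 : tt B W = 0 := by
            by_contra h0
            obtain ⟨A, hA, hA'⟩ := tt_pos.1 (Nat.one_le_iff_ne_zero.2 h0)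
            exact hc1 A hA hA'
          have hWH : W ≤ H := by
            rcases h.bl W hW with ⟨A, hA, hA'⟩ | ⟨A, hA, hA'⟩
            · exact absurd hA' (hc1 A hA)
            · by_cases hAH : A = H
              · rwa [← hAH]
              · exact absurd hA' (hc2 A (mem_erase.2 ⟨hAH, hA⟩))
          apply hE W hW hWH hW0
          rw [ss, card_eq_one]
          refine ⟨H, ?_⟩
          ext A
          simp only [mem_filter, mem_singleton]
          constructor
          · rintro ⟨hA, hA'⟩
            by_contra hAH
            exact hc2 A (mem_erase.2 ⟨hAH, hA⟩) hA'
          · rintro rfl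
            exact ⟨hH, hWH⟩⟩
        exact ⟨B', hB', E', hE'.trans (erase_subset _ _), h'⟩
    · push Not at h0
      obtain ⟨H, hH, hE⟩ := h0
      obtain ⟨B', hB', E', hE', h'⟩ := ih (B.erase H) E (by
          rw [card_erase_of_mem hH]
          have := card_pos.2 ⟨H, hH⟩
          omega) ⟨h.hV, fun A hA => h.h0 A (mem_of_mem_erase hA), h.hE, by
        intro W hW
        by_contra hcon
        push Not at hcon
        obtain ⟨hc2, hc1⟩ := hcon
        have hW0 : ss E W = 0 := by
          by_contra h0
          obtain ⟨A, hA, hA'⟩ := ss_pos.1 (Nat.one_le_iff_ne_zero.2 h0)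
          exact hc1 A hA hA'
        have hWH : H ≤ W := by
          rcases h.bl W hW with ⟨A, hA, hA'⟩ | ⟨A, hA, hA'⟩
          · by_cases hAH : A = H
            · rwa [← hAH]
            · exact absurd hA' (hc2 A (mem_erase.2 ⟨hAH, hA⟩))
          · exact absurd hA' (hc1 A hA)
        refine hE W hW hWH ?_ hW0
        rw [tt, card_eq_one]
        refine ⟨H, ?_⟩
        ext A
        simp only [mem_filter, mem_singleton]
        constructor
        · rintro ⟨hA, hA'⟩
          by_contra hAH
          exact hc2 A (mem_erase.2 ⟨hAH, hA⟩) hA'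
        · rintro rfl
          exact ⟨hH, hWH⟩⟩
      exact ⟨B', hB'.trans (erase_subset _ _), E', hE', h'⟩

lemma Ess.dual {D : Submodule F V → Submodule F V} (hD : IsDl D) [DecidableEq (Submodule F V)]
    {k : ℕ} {B E : Finset (Submodule F V)} (h : Ess k B E) : Ess k (E.image D) (B.image D) := by
  refine ⟨h.toBl.dual hD, ?_, ?_⟩
  · intro A hA
    obtain ⟨H, hH, rfl⟩ := mem_image.1 hA
    obtain ⟨W, h1, h2, h3, h4⟩ := h.essE H hH
    refine ⟨D W, ?_, (hD.le _ _).2 h2, ?_, ?_⟩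
    · have := hD.rk W
      have := h.hV
      omega
    · rw [tt_dual hD, hD.inv, h4]
    · rw [ss_dual hD, hD.inv, h3]
  · intro A hA
    obtain ⟨H, hH, rfl⟩ := mem_image.1 hA
    obtain ⟨W, h1, h2, h3, h4⟩ := h.ess0 H hH
    refine ⟨D W, ?_, (hD.le _ _).2 h2, ?_, ?_⟩
    · have := hD.rk W
      have := h.hV
      omega
    · rw [tt_dual hD, hD.inv, h4]
    · rw [ss_dual hD, hD.inv, h3]

lemma Bl.a_nonneg {k : ℕ} {B E : Finset (Submodule F V)} (h : Bl k B E) {x r : ℤ}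
    (hr : r < th (Fintype.card F) (k + 1))
    (hb : (B.card : ℤ) - 1 = r + th (Fintype.card F) (k + 1) * x)
    {X : Submodule F V} (hX : finrank F X = k) :
    0 ≤ (ss E X : ℤ) + Fintype.card F * tt B X - Fintype.card F + x := by
  have h1 := h.g_nonneg hX
  rw [th_succ' _ (k + 1)] at h1
  zify at h1
  by_contra hneg
  push Not at hneg
  have h2 : (ss E X : ℤ) + Fintype.card F * tt B X - Fintype.card F + x ≤ -1 := by omega
  have h3 := mul_le_mul_of_nonneg_left h2
    (by positivity : (0 : ℤ) ≤ (th (Fintype.card F) (k + 1) : ℤ))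
  nlinarith

lemma Bl.half {D : Submodule F V → Submodule F V} (hD : IsDl D)
    {k : ℕ} {B E : Finset (Submodule F V)} (h : Bl k B E) {x r : ℤ}
    (hr : r < th (Fintype.card F) (k + 1))
    (hb : (B.card : ℤ) - 1 = r + th (Fintype.card F) (k + 1) * x)
    {W : Submodule F V} (hW : finrank F W = k + 1) (hc : tt B W + ss E W = 1) :
    0 ≤ (E.card : ℤ) + th (Fintype.card F) (k + 1) - 1
        + th (Fintype.card F) (k + 1) * (x - Fintype.card F) ∧
    (tt B W = 1 → th (Fintype.card F) k * x ≤
      (E.card : ℤ) + th (Fintype.card F) (k + 1) - 1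
        + th (Fintype.card F) (k + 1) * (x - Fintype.card F)) := by
  classical
  have hs := h.sum_a hD hW
  rw [add_comm (ss E W), hc, mul_one] at hs
  have hcard : (btw ⊥ W k).card = th (Fintype.card F) (k + 1) :=
    cnt_dn hD bot_le (by rw [finrank_bot, hW]; omega) (by omega)
  have hsum : ∑ X ∈ btw ⊥ W k, ((ss E X : ℤ) + Fintype.card F * tt B X - Fintype.card F + x)
      = (E.card : ℤ) + th (Fintype.card F) (k + 1) - 1
        + th (Fintype.card F) (k + 1) * (x - Fintype.card F) := by
    have h5 := th_succ' (Fintype.card F) k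
    have : ∀ X ∈ btw ⊥ W k, ((ss E X : ℤ) + Fintype.card F * tt B X - Fintype.card F + x)
      = ((ss E X + Fintype.card F * tt B X : ℕ) : ℤ) + (x - Fintype.card F) := by
      intro X _
      push_cast
      ring
    rw [sum_congr rfl this, sum_add_distrib, ← Nat.cast_sum, hs, sum_const, hcard, h5]
    push_cast
    simp
    ring
  have hnn : ∀ X ∈ btw ⊥ W k,
      0 ≤ ((ss E X : ℤ) + Fintype.card F * tt B X - Fintype.card F + x) := by
    intro X hX
    exact h.a_nonneg hr hb (mem_btw.1 hX).2.2
  rw [← hsum]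
  refine ⟨sum_nonneg hnn, ?_⟩
  intro ht
  obtain ⟨A, hA, hAW⟩ := tt_pos.1 (le_of_eq ht.symm)
  have hcf : ((btw ⊥ W k).filter (fun X => A ≤ X)).card = th (Fintype.card F) k := by
    rw [btw_filter_ge, bot_sup_eq]
    exact cnt_dn hD hAW (by rw [hW, h.h0 A hA]; omega) (by omega)
  calc (th (Fintype.card F) k : ℤ) * x
      = ∑ X ∈ (btw ⊥ W k).filter (fun X => A ≤ X), x := by
        rw [sum_const, hcf]; simp
    _ ≤ ∑ X ∈ (btw ⊥ W k).filter (fun X => A ≤ X),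
        ((ss E X : ℤ) + Fintype.card F * tt B X - Fintype.card F + x) := by
        apply sum_le_sum
        intro X hX
        have : 1 ≤ tt B X := tt_pos.2 ⟨A, hA, (mem_filter.1 hX).2⟩
        have : (Fintype.card F : ℤ) * 1 ≤ Fintype.card F * tt B X := by
          apply mul_le_mul_of_nonneg_left
          · exact_mod_cast this
          · positivity
        have : (0 : ℤ) ≤ ss E X := by positivity
        linarith
    _ ≤ _ := by
        apply sum_le_sum_of_subset_of_nonneg (filter_subset _ _)
        intro X hX _
        exact hnn X hX

lemma arith {q T x x' r r' b e : ℤ} (hq : 2 ≤ q) (hT : 1 ≤ T)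
    (hr : 0 ≤ r) (hr1 : r < q * T + 1) (hb : b - 1 = r + (q * T + 1) * x)
    (hr' : 0 ≤ r') (hr1' : r' < q * T + 1) (he : e - 1 = r' + (q * T + 1) * x')
    (hN : b + e ≤ (q + 1) * ((q - 1) * T + 1))
    (h1 : T * x ≤ e + (q * T + 1) - 1 + (q * T + 1) * (x - q))
    (h2 : T * x' ≤ b + (q * T + 1) - 1 + (q * T + 1) * (x' - q)) :
    0 ≤ x ∧ 0 ≤ x' ∧ x + x' = q - 1 ∧ b = ((q - 1) * T + 1) * (x + 1) ∧
      e = ((q - 1) * T + 1) * (x' + 1) := by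
  have e1 : b = 1 + r + (q * T + 1) * x := by linarith
  have e2 : e = 1 + r' + (q * T + 1) * x' := by linarith
  subst e1 e2
  obtain ⟨y, hy⟩ : ∃ y, y = x + x' + 1 - q := ⟨_, rfl⟩
  have hx' : x' = y - x - 1 + q := by linarith
  subst hx'
  have f1 : T * x ≤ r' + (q * T + 1) * y := by nlinarith
  have f2 : T * (y - x - 1 + q) ≤ r + (q * T + 1) * y := by nlinarith
  have f3 : r + r' + (q * T + 1) * y ≤ (q - 1) * T := by nlinarith
  have hqT : 2 * T ≤ q * T := by nlinarith
  have f4 : 0 ≤ (q * T + 1 - T) * y := by nlinarith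
  have f5 : 0 ≤ y := by
    by_contra hneg
    push Not at hneg
    nlinarith
  have f6 : y = 0 := by
    by_contra hne
    have : 1 ≤ y := by omega
    nlinarith
  subst f6
  have g1 : r' = T * x := by nlinarith
  have g2 : r = T * (0 - x - 1 + q) := by nlinarith
  have g3 : 0 ≤ x := by
    by_contra hneg
    push Not at hneg
    nlinarith
  have g4 : 0 ≤ 0 - x - 1 + q := by
    by_contra hneg
    push Not at hneg
    nlinarith
  refine ⟨g3, g4, by ring, ?_, ?_⟩
  · rw [g2]; ring
  · rw [g1]; ring

set_option maxHeartbeats 1000000 in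
lemma Ess.params {D : Submodule F V → Submodule F V} (hD : IsDl D)
    {k : ℕ} (hk : 1 ≤ k) {B E : Finset (Submodule F V)} (h : Ess k B E)
    (hN : B.card + E.card ≤ (Fintype.card F + 1) * Fintype.card F ^ k) :
    ∃ j j' : ℕ, 1 ≤ j ∧ 1 ≤ j' ∧ j + j' = Fintype.card F + 1 ∧
      B.card = Fintype.card F ^ k * j' ∧ E.card = Fintype.card F ^ k * j ∧
      (∀ X : Submodule F V, finrank F X = k → j ≤ ss E X + Fintype.card F * tt B X) ∧
      (∀ X : Submodule F V, finrank F X = k + 2 → j' ≤ tt B X + Fintype.card F * ss E X) := by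
  classical
  obtain ⟨q, hqdef⟩ : ∃ q, q = Fintype.card F := ⟨_, rfl⟩
  have hq : 2 ≤ q := by rw [hqdef]; exact Fintype.one_lt_card
  obtain ⟨T, hTdef⟩ : ∃ T, T = th q k := ⟨_, rfl⟩
  have hT : 1 ≤ T := by
    obtain ⟨k, rfl⟩ : ∃ m, k = m + 1 := ⟨k - 1, by omega⟩
    rw [hTdef, th_succ']
    omega
  have hth : th q (k + 1) = q * T + 1 := by rw [th_succ', hTdef]
  have hpow : ((q ^ k : ℕ) : ℤ) = (q - 1) * T + 1 := by
    have := th_mul q k (by omega)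
    rw [← this, ← hTdef]
    push_cast [Nat.cast_sub (show 1 ≤ q by omega)]
    ring
  have hd := h.dual hD
  have hcE : (E.image D).card = E.card := card_image_of_injective _ hD.inj
  have hcB : (B.image D).card = B.card := card_image_of_injective _ hD.inj
  have hpos : (0 : ℤ) < (q : ℤ) * T + 1 := by positivity
  obtain ⟨x, hx⟩ : ∃ x, x = ((B.card : ℤ) - 1) / ((q : ℤ) * T + 1) := ⟨_, rfl⟩
  obtain ⟨r, hr⟩ : ∃ r, r = ((B.card : ℤ) - 1) % ((q : ℤ) * T + 1) := ⟨_, rfl⟩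
  obtain ⟨x', hx'⟩ : ∃ x, x = ((E.card : ℤ) - 1) / ((q : ℤ) * T + 1) := ⟨_, rfl⟩
  obtain ⟨r', hr'⟩ : ∃ r, r = ((E.card : ℤ) - 1) % ((q : ℤ) * T + 1) := ⟨_, rfl⟩
  have hb : (B.card : ℤ) - 1 = r + ((q : ℤ) * T + 1) * x := by
    rw [hx, hr]; exact (Int.emod_add_mul_ediv _ _).symm
  have he : (E.card : ℤ) - 1 = r' + ((q : ℤ) * T + 1) * x' := by
    rw [hx', hr']; exact (Int.emod_add_mul_ediv _ _).symm
  have hr0 : 0 ≤ r := by rw [hr]; exact Int.emod_nonneg _ hpos.ne'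
  have hr0' : 0 ≤ r' := by rw [hr']; exact Int.emod_nonneg _ hpos.ne'
  have hr1 : r < (q : ℤ) * T + 1 := by rw [hr]; exact Int.emod_lt_of_pos _ hpos
  have hr1' : r' < (q : ℤ) * T + 1 := by rw [hr']; exact Int.emod_lt_of_pos _ hpos
  have hthZ : ((th (Fintype.card F) (k + 1) : ℕ) : ℤ) = (q : ℤ) * T + 1 := by
    rw [← hqdef, hth]; push_cast; ring
  have hN' : (B.card : ℤ) + E.card ≤ ((q : ℤ) + 1) * ((q - 1) * T + 1) := by
    rw [← hpow, hqdef]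
    exact_mod_cast hN
  -- half statements
  have H1 := fun W hW hc => h.toBl.half hD (x := x) (r := r) (by rw [hthZ]; exact hr1)
    (by rw [hthZ]; exact hb) (W := W) hW hc
  have H2 := fun W hW hc => hd.toBl.half hD (x := x') (r := r') (by rw [hthZ]; exact hr1')
    (by rw [hthZ, hcE]; exact he) (W := W) hW hc
  rw [hthZ, ← hqdef, ← hTdef] at H1 H2
  rw [hcB] at H2
  have hrel : ((q : ℤ) * T + 1) * q > (q + 1) * ((q - 1) * T + 1) - 1 := by
    have : (1 : ℤ) ≤ T := by exact_mod_cast hT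
    nlinarith
  have hbe : 0 < B.card ∨ 0 < E.card := by
    by_contra hcon
    push Not at hcon
    obtain ⟨W, hW⟩ : ∃ W : Submodule F V, finrank F W = k + 1 := by
      have : (btw (⊥ : Submodule F V) ⊤ (k + 1)).Nonempty := by
        exact exists_btw bot_le (by rw [finrank_bot]; omega) (by rw [finrank_top, h.hV]; omega)
      obtain ⟨W, hW⟩ := this
      exact ⟨W, (mem_btw.1 hW).2.2⟩
    rcases h.bl W hW with ⟨A, hA, _⟩ | ⟨A, hA, _⟩
    · have := card_pos.2 ⟨A, hA⟩; omega
    · have := card_pos.2 ⟨A, hA⟩; omega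
  have hEpos : 0 < E.card := by
    by_contra hcon
    obtain ⟨A, hA⟩ := card_pos.1 (hbe.resolve_right hcon)
    have hE0 : E.card = 0 := by omega
    obtain ⟨W, w1, w2, w3, w4⟩ := h.ess0 A hA
    have hm1 : x' = -1 := by
      rw [hx', hE0]
      rw [Nat.cast_zero]
      exact Int.ediv_eq_neg_one_of_neg_of_le (by decide) (by linarith)
    have := (H2 (D W) (by have := hD.rk W; have := h.hV; omega)
      (by rw [tt_dual hD, ss_dual hD, hD.inv]; omega)).1
    rw [hm1] at this
    have : (0 : ℤ) ≤ E.card := Int.natCast_nonneg _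
    nlinarith
  have hBpos : 0 < B.card := by
    by_contra hcon
    obtain ⟨A, hA⟩ := card_pos.1 hEpos
    have hE0 : B.card = 0 := by omega
    obtain ⟨W, w1, w2, w3, w4⟩ := h.essE A hA
    have hm1 : x = -1 := by
      rw [hx, hE0]
      rw [Nat.cast_zero]
      exact Int.ediv_eq_neg_one_of_neg_of_le (by decide) (by linarith)
    have := (H1 W w1 (by omega)).1
    rw [hm1] at this
    have : (0 : ℤ) ≤ B.card := Int.natCast_nonneg _
    nlinarith
  obtain ⟨A, hA⟩ := card_pos.1 hBpos
  obtain ⟨H, hH⟩ := card_pos.1 hEpos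
  obtain ⟨W, w1, w2, w3, w4⟩ := h.ess0 A hA
  obtain ⟨W', u1, u2, u3, u4⟩ := hd.ess0 (D H) (mem_image_of_mem _ hH)
  have K1 := (H1 W w1 (by omega)).2 w3
  have K2 := (H2 W' u1 (by omega)).2 u3
  obtain ⟨a1, a2, a3, a4, a5⟩ := arith (by exact_mod_cast hq) (by exact_mod_cast hT)
    hr0 hr1 hb hr0' hr1' he hN' K1 K2
  obtain ⟨y, rfl⟩ := Int.eq_ofNat_of_zero_le a1
  obtain ⟨y', rfl⟩ := Int.eq_ofNat_of_zero_le a2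
  refine ⟨y' + 1, y + 1, by omega, by omega, by omega, ?_, ?_, ?_, ?_⟩
  · rw [← hpow] at a4
    rw [← hqdef]
    exact_mod_cast a4
  · rw [← hpow] at a5
    rw [← hqdef]
    exact_mod_cast a5
  · intro X hX
    have := h.toBl.a_nonneg (x := y) (r := r) (by rw [hthZ]; exact hr1)
      (by rw [hthZ]; exact hb) hX
    zify
    rw [← hqdef] at this ⊢
    linarith
  · intro X hX
    have := hd.toBl.a_nonneg (x := y') (r := r') (by rw [hthZ]; exact hr1')
      (by rw [hthZ, hcE]; exact he) (X := D X) (by have := hD.rk X; have := h.hV; omega)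
    rw [tt_dual hD, ss_dual hD, hD.inv] at this
    zify
    rw [← hqdef] at this ⊢
    linarith

end
end PBS

set_option linter.unusedSectionVars false
set_option linter.unusedFintypeInType false
set_option linter.unusedDecidableInType false

namespace PBS
open Finset Module
section
variable {F V : Type} [Field F] [Fintype F] [AddCommGroup V] [Module F V] [Fintype V]
  [Fintype (Submodule F V)]

/-- Essential blocking set with parameters. -/
structure Par (k j j' : ℕ) (B E : Finset (Submodule F V)) : Prop extends Ess k B E where
  hk : 1 ≤ k
  j1 : 1 ≤ j
  j1' : 1 ≤ j'
  jq : j + j' = Fintype.card F + 1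
  cB : B.card = Fintype.card F ^ k * j'
  cE : E.card = Fintype.card F ^ k * j
  lo : ∀ X : Submodule F V, finrank F X = k → j ≤ ss E X + Fintype.card F * tt B X
  hi : ∀ X : Submodule F V, finrank F X = k + 2 → j' ≤ tt B X + Fintype.card F * ss E X

lemma Par.dual {D : Submodule F V → Submodule F V} (hD : IsDl D) [DecidableEq (Submodule F V)]
    {k j j' : ℕ} {B E : Finset (Submodule F V)} (h : Par k j j' B E) :
    Par k j' j (E.image D) (B.image D) := by
  refine ⟨h.toEss.dual hD, h.hk, h.j1', h.j1, by have := h.jq; omega, ?_, ?_, ?_, ?_⟩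
  · rw [card_image_of_injective _ hD.inj, h.cE]
  · rw [card_image_of_injective _ hD.inj, h.cB]
  · intro X hX
    rw [tt_dual hD, ss_dual hD]
    exact h.hi _ (by have := hD.rk X; have := h.hV; omega)
  · intro X hX
    rw [tt_dual hD, ss_dual hD]
    exact h.lo _ (by have := hD.rk X; have := h.hV; omega)

lemma sum_tight {α : Type*} (S : Finset α) (p : α → Prop) [DecidablePred p] (f : α → ℕ) (a b : ℕ)
    (ha : ∀ x ∈ S, p x → a ≤ f x) (hb : ∀ x ∈ S, ¬ p x → b ≤ f x)
    (hs : ∑ x ∈ S, f x ≤ (S.filter p).card * a + (S.filter (fun x => ¬ p x)).card * b) :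
    (∀ x ∈ S, p x → f x = a) ∧ (∀ x ∈ S, ¬ p x → f x = b) := by
  have h1 : ∀ x ∈ S, (if p x then a else b) ≤ f x := by
    intro x hx
    split_ifs with h
    · exact ha x hx h
    · exact hb x hx h
  have h2 : ∑ x ∈ S, (if p x then a else b)
      = (S.filter p).card * a + (S.filter (fun x => ¬ p x)).card * b := by
    rw [sum_ite, sum_const, sum_const, smul_eq_mul, smul_eq_mul]
  have h3 : ∑ x ∈ S, (if p x then a else b) = ∑ x ∈ S, f x :=
    le_antisymm (sum_le_sum h1) (by rw [h2]; exact hs)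
  rw [sum_eq_sum_iff_of_le h1] at h3
  constructor
  · intro x hx hp
    have := h3 x hx
    rw [if_pos hp] at this
    exact this.symm
  · intro x hx hp
    have := h3 x hx
    rw [if_neg hp] at this
    exact this.symm

open Classical in
lemma cnt_pt {D : Submodule F V → Submodule F V} (hD : IsDl D) {W A : Submodule F V} {k : ℕ}
    (hW : finrank F W = k + 1) (hA : finrank F A = 1) (h : A ≤ W) :
    ((btw ⊥ W k).filter (fun Z => A ≤ Z)).card = th (Fintype.card F) k ∧
    ((btw ⊥ W k).filter (fun Z => ¬ A ≤ Z)).card = Fintype.card F ^ k := by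
  have h1 : ((btw ⊥ W k).filter (fun Z => A ≤ Z)).card = th (Fintype.card F) k := by
    rw [btw_filter_ge, bot_sup_eq]
    exact cnt_dn hD h (by omega) (by omega)
  have h2 : (btw ⊥ W k).card = th (Fintype.card F) (k + 1) :=
    cnt_dn hD bot_le (by rw [finrank_bot]; omega) (by omega)
  have h3 := card_filter_add_card_filter_not (s := btw ⊥ W k) (fun Z => A ≤ Z)
  rw [h1, h2, th_succ] at h3
  exact ⟨h1, by omega⟩

lemma exists_avoid {D : Submodule F V → Submodule F V} (hD : IsDl D) {X Y A : Submodule F V}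
    {d : ℕ} (hX : X ≤ Y) (hA : finrank F A = 1) (hAY : A ≤ Y) (hAX : ¬ A ≤ X)
    (hd : finrank F Y = d + 1) : ∃ Z ∈ btw X Y d, ¬ A ≤ Z := by
  classical
  by_contra hcon
  push Not at hcon
  have h1 : (btw X Y d).filter (fun Z => A ≤ Z) = btw X Y d := filter_true_of_mem hcon
  rw [btw_filter_ge] at h1
  have h2 := rk_sup_pt hA hAX
  have h3 := Submodule.finrank_mono (sup_le hX hAY)
  obtain ⟨c, hc⟩ := Nat.exists_eq_add_of_le h3
  have h4 := cnt_dn hD (sup_le hX hAY) hc (d := d) (by omega)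
  have h5 := cnt_dn hD hX (m := c + 1) (d := d) (by omega) (by omega)
  rw [h1, h5, th_succ] at h4
  have : 0 < Fintype.card F ^ c := by positivity
  omega

lemma Par.s4 {D : Submodule F V → Submodule F V} (hD : IsDl D)
    {k j j' : ℕ} {B E : Finset (Submodule F V)} (h : Par k j j' B E) {W A : Submodule F V}
    (hW : finrank F W = k + 1) (ht : tt B W = 1) (hs : ss E W = 0) (hA : A ∈ B) (hAW : A ≤ W)
    {X : Submodule F V} (hX : X ∈ btw ⊥ W k) :
    (A ≤ X → ss E X = 0) ∧ (¬ A ≤ X → ss E X + Fintype.card F * tt B X = j) := by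
  classical
  have h1 := h.toBl.sum_a hD hW
  rw [ht, hs, h.cE] at h1
  obtain ⟨c1, c2⟩ := cnt_pt hD hW (h.h0 A hA) hAW
  have ht1 : ∀ X, A ≤ X → 1 ≤ tt B X := fun X hX => tt_pos.2 ⟨A, hA, hX⟩
  obtain ⟨g1, g2⟩ := sum_tight (btw ⊥ W k) (fun Z => A ≤ Z)
    (fun X => ss E X + Fintype.card F * tt B X) (Fintype.card F) j
    (by
      intro X hX hAX
      have := Nat.mul_le_mul_left (Fintype.card F) (ht1 X hAX)
      omega)
    (by
      intro X hX hAX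
      exact h.lo X (mem_btw.1 hX).2.2)
    (by
      rw [h1, c1, c2]
      apply le_of_eq
      ring)
  refine ⟨fun hAX => ?_, g2 X hX⟩
  have := g1 X hX hAX
  have := Nat.mul_le_mul_left (Fintype.card F) (ht1 X hAX)
  omega

lemma Par.i0 {D : Submodule F V → Submodule F V} (hD : IsDl D)
    {k j j' : ℕ} {B E : Finset (Submodule F V)} (h : Par k j j' B E) {A H : Submodule F V}
    (hA : A ∈ B) (hH : H ∈ E) : ¬ A ≤ H := by
  intro hAH
  obtain ⟨W, w1, w2, w3, w4⟩ := h.ess0 A hA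
  have hWH : ¬ W ≤ H := fun h' => by
    have := ss_pos.2 ⟨H, hH, h'⟩
    omega
  have h1 := rk_inf_hyp (h.hE' H hH) hWH
  have h2 := (h.s4 hD w1 w3 w4 hA w2 (X := W ⊓ H)
    (mem_btw.2 ⟨bot_le, inf_le_left, by omega⟩)).1 (le_inf w2 hAH)
  have := ss_pos.2 ⟨H, hH, (inf_le_right : W ⊓ H ≤ H)⟩
  omega

lemma Par.s5 {D : Submodule F V → Submodule F V} (hD : IsDl D)
    {k j j' : ℕ} {B E : Finset (Submodule F V)} (h : Par k j j' B E) {W H : Submodule F V}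
    (hW : finrank F W = k + 1) (ht : tt B W = 0) (hs : ss E W = 1) (hH : H ∈ E) (hWH : W ≤ H)
    {R : Submodule F V} (hR : finrank F R = k + 2) (hWR : W ≤ R) (hRH : ¬ R ≤ H) :
    ss E R = 0 ∧ tt B R = j' := by
  classical
  have h1 : ss E R = 0 := by
    by_contra h0
    obtain ⟨G, hG, hRG⟩ := ss_pos.1 (Nat.one_le_iff_ne_zero.2 h0)
    rw [ss, card_eq_one] at hs
    obtain ⟨Z, hZ⟩ := hs
    have hG' : G ∈ ({Z} : Finset _) := by rw [← hZ]; exact mem_filter.2 ⟨hG, hWR.trans hRG⟩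
    have hH' : H ∈ ({Z} : Finset _) := by rw [← hZ]; exact mem_filter.2 ⟨hH, hWH⟩
    rw [mem_singleton] at hG' hH'
    apply hRH
    rw [hH', ← hG']
    exact hRG
  refine ⟨h1, ?_⟩
  have h2 := ((h.dual hD).s4 hD (W := D W) (A := D H) (X := D R)
    (by have := hD.rk W; have := h.hV; omega) (by rw [tt_dual hD, hD.inv, hs])
    (by rw [ss_dual hD, hD.inv, ht]) (mem_image_of_mem _ hH) ((hD.le _ _).2 hWH)
    (mem_btw.2 ⟨bot_le, (hD.le _ _).2 hWR, by have := hD.rk R; have := h.hV; omega⟩)).2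
    (fun hc => hRH ((hD.le _ _).1 hc))
  rw [tt_dual hD, ss_dual hD, hD.inv, h1] at h2
  omega

open Classical in
lemma tight {D : Submodule F V → Submodule F V} (hD : IsDl D) {R : Submodule F V} {m : ℕ}
    (hR : finrank F R = m + 2) {P : Finset (Submodule F V)}
    (hP : ∀ A ∈ P, finrank F A = 1 ∧ A ≤ R)
    (hc : th (Fintype.card F) (m + 1) + (P.card - 1) * Fintype.card F ^ m
      ≤ ((btw ⊥ R (m + 1)).filter (fun W => ∃ A ∈ P, A ≤ W)).card)
    {A1 A A' : Submodule F V} (h1 : A1 ∈ P) (hA : A ∈ P) (hA' : A' ∈ P) (n1 : A1 ≠ A)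
    (n2 : A1 ≠ A') (n3 : A ≠ A') : A1 ≤ A ⊔ A' := by
  by_contra hcon
  obtain ⟨W, hW, hW1⟩ := exists_avoid hD (X := A ⊔ A') (Y := R) (A := A1) (d := m + 1)
    (sup_le (hP A hA).2 (hP A' hA').2) (hP A1 h1).1 (hP A1 h1).2 hcon hR
  have hWm := mem_btw.1 hW
  set f : Submodule F V → Finset (Submodule F V) := fun Z =>
    ((btw ⊥ R (m + 1)).filter (fun W => Z ≤ W)).filter (fun W => ¬ A1 ≤ W) with hf
  have c1 := (cnt_pt hD (k := m + 1) hR (hP A1 h1).1 (hP A1 h1).2).1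
  have cf : ∀ Z ∈ P, Z ≠ A1 → (f Z).card = Fintype.card F ^ m := by
    intro Z hZ hZ1
    have e1 := (cnt_pt hD (k := m + 1) hR (hP Z hZ).1 (hP Z hZ).2).1
    have e2 := card_filter_add_card_filter_not
      (s := (btw ⊥ R (m + 1)).filter (fun W => Z ≤ W)) (fun W => A1 ≤ W)
    have e3 : (((btw ⊥ R (m + 1)).filter (fun W => Z ≤ W)).filter (fun W => A1 ≤ W)).card
        = th (Fintype.card F) m := by
      rw [btw_filter_ge, btw_filter_ge, bot_sup_eq]
      have hn : ¬ A1 ≤ Z := fun h' => hZ1 (pt_eq (hP A1 h1).1 (hP Z hZ).1 h').symm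
      have := rk_sup_pt (hP A1 h1).1 hn
      have := (hP Z hZ).1
      exact cnt_dn hD (sup_le (hP Z hZ).2 (hP A1 h1).2) (by omega) (by omega)
    rw [e1, e3, th_succ] at e2
    simp only [hf]
    omega
  have hsub : (btw ⊥ R (m + 1)).filter (fun W => ∃ A ∈ P, A ≤ W) ⊆
      ((btw ⊥ R (m + 1)).filter (fun W => A1 ≤ W)) ∪
        (((P.erase A1).erase A').biUnion f ∪ (f A').erase W) := by
    intro Z hZ
    obtain ⟨hZ, G, hG, hGZ⟩ := mem_filter.1 hZ
    simp only [mem_union, mem_filter, mem_biUnion, mem_erase, hf]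
    by_cases hZ1 : A1 ≤ Z
    · exact Or.inl ⟨hZ, hZ1⟩
    right
    have hG1 : G ≠ A1 := by rintro rfl; exact hZ1 hGZ
    by_cases hG2 : G = A'
    · subst hG2
      by_cases hZW : Z = W
      · subst hZW
        left
        exact ⟨A, ⟨n3, n1.symm, hA⟩, ⟨hZ, le_sup_left.trans hWm.1⟩, hZ1⟩
      · right
        exact ⟨hZW, ⟨hZ, hGZ⟩, hZ1⟩
    · left
      exact ⟨G, ⟨hG2, hG1, hG⟩, ⟨hZ, hGZ⟩, hZ1⟩
  have hWf : W ∈ f A' := by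
    simp only [hf, mem_filter]
    exact ⟨⟨mem_btw.2 ⟨bot_le, hWm.2⟩, le_sup_right.trans hWm.1⟩, hW1⟩
  have k1 := card_le_card hsub
  have k2 := card_union_le ((btw ⊥ R (m + 1)).filter (fun W => A1 ≤ W))
        (((P.erase A1).erase A').biUnion f ∪ (f A').erase W)
  have k3 := card_union_le (((P.erase A1).erase A').biUnion f) ((f A').erase W)
  have k4 : (((P.erase A1).erase A').biUnion f).card
      ≤ ((P.erase A1).erase A').card * Fintype.card F ^ m := by
    apply card_biUnion_le_card_mul
    intro Z hZ
    simp only [mem_erase] at hZ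
    exact (cf Z hZ.2.2 hZ.2.1).le
  have k5 := card_erase_of_mem hWf
  rw [cf A' hA' n2.symm] at k5
  have hmem : A' ∈ P.erase A1 := mem_erase.2 ⟨n2.symm, hA'⟩
  have hpos := card_pos.2 ⟨A', hmem⟩
  rw [card_erase_of_mem hmem] at k4
  rw [card_erase_of_mem h1] at k4 hpos
  have hq : 0 < Fintype.card F ^ m := by positivity
  obtain ⟨p, hp⟩ : ∃ p, P.card = p + 2 := ⟨P.card - 2, by omega⟩
  rw [hp] at k4 hc
  simp only [Nat.add_sub_cancel, show p + 2 - 1 = p + 1 by omega] at k4 hc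
  rw [add_mul, one_mul] at hc
  omega

open Classical in
lemma tight_dual {D : Submodule F V → Submodule F V} (hD : IsDl D) {X : Submodule F V} {k : ℕ}
    (hV : finrank F V = 2 * k + 2) (hX : finrank F X = k) {P : Finset (Submodule F V)}
    (hP : ∀ H ∈ P, finrank F H = 2 * k + 1 ∧ X ≤ H)
    (hc : th (Fintype.card F) (k + 1) + (P.card - 1) * Fintype.card F ^ k
      ≤ ((btw X ⊤ (k + 1)).filter (fun W => ∃ H ∈ P, W ≤ H)).card)
    {H1 H H' : Submodule F V} (h1 : H1 ∈ P) (hH : H ∈ P) (hH' : H' ∈ P) (n1 : H1 ≠ H)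
    (n2 : H1 ≠ H') (n3 : H ≠ H') : H ⊓ H' ≤ H1 := by
  have key := tight hD (R := D X) (m := k) (by have := hD.rk X; omega) (P := P.image D)
    (by
      intro A hA
      obtain ⟨G, hG, rfl⟩ := mem_image.1 hA
      have := hD.rk G
      have := (hP G hG).1
      exact ⟨by omega, (hD.le _ _).2 (hP G hG).2⟩)
    (by
      rw [card_image_of_injective _ hD.inj]
      refine hc.trans ?_
      rw [← card_image_of_injective _ hD.inj]
      apply card_le_card
      intro Z hZ
      obtain ⟨W, hW, rfl⟩ := mem_image.1 hZ
      obtain ⟨hW, G, hG, hWG⟩ := mem_filter.1 hW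
      obtain ⟨w1, w2, w3⟩ := mem_btw.1 hW
      refine mem_filter.2 ⟨mem_btw.2 ⟨bot_le, (hD.le _ _).2 w1, ?_⟩, D G, mem_image_of_mem _ hG,
        (hD.le _ _).2 hWG⟩
      have := hD.rk W
      omega)
    (mem_image_of_mem _ h1) (mem_image_of_mem _ hH) (mem_image_of_mem _ hH')
    (fun e => n1 (hD.inj e)) (fun e => n2 (hD.inj e)) (fun e => n3 (hD.inj e))
  have h2 : D H ⊔ D H' ≤ D (H ⊓ H') :=
    sup_le ((hD.le _ _).2 inf_le_left) ((hD.le _ _).2 inf_le_right)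
  exact (hD.le _ _).1 (key.trans h2)

end
end PBS

set_option linter.unusedSectionVars false
set_option linter.unusedFintypeInType false
set_option linter.unusedDecidableInType false

namespace PBS
open Finset Module
section
variable {F V : Type} [Field F] [Fintype F] [AddCommGroup V] [Module F V] [Fintype V]
  [Fintype (Submodule F V)]

/-- A configuration: `W` is a `k`-space blocked only by the hyperplane `H`. -/
structure Cfg (k j j' : ℕ) (B E : Finset (Submodule F V)) (H W : Submodule F V) : Prop
    extends Par k j j' B E where
  j2 : 2 ≤ j'
  hH : H ∈ E
  hW : finrank F W = k + 1
  hWH : W ≤ H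
  ht : tt B W = 0
  hs : ss E W = 1

lemma Cfg.pt_not {k j j' : ℕ} {B E : Finset (Submodule F V)} {H W : Submodule F V}
    (h : Cfg k j j' B E H W) {A : Submodule F V} (hA : A ∈ B) : ¬ A ≤ W := fun h' => by
  have := tt_pos.2 ⟨A, hA, h'⟩
  have := h.ht
  omega

lemma Cfg.tt_zero {k j j' : ℕ} {B E : Finset (Submodule F V)} {H W : Submodule F V}
    (h : Cfg k j j' B E H W) {X : Submodule F V} (hX : X ≤ W) : tt B X = 0 := by
  by_contra h0
  obtain ⟨A, hA, hA'⟩ := tt_pos.1 (Nat.one_le_iff_ne_zero.2 h0)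
  exact h.pt_not hA (hA'.trans hX)

lemma Cfg.rho {D : Submodule F V → Submodule F V} (hD : IsDl D)
    {k j j' : ℕ} {B E : Finset (Submodule F V)} {H W : Submodule F V}
    (h : Cfg k j j' B E H W) {A : Submodule F V} (hA : A ∈ B) :
    finrank F (W ⊔ A : Submodule F V) = k + 2 ∧ ss E (W ⊔ A) = 0 ∧ tt B (W ⊔ A) = j' := by
  have h1 : finrank F (W ⊔ A : Submodule F V) = k + 2 := by
    rw [rk_sup_pt (h.h0 A hA) (h.pt_not hA), h.hW]
  exact ⟨h1, h.s5 hD h.hW h.ht h.hs h.hH h.hWH h1 le_sup_left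
    (fun h' => h.i0 hD hA h.hH (le_sup_right.trans h'))⟩

lemma Cfg.coll {D : Submodule F V → Submodule F V} (hD : IsDl D)
    {k j j' : ℕ} {B E : Finset (Submodule F V)} {H W : Submodule F V}
    (h : Cfg k j j' B E H W) {A : Submodule F V} (hA : A ∈ B)
    {A1 A2 A3 : Submodule F V} (h1 : A1 ∈ B) (h2 : A2 ∈ B) (h3 : A3 ∈ B)
    (l1 : A1 ≤ W ⊔ A) (l2 : A2 ≤ W ⊔ A) (l3 : A3 ≤ W ⊔ A) (n1 : A1 ≠ A2) (n2 : A1 ≠ A3)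
    (n3 : A2 ≠ A3) : A1 ≤ A2 ⊔ A3 := by
  classical
  obtain ⟨r1, r2, r3⟩ := h.rho hD hA
  have hcard : (B.filter (fun Z => Z ≤ W ⊔ A)).card = j' := by
    rw [← r3, tt]
  refine tight hD r1 (P := B.filter (fun Z => Z ≤ W ⊔ A)) ?_ ?_ (mem_filter.2 ⟨h1, l1⟩)
    (mem_filter.2 ⟨h2, l2⟩) (mem_filter.2 ⟨h3, l3⟩) n1 n2 n3
  · intro Z hZ
    rw [mem_filter] at hZ
    exact ⟨h.h0 Z hZ.1, hZ.2⟩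
  · rw [hcard]
    have e1 : (btw ⊥ (W ⊔ A) (k + 1)).card = th (Fintype.card F) (k + 2) :=
      cnt_dn hD bot_le (by rw [finrank_bot]; omega) (by omega)
    have e2 := card_filter_add_card_filter_not (s := btw ⊥ (W ⊔ A) (k + 1))
      (fun X => ∃ Z ∈ B.filter (fun Z => Z ≤ W ⊔ A), Z ≤ X)
    have e3 : ((btw ⊥ (W ⊔ A) (k + 1)).filter
        (fun X => ¬ ∃ Z ∈ B.filter (fun Z => Z ≤ W ⊔ A), Z ≤ X)).card ≤ E.card := by
      refine (card_le_card (t := E.image (fun G => (W ⊔ A) ⊓ G)) ?_).trans card_image_le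
      intro X hX
      rw [mem_filter] at hX
      obtain ⟨x1, x2, x3⟩ := mem_btw.1 hX.1
      rcases h.bl X x3 with ⟨Z, hZ, hZX⟩ | ⟨G, hG, hXG⟩
      · exact absurd ⟨Z, mem_filter.2 ⟨hZ, hZX.trans x2⟩, hZX⟩ hX.2
      · refine mem_image.2 ⟨G, hG, ?_⟩
        have hn : ¬ (W ⊔ A) ≤ G := fun h' => by
          have := ss_pos.2 ⟨G, hG, h'⟩
          omega
        have := rk_inf_hyp (h.hE' G hG) hn
        exact (eq_of_le_rk (le_inf x2 hXG) (by omega)).symm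
    rw [e1, th_succ, pow_succ, show Fintype.card F = j + (j' - 1) by
      have := h.jq; have := h.j1'; omega] at e2
    rw [h.cE, show Fintype.card F = j + (j' - 1) by
      have := h.jq; have := h.j1'; omega] at e3
    rw [show Fintype.card F = j + (j' - 1) by have := h.jq; have := h.j1'; omega]
    rw [mul_add, mul_comm _ (j' - 1)] at e2
    omega

/-- Properties of the special point of `W`. -/
structure Ctr (k : ℕ) (E : Finset (Submodule F V)) (W C : Submodule F V) : Prop where
  rk : finrank F C = 1
  le : C ≤ W
  big : ∀ X : Submodule F V, finrank F X = k → C ≤ X → X ≤ W → Fintype.card F ≤ ss E X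

lemma Cfg.exists_ctr {D : Submodule F V → Submodule F V} (hD : IsDl D)
    {k j j' : ℕ} {B E : Finset (Submodule F V)} {H W : Submodule F V}
    (h : Cfg k j j' B E H W) {A : Submodule F V} (hA : A ∈ B) :
    ∃ C, Ctr k E W C ∧ ∀ A' ∈ B, A' ≤ W ⊔ A → A' ≤ A ⊔ C := by
  classical
  obtain ⟨r1, r2, r3⟩ := h.rho hD hA
  have hW := h.hW
  obtain ⟨A2, hA2, hne⟩ := exists_mem_ne (s := B.filter (fun Z => Z ≤ W ⊔ A))
    (by have : (B.filter (fun Z => Z ≤ W ⊔ A)).card = j' := by rw [← r3, tt]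
        have := h.j2; omega) A
  rw [mem_filter] at hA2
  have rA := h.h0 A hA
  have m1 : finrank F (A ⊔ A2 : Submodule F V) = 2 := by
    rw [rk_sup_pt (h.h0 A2 hA2.1) (fun h' => hne (pt_eq (h.h0 A2 hA2.1) rA h')), rA]
  have m2 : W ⊔ (A ⊔ A2) = W ⊔ A :=
    le_antisymm (sup_le le_sup_left (sup_le le_sup_right hA2.2))
      (sup_le le_sup_left (le_sup_left.trans le_sup_right))
  have m3 := Submodule.finrank_sup_add_finrank_inf_eq W (A ⊔ A2)
  rw [m2, r1, hW, m1] at m3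
  have rC : finrank F (W ⊓ (A ⊔ A2) : Submodule F V) = 1 := by omega
  obtain ⟨C, hC⟩ : ∃ C, C = W ⊓ (A ⊔ A2) := ⟨_, rfl⟩
  rw [← hC] at rC
  have hCW : C ≤ W := hC ▸ inf_le_left
  have hCm : C ≤ A ⊔ A2 := hC ▸ inf_le_right
  have rkC : ∀ Z ∈ B, finrank F (Z ⊔ C : Submodule F V) = 2 := by
    intro Z hZ
    rw [sup_comm, rk_sup_pt (h.h0 Z hZ) (fun h' => h.pt_not hZ (h'.trans hCW)), rC]
  have m4 : A ⊔ C = A ⊔ A2 := eq_of_le_rk (sup_le le_sup_left hCm) (by rw [rkC A hA, m1])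
  have P2 : ∀ A' ∈ B, A' ≤ W ⊔ A → A' ≤ A ⊔ C := by
    intro A' hA' hl
    rw [m4]
    by_cases e1 : A' = A
    · rw [e1]; exact le_sup_left
    by_cases e2 : A' = A2
    · rw [e2]; exact le_sup_right
    exact h.coll hD hA hA' hA hA2.1 hl le_sup_right hA2.2 e1 e2 hne.symm
  refine ⟨C, ⟨rC, hCW, ?_⟩, P2⟩
  intro X hX hCX hXW
  have hXR : X ≤ W ⊔ A := hXW.trans le_sup_left
  have c1 : (btw X (W ⊔ A) (k + 1)).card = th (Fintype.card F) 2 :=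
    cnt_up hXR (by omega) (by omega)
  have c2 := card_filter_add_card_filter_not (s := btw X (W ⊔ A) (k + 1)) (fun Z => A ≤ Z)
  have hAX : ¬ A ≤ X := fun h' => h.pt_not hA (h'.trans hXW)
  have c3 : ((btw X (W ⊔ A) (k + 1)).filter (fun Z => A ≤ Z)).card = 1 := by
    rw [btw_filter_ge]
    exact card_btw_bot (sup_le hXR le_sup_right) (by rw [rk_sup_pt rA hAX, hX])
  have c4 : th (Fintype.card F) 2 = Fintype.card F + 1 := by
    rw [th_succ', th_one, mul_one]
  have c5 : ((btw X (W ⊔ A) (k + 1)).filter (fun Z => ¬ A ≤ Z)).card ≤ ss E X := by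
    rw [ss]
    refine (card_le_card
      (t := (E.filter (fun G => X ≤ G)).image (fun G => (W ⊔ A) ⊓ G)) ?_).trans card_image_le
    intro Z hZ
    rw [mem_filter] at hZ
    obtain ⟨z1, z2, z3⟩ := mem_btw.1 hZ.1
    rcases h.bl Z z3 with ⟨A', hA', hZ'⟩ | ⟨G, hG, hZG⟩
    · exfalso
      apply hZ.2
      have e1 : A' ⊔ C = A ⊔ C := eq_of_le_rk (sup_le (P2 A' hA' (hZ'.trans z2)) le_sup_right)
        (by rw [rkC A hA, rkC A' hA'])
      calc A ≤ A ⊔ C := le_sup_left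
        _ = A' ⊔ C := e1.symm
        _ ≤ Z := sup_le hZ' (hCX.trans z1)
    · refine mem_image.2 ⟨G, mem_filter.2 ⟨hG, z1.trans hZG⟩, ?_⟩
      have hn : ¬ (W ⊔ A) ≤ G := fun h' => by
        have := ss_pos.2 ⟨G, hG, h'⟩
        omega
      have := rk_inf_hyp (h.hE' G hG) hn
      exact (eq_of_le_rk (le_inf z2 hZG) (by omega)).symm
  omega

lemma Cfg.vals {D : Submodule F V → Submodule F V} (hD : IsDl D)
    {k j j' : ℕ} {B E : Finset (Submodule F V)} {H W C : Submodule F V}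
    (h : Cfg k j j' B E H W) (hC : Ctr k E W C) {X : Submodule F V} (hX : X ∈ btw ⊥ W k) :
    (C ≤ X → ss E X = Fintype.card F) ∧ (¬ C ≤ X → ss E X = j) := by
  classical
  have h1 := h.toBl.sum_a hD h.hW
  rw [h.ht, h.hs, h.cE] at h1
  obtain ⟨c1, c2⟩ := cnt_pt hD h.hW hC.rk hC.le
  obtain ⟨g1, g2⟩ := sum_tight (btw ⊥ W k) (fun Z => C ≤ Z)
    (fun X => ss E X + Fintype.card F * tt B X) (Fintype.card F) j
    (by
      intro X hX hAX
      have := hC.big X (mem_btw.1 hX).2.2 hAX (mem_btw.1 hX).2.1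
      omega)
    (by
      intro X hX hAX
      exact h.lo X (mem_btw.1 hX).2.2)
    (by
      rw [h1, c1, c2]
      apply le_of_eq
      ring)
  have h0 := h.tt_zero (mem_btw.1 hX).2.1
  have g1 := g1 X hX
  have g2 := g2 X hX
  simp only [h0, mul_zero, add_zero] at g1 g2
  exact ⟨g1, g2⟩

lemma Cfg.uniq {D : Submodule F V → Submodule F V} (hD : IsDl D)
    {k j j' : ℕ} {B E : Finset (Submodule F V)} {H W C C' : Submodule F V}
    (h : Cfg k j j' B E H W) (hC : Ctr k E W C) (hC' : Ctr k E W C') : C = C' := by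
  by_contra hne
  obtain ⟨X, hX, hX'⟩ := exists_avoid hD hC.le hC'.rk hC'.le
    (fun h' => hne (pt_eq hC'.rk hC.rk h').symm) h.hW
  obtain ⟨x1, x2, x3⟩ := mem_btw.1 hX
  have hXb : X ∈ btw ⊥ W k := mem_btw.2 ⟨bot_le, x2, x3⟩
  have e1 := (h.vals hD hC hXb).1 x1
  have e2 := (h.vals hD hC' hXb).2 hX'
  have := h.jq
  have := h.j2
  omega

lemma Cfg.step6 {D : Submodule F V → Submodule F V} (hD : IsDl D)
    {k j j' : ℕ} {B E : Finset (Submodule F V)} {H W C : Submodule F V}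
    (h : Cfg k j j' B E H W) (hC : Ctr k E W C)
    (hl : ∀ A ∈ B, ∀ A' ∈ B, A' ≤ W ⊔ A → A' ≤ A ⊔ C)
    {X : Submodule F V} (hX : X ∈ btw C W k) :
    ∃ G : Submodule F V, finrank F G = 2 * k + 1 ∧ X ≤ G ∧ (∀ A ∈ B, A ≤ G) ∧ G ⊓ W ≤ X := by
  classical
  have hq2 : 2 ≤ Fintype.card F := Fintype.one_lt_card
  obtain ⟨x1, x2, x3⟩ := mem_btw.1 hX
  have hV := h.hV
  have hsX := (h.vals hD hC (mem_btw.2 ⟨bot_le, x2, x3⟩)).1 x1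
  have htX := h.tt_zero x2
  set P := E.filter (fun G => X ≤ G) with hP
  have cP : P.card = Fintype.card F := by rw [← hsX, ss]
  -- counting
  have u1 := up_tt h.h0 (X := X) (m := k + 2) (d := k + 1) (by omega) (by omega)
  rw [htX, mul_zero, add_zero, add_zero, h.cB] at u1
  have u2 : ((btw X ⊤ (k + 1)).filter (fun Z => ∃ A ∈ B, A ≤ Z)).card * j'
      ≤ ∑ Z ∈ btw X ⊤ (k + 1), tt B Z := by
    refine le_trans ?_ (sum_le_sum_of_subset (filter_subset (fun Z => ∃ A ∈ B, A ≤ Z) _))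
    rw [← smul_eq_mul]
    apply card_nsmul_le_sum
    intro Z hZ
    obtain ⟨hZ, A, hA, hAZ⟩ := mem_filter.1 hZ
    rw [← (h.rho hD hA).2.2, tt, tt]
    apply card_le_card
    intro A' hA'
    rw [mem_filter] at hA' ⊢
    exact ⟨hA'.1, (hl A hA A' hA'.1 hA'.2).trans (sup_le hAZ (x1.trans (mem_btw.1 hZ).1))⟩
  rw [u1] at u2
  have u3 := Nat.le_of_mul_le_mul_right u2 (by have := h.j2; omega)
  have u4 := card_filter_add_card_filter_not (s := btw X ⊤ (k + 1)) (fun Z => ∃ A ∈ B, A ≤ Z)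
  have u5 : (btw X ⊤ (k + 1)).card = th (Fintype.card F) (k + 2) :=
    cnt_up le_top (by rw [finrank_top]; omega) (by omega)
  have u6 : ((btw X ⊤ (k + 1)).filter (fun Z => ¬ ∃ A ∈ B, A ≤ Z)).card
      ≤ ((btw X ⊤ (k + 1)).filter (fun Z => ∃ G ∈ P, Z ≤ G)).card := by
    apply card_le_card
    intro Z hZ
    rw [mem_filter] at hZ ⊢
    obtain ⟨z1, z2, z3⟩ := mem_btw.1 hZ.1
    rcases h.bl Z z3 with h1 | ⟨G, hG, hZG⟩
    · exact absurd h1 hZ.2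
    · exact ⟨hZ.1, G, mem_filter.2 ⟨hG, z1.trans hZG⟩, hZG⟩
  have hPp : ∀ G ∈ P, finrank F G = 2 * k + 1 ∧ X ≤ G := by
    intro G hG
    rw [hP, mem_filter] at hG
    exact ⟨h.hE G hG.1, hG.2⟩
  have u7 : th (Fintype.card F) (k + 1) + (P.card - 1) * Fintype.card F ^ k
      ≤ ((btw X ⊤ (k + 1)).filter (fun Z => ∃ G ∈ P, Z ≤ G)).card := by
    rw [cP]
    rw [u5, th_succ, pow_succ] at u4
    obtain ⟨p, hp⟩ : ∃ p, Fintype.card F = p + 1 := ⟨Fintype.card F - 1, by omega⟩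
    rw [show Fintype.card F - 1 = p by omega]
    have : Fintype.card F ^ k * Fintype.card F = p * Fintype.card F ^ k + Fintype.card F ^ k := by
      nth_rw 2 [hp]
      ring
    omega
  have hH0 : H ∈ P := mem_filter.2 ⟨h.hH, x2.trans h.hWH⟩
  obtain ⟨H2, hH2, hne⟩ := exists_mem_ne (s := P) (by omega) H
  have hH2E := (mem_filter.1 hH2).1
  have hge : ∀ G ∈ P, H ⊓ H2 ≤ G := by
    intro G hG
    by_cases e1 : G = H
    · rw [e1]; exact inf_le_left
    by_cases e2 : G = H2
    · rw [e2]; exact inf_le_right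
    exact tight_dual hD hV x3 hPp u7 hG hH0 hH2 e1 e2 hne.symm
  have hHH2 : ¬ H ≤ H2 := fun h' => hne (eq_of_le_rk h' (by
    rw [h.hE H h.hH, h.hE H2 hH2E])).symm
  have rM := rk_inf_hyp (h.hE' H2 hH2E) hHH2
  rw [h.hE H h.hH] at rM
  have hXM : X ≤ H ⊓ H2 := le_inf (hPp H hH0).2 (hPp H2 hH2).2
  obtain ⟨M, hM⟩ : ∃ M, M = H ⊓ H2 := ⟨_, rfl⟩
  rw [← hM] at rM hge hXM
  -- the hyperplane G
  have c1 : (btw M ⊤ (2 * k + 1)).card = th (Fintype.card F) 2 :=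
    cnt_up le_top (by rw [finrank_top]; omega) (by omega)
  have c4 : th (Fintype.card F) 2 = Fintype.card F + 1 := by
    rw [th_succ', th_one, mul_one]
  have c2 : P ⊆ btw M ⊤ (2 * k + 1) := fun G hG => mem_btw.2 ⟨hge G hG, le_top, (hPp G hG).1⟩
  have c3 : (btw M ⊤ (2 * k + 1) \ P).card = 1 := by
    rw [card_sdiff_of_subset c2, c1, cP, c4]
    omega
  obtain ⟨G, hG⟩ := card_eq_one.1 c3
  have hG' : G ∈ btw M ⊤ (2 * k + 1) \ P := by rw [hG]; exact mem_singleton_self G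
  rw [mem_sdiff] at hG'
  obtain ⟨g1, g2, g3⟩ := mem_btw.1 hG'.1
  have hMH : M ≤ H := hM ▸ inf_le_left
  have hBG : ∀ A ∈ B, A ≤ G := by
    intro A hA
    have : M ⊔ A ∈ btw M ⊤ (2 * k + 1) \ P := by
      rw [mem_sdiff]
      constructor
      · refine mem_btw.2 ⟨le_sup_left, le_top, ?_⟩
        rw [rk_sup_pt (h.h0 A hA) (fun h' => h.i0 hD hA h.hH (h'.trans hMH))]
        omega
      · intro hin
        exact h.i0 hD hA (mem_filter.1 hin).1 le_sup_right
    rw [hG, mem_singleton] at this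
    rw [← this]
    exact le_sup_right
  refine ⟨G, g3, hXM.trans g1, hBG, ?_⟩
  have hGH : ¬ G ≤ H := fun h' => by
    have := eq_of_le_rk h' (by rw [g3, h.hE H h.hH])
    rw [this] at hG'
    exact hG'.2 hH0
  have rGH := rk_inf_hyp (h.hE' H h.hH) hGH
  have eGH : M = G ⊓ H := eq_of_le_rk (le_inf g1 hMH) (by omega)
  have hWM : ¬ W ≤ M := by
    intro h'
    have hs := h.hs
    rw [ss, card_eq_one] at hs
    obtain ⟨Z, hZ⟩ := hs
    have k1 : H ∈ ({Z} : Finset _) := by rw [← hZ]; exact mem_filter.2 ⟨h.hH, h.hWH⟩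
    have k2 : H2 ∈ ({Z} : Finset _) := by
      rw [← hZ]; exact mem_filter.2 ⟨hH2E, h'.trans (hM ▸ inf_le_right)⟩
    rw [mem_singleton] at k1 k2
    exact hne (k2.trans k1.symm)
  have l1 : M ⊓ W < W := lt_of_le_of_ne inf_le_right (fun h' => hWM (inf_eq_right.1 h'))
  have l2 := Submodule.finrank_lt_finrank_of_lt l1
  have l3 : X ≤ M ⊓ W := le_inf hXM x2
  have l4 := Submodule.finrank_mono l3
  have l5 : X = M ⊓ W := eq_of_le_rk l3 (by have := h.hW; omega)
  rw [l5, eGH]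
  exact le_inf (le_inf inf_le_left (inf_le_right.trans h.hWH)) inf_le_right

/-- If `j' ≥ 2` then the points span a space of rank at most `k + 2`. -/
lemma Par.span {D : Submodule F V → Submodule F V} (hD : IsDl D)
    {k j j' : ℕ} {B E : Finset (Submodule F V)} (h : Par k j j' B E) (hj : 2 ≤ j') :
    ∃ U : Submodule F V, finrank F U ≤ k + 2 ∧ ∀ A ∈ B, A ≤ U := by
  classical
  have hq : 0 < Fintype.card F ^ k := by have := Fintype.card_pos (α := F); positivity
  obtain ⟨H, hH⟩ : E.Nonempty := card_pos.1 (by rw [h.cE]; exact Nat.mul_pos hq h.j1)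
  obtain ⟨A0, hA0⟩ : B.Nonempty := card_pos.1 (by rw [h.cB]; exact Nat.mul_pos hq h.j1')
  obtain ⟨W, w1, w2, w3, w4⟩ := h.essE H hH
  have hc : Cfg k j j' B E H W := ⟨h, hj, hH, w1, w2, w3, w4⟩
  obtain ⟨C, hC, -⟩ := hc.exists_ctr hD hA0
  have hl : ∀ A ∈ B, ∀ A' ∈ B, A' ≤ W ⊔ A → A' ≤ A ⊔ C := by
    intro A hA
    obtain ⟨C', hC', hC''⟩ := hc.exists_ctr hD hA
    rw [hc.uniq hD hC hC']
    exact hC''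
  refine ⟨B.sup id, ?_, fun A hA => le_sup (f := id) hA⟩
  obtain ⟨U, hU⟩ : ∃ U, U = B.sup id := ⟨_, rfl⟩
  rw [← hU]
  have hUle : ∀ G, (∀ A ∈ B, A ≤ G) → U ≤ G := fun G hG => by
    rw [hU]; exact Finset.sup_le hG
  have hUC : U ⊓ W ≤ C := by
    intro v hv
    by_contra hvC
    have hv0 : v ≠ 0 := fun h' => hvC (h' ▸ C.zero_mem)
    obtain ⟨X, hX, hX'⟩ := exists_avoid hD (A := F ∙ v) hC.le (finrank_span_singleton hv0)
      ((Submodule.span_singleton_le_iff_mem _ _).2 hv.2)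
      (fun h' => hvC ((Submodule.span_singleton_le_iff_mem _ _).1 h')) w1
    obtain ⟨G, -, -, g3, g4⟩ := hc.step6 hD hC hl hX
    exact hX' ((Submodule.span_singleton_le_iff_mem _ _).2 (g4 ⟨hUle G g3 hv.1, hv.2⟩))
  obtain ⟨X, hX⟩ := exists_btw hC.le (d := k) (by rw [hC.rk]; exact h.hk) (by omega)
  obtain ⟨x1, x2, x3⟩ := mem_btw.1 hX
  obtain ⟨G, g1, g2, g3, g4⟩ := hc.step6 hD hC hl hX
  have e1 := Submodule.finrank_sup_add_finrank_inf_eq U X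
  have e2 := Submodule.finrank_mono (sup_le (hUle G g3) g2)
  have e3 := Submodule.finrank_mono ((inf_le_inf_left U x2).trans hUC)
  have := hC.rk
  omega

lemma Par.final {D : Submodule F V → Submodule F V} (hD : IsDl D)
    {k j j' : ℕ} {B E : Finset (Submodule F V)} (h : Par k j j' B E) :
    ∃ X : Submodule F V, finrank F X = k ∧ ∀ H ∈ E, X ≤ H := by
  classical
  have hV := h.hV
  have hq2 : 2 ≤ Fintype.card F := Fintype.one_lt_card
  have hq : 0 < Fintype.card F ^ k := by positivity
  by_cases hj : 2 ≤ j
  · obtain ⟨U, hU, hU'⟩ := (h.dual hD).span hD hj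
    have := hD.rk U
    obtain ⟨X, hX⟩ := exists_btw (X := ⊥) (Y := D U) (d := k) bot_le (by rw [finrank_bot]; omega)
      (by omega)
    obtain ⟨-, x2, x3⟩ := mem_btw.1 hX
    refine ⟨X, x3, fun H hH => x2.trans ?_⟩
    rw [hD.le']
    exact hU' _ (mem_image_of_mem _ hH)
  · have hj1 : j = 1 := by have := h.j1; omega
    have hjq := h.jq
    obtain ⟨U, hU, hU'⟩ := h.span hD (by omega)
    obtain ⟨R, hR⟩ := exists_btw (X := U) (Y := ⊤) (d := k + 2) le_top hU
      (by rw [finrank_top]; omega)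
    obtain ⟨r1, -, r3⟩ := mem_btw.1 hR
    obtain ⟨H0, hH0⟩ : E.Nonempty := card_pos.1 (by rw [h.cE]; exact Nat.mul_pos hq h.j1)
    obtain ⟨A0, hA0⟩ : B.Nonempty := card_pos.1 (by rw [h.cB]; exact Nat.mul_pos hq h.j1')
    have hRH : ∀ H ∈ E, finrank F (R ⊓ H : Submodule F V) = k + 1 := by
      intro H hH
      have := rk_inf_hyp (X := R) (h.hE' H hH)
        (fun h' => h.i0 hD hA0 hH ((hU' A0 hA0).trans (r1.trans h')))
      omega
    have hsub : B ⊆ btw ⊥ R 1 := fun A hA => mem_btw.2 ⟨bot_le, (hU' A hA).trans r1, h.h0 A hA⟩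
    have c1 : (btw ⊥ R 1).card = th (Fintype.card F) (k + 2) :=
      cnt_up bot_le (by rw [finrank_bot]; omega) (by rw [finrank_bot])
    have c2 : ∀ H ∈ E, btw ⊥ (R ⊓ H) 1 = btw ⊥ R 1 \ B := by
      intro H hH
      apply eq_of_subset_of_card_le
      · intro A hA
        obtain ⟨-, a2, a3⟩ := mem_btw.1 hA
        rw [mem_sdiff]
        exact ⟨mem_btw.2 ⟨bot_le, a2.trans inf_le_left, a3⟩,
          fun hB => h.i0 hD hB hH (a2.trans inf_le_right)⟩
      · rw [card_sdiff_of_subset hsub, c1, h.cB,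
          cnt_up (m := k + 1) bot_le (by rw [finrank_bot, hRH H hH]; omega) (by rw [finrank_bot]),
          th_succ _ (k + 1), pow_succ, show j' = Fintype.card F by omega]
        omega
    obtain ⟨X, hX⟩ := exists_btw (X := ⊥) (Y := R ⊓ H0) (d := k) bot_le
      (by rw [finrank_bot]; omega) (by rw [hRH H0 hH0]; omega)
    obtain ⟨-, x2, x3⟩ := mem_btw.1 hX
    refine ⟨X, x3, fun H hH => x2.trans ?_⟩
    intro v hv
    by_cases hv0 : v = 0
    · rw [hv0]; exact H.zero_mem
    have : (F ∙ v) ∈ btw ⊥ (R ⊓ H0) 1 := mem_btw.2 ⟨bot_le,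
      (Submodule.span_singleton_le_iff_mem _ _).2 hv, finrank_span_singleton hv0⟩
    rw [c2 H0 hH0, ← c2 H hH] at this
    exact ((Submodule.span_singleton_le_iff_mem _ _).1 (mem_btw.1 this).2.1).2

/-- The theorem for finsets. -/
lemma main_fin {D : Submodule F V → Submodule F V} (hD : IsDl D)
    {k : ℕ} (hk : 1 ≤ k) {B E : Finset (Submodule F V)} (h : Bl k B E)
    (hN : B.card + E.card = (Fintype.card F + 1) * Fintype.card F ^ k) :
    ∃ X : Submodule F V, finrank F X = k ∧ ∀ H ∈ E, X ≤ H := by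
  obtain ⟨B', hB', E', hE', h'⟩ := exists_ess _ B E rfl h
  have s1 := card_le_card hB'
  have s2 := card_le_card hE'
  obtain ⟨j, j', p1, p2, p3, p4, p5, p6, p7⟩ := h'.params hD hk (by omega)
  have hpar : Par k j j' B' E' := ⟨h', hk, p1, p2, p3, p4, p5, p6, p7⟩
  have : B'.card + E'.card = (Fintype.card F + 1) * Fintype.card F ^ k := by
    rw [p4, p5, ← p3]; ring
  have e : E' = E := eq_of_subset_of_card_le hE' (by omega)
  obtain ⟨X, x1, x2⟩ := hpar.final hD
  exact ⟨X, x1, fun H hH => x2 H (e ▸ hH)⟩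

end

end PBS

namespace PBS
open Finset Module
/-- Existence of a duality on coordinate space. -/
lemma exists_dl {F : Type} [Field F] [Fintype F] (n : ℕ) :
    ∃ D : Submodule F (Fin n → F) → Submodule F (Fin n → F), IsDl D := by
  classical
  let b : LinearMap.BilinForm F (Fin n → F) := dotProductBilin F F
  have hb : ∀ x y, b x y = x ⬝ᵥ y := fun x y => rfl
  have hr : b.IsRefl := by
    intro x y h
    rw [hb] at h ⊢
    rw [dotProduct_comm]
    exact h
  have hn : b.Nondegenerate := by
    constructor
    · intro x hx
      exact dotProduct_eq_zero_iff.1 hx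
    · intro x hx
      exact dotProduct_eq_zero_iff.1 (fun y => by rw [dotProduct_comm]; exact hx y)
  have hinv := LinearMap.BilinForm.orthogonal_orthogonal hn hr
  refine ⟨fun X => b.orthogonal X, hinv, ?_, ?_⟩
  · intro X Y
    constructor
    · intro h
      have := LinearMap.BilinForm.orthogonal_le (B := b) h
      rwa [hinv, hinv] at this
    · exact fun h => LinearMap.BilinForm.orthogonal_le h
  · intro X
    have h1 := LinearMap.BilinForm.finrank_orthogonal hn X
    have h2 := Submodule.finrank_le X
    omega
end PBS

theorem stmt_19 {F : Type} [Field F] [Fintype F] (k : ℕ) (hk : 1 ≤ k)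
    (B0 Bn : Set (Submodule F (Fin (2 * k + 2) → F)))
    (hB0 : ∀ p ∈ B0, Module.finrank F p = 1)
    (hBn : ∀ H ∈ Bn, Module.finrank F H = 2 * k + 1)
    (hblock : ∀ W : Submodule F (Fin (2 * k + 2) → F), Module.finrank F W = k + 1 →
      (∃ p ∈ B0, p ≤ W) ∨ (∃ H ∈ Bn, W ≤ H))
    (hsize : B0.ncard + Bn.ncard = (Fintype.card F + 1) * (Fintype.card F) ^ k) :
    ∃ sig : Submodule F (Fin (2 * k + 2) → F), Module.finrank F sig = k ∧ ∀ H ∈ Bn, sig ≤ H := by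
  classical
  haveI : Fintype (Submodule F (Fin (2 * k + 2) → F)) := Fintype.ofFinite _
  obtain ⟨D, hD⟩ := PBS.exists_dl (F := F) (2 * k + 2)
  have h : PBS.Bl k B0.toFinset Bn.toFinset := by
    refine ⟨by simp, ?_, ?_, ?_⟩
    · intro A hA
      exact hB0 A (Set.mem_toFinset.1 hA)
    · intro A hA
      exact hBn A (Set.mem_toFinset.1 hA)
    · intro W hW
      simpa only [Set.mem_toFinset] using hblock W hW
  obtain ⟨X, x1, x2⟩ := PBS.main_fin hD hk h (by
    rw [← Set.ncard_eq_toFinset_card', ← Set.ncard_eq_toFinset_card']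
    exact hsize)
  exact ⟨X, x1, fun H hH => x2 H (Set.mem_toFinset.2 hH)⟩
end
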